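/- If the constructed token swapping instance has a swap sequence of length at most K = H + n that transforms the initial token placement into the target token placement, then the Star STS instance is a YES instance. -/

import Mathlib

namespace UnweightedTS

/-- Vertices of the constructed tree: the root, ordering-gadget vertices `ord d`
(distance `d+1` from the root), slot-gadget path vertices `slot i d` (distance `d+1`
from the root in slot gadget `i`), and nooks.  (Coordinates range over all of `ℕ`;
the graph below only has edges between the vertices of the construction, so the
remaining vertices are isolated and carry no tokens.) -/
inductive Vtx (m : ℕ) where
  | root : Vtx m
  | ord : ℕ → Vtx m
  | slot : Fin m → ℕ → Vtx m
  | nook : Fin m → Vtx m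
deriving DecidableEq

/-- Adjacency generator for the tree: `len i` = length of the path of slot gadget `i`,
`lenOrd` = length of the ordering path, `nd` = distance from the root of the path
vertex to which the nook of each slot gadget is attached. -/
def rel {m : ℕ} (len : Fin m → ℕ) (lenOrd nd : ℕ) : Vtx m → Vtx m → Prop
  | .root, .ord d => d = 0 ∧ 0 < lenOrd
  | .ord d, .ord d' => d' = d + 1 ∧ d' < lenOrd
  | .root, .slot i d => d = 0 ∧ 0 < len i
  | .slot i d, .slot i' d' => i = i' ∧ d' = d + 1 ∧ d' < len i
  | .slot i d, .nook i' => i = i' ∧ d + 1 = nd ∧ d < len i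
  | _, _ => False

/-- The constructed tree, as a simple graph. -/
def Tree {m : ℕ} (len : Fin m → ℕ) (lenOrd nd : ℕ) : SimpleGraph (Vtx m) :=
  SimpleGraph.fromRel (rel len lenOrd nd)

/-- Swap the two values `e.1`, `e.2`. -/
def swapV {V : Type*} [DecidableEq V] (e : V × V) (v : V) : V :=
  if v = e.1 then e.2 else if v = e.2 then e.1 else v

/-- Apply a sequence of swaps to a token placement (token ↦ vertex). -/
def applySwaps {T V : Type*} [DecidableEq V] (σ : List (V × V)) (f : T → V) : T → V :=
  σ.foldl (fun g e => fun t => swapV e (g t)) f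

/-- Apply a sequence of star swaps (each given by a leaf) to a placement on the star
with center `none` and leaves `some l`. -/
def starApply {L : Type*} [DecidableEq L] (σ : List L) (f : Option L → Option L) :
    Option L → Option L :=
  σ.foldl (fun g l => fun t => swapV ((none : Option L), some l) (g t)) f

/-- The Star STS instance is a YES instance. -/
def StarSTSYes {L : Type*} [DecidableEq L] (π : Equiv.Perm (Option L)) (σ : List L) : Prop :=
  ∃ σ' : List L, σ'.Sublist σ ∧ starApply σ' id = ⇑π

/-- `k = (mn)^25`, the length of a big segment. -/
def kk (m n : ℕ) : ℕ := (m * n) ^ 25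

/-- `k' = k / n^8`, the length of a padding segment. -/
def kk' (m n : ℕ) : ℕ := kk m n / n ^ 8

variable {m n : ℕ}

/-- `nᵢ`: the number of occurrences of slot `i` in the swap sequence. -/
def cnt (s : Fin n → Fin m) (i : Fin m) : ℕ :=
  (Finset.univ.filter fun j : Fin n => s j = i).card

/-- Length of the ordering path: `nk + nmk'`. -/
def lenOrd (m n : ℕ) : ℕ := n * kk m n + n * m * kk' m n

/-- Length of the path of slot gadget `i`: `nᵢ k + n k'`. -/
def lenSlot (s : Fin n → Fin m) (i : Fin m) : ℕ := cnt s i * kk m n + n * kk' m n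

/-- The non-item tokens: big segments `xⱼ`, `yⱼ` of `k` tokens each, and padding
segments `p_{i,j}`, `q_{i,j}` of `k'` tokens each (in this order of the sum). -/
abbrev NonItem (m n : ℕ) :=
  (Fin n × Fin (kk m n)) ⊕ (Fin n × Fin (kk m n)) ⊕
    (Fin m × Fin n × Fin (kk' m n)) ⊕ (Fin m × Fin n × Fin (kk' m n))

/-- All tokens: item tokens (`Option (Fin m)`, `none` = item 0) and the non-item
tokens. -/
abbrev Tok (m n : ℕ) := Option (Fin m) ⊕ NonItem m n

/-- The constructed tree: ordering path of length `nk + nmk'`, slot path `i` of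
length `nᵢk + nk'`, nooks attached at distance `k` from the root. -/
def TheGraph (s : Fin n → Fin m) : SimpleGraph (Vtx m) :=
  Tree (lenSlot s) (lenOrd m n) (kk m n)

/-- The distance from the root, in slot gadget `i`, at which the block of segment
`q_{i,j}` (preceded by `yⱼ` when `s j = i`) starts in the initial configuration. -/
def offQ (s : Fin n → Fin m) (i : Fin m) (j : Fin n) : ℕ :=
  ∑ j' ∈ Finset.univ.filter (fun j' : Fin n => j'.val < j.val),
    (kk' m n + if s j' = i then kk m n else 0)

/-- The slot occurring next after position `j` in the swap sequence, if any. -/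
def nxt (s : Fin n → Fin m) (j : Fin n) : Option (Fin m) :=
  if h : j.val + 1 < n then some (s ⟨j.val + 1, h⟩) else none

/-- The rank (`0`-based position) of the padding segment `q_{i,j}` among the `m`
padding segments following `yⱼ` in the target configuration of the ordering gadget:
`q_{s_{j+1},j}` first, `q_{s_j,j}` last, and the others in increasing order of `i`. -/
def rho (s : Fin n → Fin m) (i : Fin m) (j : Fin n) : ℕ :=
  if some i = nxt s j then 0
  else if i = s j then m - 1
  else (if (nxt s j).isSome then 1 else 0) +
    (Finset.univ.filter fun i' : Fin m =>
      i'.val < i.val ∧ i' ≠ s j ∧ some i' ≠ nxt s j).card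

/-- The distance from the root, in slot gadget `i`, at which the block of segment
`p_{i,j}` (followed by `xⱼ` when `s j = i`) starts in the target configuration. -/
def tOffP (s : Fin n → Fin m) (i : Fin m) (j : Fin n) : ℕ :=
  ∑ j' ∈ Finset.univ.filter (fun j' : Fin n => j.val < j'.val),
    (kk' m n + if s j' = i then kk m n else 0)

/-- The initial placement of the tokens.  Item `0` is at the root and item `i` at the
nook of slot gadget `i`.  The ordering gadget contains, from the root outward, the
blocks `x₁, p_{·,1}, x₂, p_{·,2}, …, xₙ, p_{·,n}` (the `m` padding blocks after `xⱼ`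
ordered by `rho`); slot gadget `i` contains, from the root outward, the blocks
`q_{i,1},…,q_{i,n}` with `yⱼ` inserted immediately on the root side of `q_{i,j}`
whenever `s j = i`.  Within a segment the coordinate `a` increases away from the root
in slot gadgets and away from the root in the ordering gadget. -/
def initTok (s : Fin n → Fin m) : Tok m n → Vtx m
  | Sum.inl none => .root
  | Sum.inl (some i) => .nook i
  | Sum.inr (Sum.inl (j, a)) => .ord (j.val * (kk m n + m * kk' m n) + a.val)
  | Sum.inr (Sum.inr (Sum.inl (j, a))) => .slot (s j) (offQ s (s j) j + a.val)
  | Sum.inr (Sum.inr (Sum.inr (Sum.inl (i, j, a)))) =>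
      .ord (j.val * (kk m n + m * kk' m n) + kk m n + rho s i j * kk' m n + a.val)
  | Sum.inr (Sum.inr (Sum.inr (Sum.inr (i, j, a)))) =>
      .slot i (offQ s i j + (if s j = i then kk m n else 0) + a.val)

/-- The target placement of the tokens.  Item `o` goes to the position of item `π o`;
the ordering gadget contains, from its far end toward the root, the blocks
`y₁, q_{·,1}, y₂, q_{·,2}, …, yₙ, q_{·,n}` (the `m` padding blocks after `yⱼ` ordered
by `rho`); slot gadget `i` contains, from the root outward, the blocks
`p_{i,n},…,p_{i,1}` with `xⱼ` inserted immediately after (away from the root)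
`p_{i,j}` whenever `s j = i`.  The left-to-right order of the tokens within each
segment is the same as in the initial configuration. -/
def tgtTok (s : Fin n → Fin m) (π : Equiv.Perm (Option (Fin m))) : Tok m n → Vtx m
  | Sum.inl o => (match π o with | none => .root | some i => .nook i)
  | Sum.inr (Sum.inl (j, a)) =>
      .slot (s j) (tOffP s (s j) j + kk' m n + (kk m n - 1 - a.val))
  | Sum.inr (Sum.inr (Sum.inl (j, a))) =>
      .ord (lenOrd m n - 1 - (j.val * (kk m n + m * kk' m n) + a.val))
  | Sum.inr (Sum.inr (Sum.inr (Sum.inl (i, j, a)))) =>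
      .slot i (tOffP s i j + (kk' m n - 1 - a.val))
  | Sum.inr (Sum.inr (Sum.inr (Sum.inr (i, j, a)))) =>
      .ord (lenOrd m n - 1 -
        (j.val * (kk m n + m * kk' m n) + kk m n + rho s i j * kk' m n + a.val))

/-- `d_t`: the tree distance between token `t`'s initial and target vertices. -/
noncomputable def dd (s : Fin n → Fin m) (π : Equiv.Perm (Option (Fin m)))
    (t : Tok m n) : ℕ :=
  (TheGraph s).dist (initTok s t) (tgtTok s π t)

end UnweightedTS

namespace UnweightedTS

section RunTheory
open Classical

/-- The path vertex of index `d` in a region: `none` is the ordering gadget. -/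
def pv {m : ℕ} : Option (Fin m) → ℕ → Vtx m
  | none, d => .ord d
  | some l, d => .slot l d

/-- The region of a vertex; the root lies in no region. -/
def rg {m : ℕ} : Vtx m → Option (Option (Fin m))
  | .root => none
  | .ord _ => some none
  | .slot l _ => some (some l)
  | .nook l => some (some l)

/-- The depth of a vertex; a nook has the depth of its neighbour. -/
def dp {m : ℕ} (k : ℕ) : Vtx m → ℕ
  | .root => 0
  | .ord d => d + 1
  | .slot _ d => d + 1
  | .nook _ => k

/-- The home vertex of an item position. -/
def itemVtx {m : ℕ} : Option (Fin m) → Vtx m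
  | none => .root
  | some i => .nook i

/-- The vertices of the tree. -/
def valid {m : ℕ} (len : Fin m → ℕ) (L : ℕ) : Vtx m → Prop
  | .root => True
  | .ord d => d < L
  | .slot l d => d < len l
  | .nook _ => True

/-- Edges of the tree directed away from the root. -/
inductive Edge {m : ℕ} (k : ℕ) : Vtx m → Vtx m → Prop
  | top (r : Option (Fin m)) : Edge k .root (pv r 0)
  | path (r : Option (Fin m)) (d : ℕ) : Edge k (pv r d) (pv r (d + 1))
  | side (l : Fin m) : Edge k (pv (some l) (k - 1)) (.nook l)

@[simp] lemma rg_pv {m : ℕ} (r : Option (Fin m)) (d : ℕ) : rg (pv r d) = some r := by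
  cases r <;> rfl

@[simp] lemma rg_root {m : ℕ} : rg (.root : Vtx m) = none := rfl

@[simp] lemma rg_nook {m : ℕ} (l : Fin m) : rg (.nook l) = some (some l) := rfl

@[simp] lemma dp_pv {m : ℕ} (k : ℕ) (r : Option (Fin m)) (d : ℕ) : dp k (pv r d) = d + 1 := by
  cases r <;> rfl

@[simp] lemma dp_root {m : ℕ} (k : ℕ) : dp k (.root : Vtx m) = 0 := rfl

@[simp] lemma dp_nook {m : ℕ} (k : ℕ) (l : Fin m) : dp k (.nook l) = k := rfl

lemma pv_inj {m : ℕ} {r r' : Option (Fin m)} {d d' : ℕ} (h : pv r d = pv r' d') :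
    r = r' ∧ d = d' := by
  cases r <;> cases r' <;> simp_all [pv]

lemma pv_ne_root {m : ℕ} (r : Option (Fin m)) (d : ℕ) : pv r d ≠ .root := by
  cases r <;> simp [pv]

lemma pv_ne_nook {m : ℕ} (r : Option (Fin m)) (d : ℕ) (l : Fin m) : pv r d ≠ .nook l := by
  cases r <;> simp [pv]

lemma vtx_cases {m : ℕ} (v : Vtx m) :
    v = .root ∨ (∃ r d, v = pv r d) ∨ ∃ l, v = .nook l := by
  cases v with
  | root => simp
  | ord d => exact Or.inr (Or.inl ⟨none, d, rfl⟩)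
  | slot l d => exact Or.inr (Or.inl ⟨some l, d, rfl⟩)
  | nook l => exact Or.inr (Or.inr ⟨l, rfl⟩)

lemma edge_of_rel {m k L : ℕ} {len : Fin m → ℕ} {u v : Vtx m} (h : rel len L k u v)  :
    Edge k u v ∧ valid len L u ∧ valid len L v := by
  cases u <;> cases v <;> simp only [rel] at h
  · obtain ⟨rfl, h⟩ := h
    exact ⟨Edge.top none, trivial, h⟩
  · obtain ⟨rfl, h⟩ := h
    exact ⟨Edge.top (some _), trivial, h⟩
  · obtain ⟨rfl, h⟩ := h
    exact ⟨Edge.path none _, by simp only [valid]; omega, h⟩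
  · obtain ⟨rfl, rfl, h⟩ := h
    exact ⟨Edge.path (some _) _, by simp only [valid]; omega, h⟩
  · obtain ⟨rfl, rfl, h⟩ := h
    exact ⟨Edge.side _, h, trivial⟩

lemma edge_of_adj {m k L : ℕ} {len : Fin m → ℕ} {u v : Vtx m} (h : (Tree len L k).Adj u v) :
    (Edge k u v ∨ Edge k v u) ∧ valid len L u ∧ valid len L v ∧ u ≠ v := by
  rw [Tree, SimpleGraph.fromRel_adj] at h
  obtain ⟨hne, h | h⟩ := h
  · have := edge_of_rel h; exact ⟨Or.inl this.1, this.2.1, this.2.2, hne⟩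
  · have := edge_of_rel h; exact ⟨Or.inr this.1, this.2.2, this.2.1, hne⟩

/-- Tokens: items, then the tokens starting in the ordering gadget, then those ending there. -/
abbrev Tk (m : ℕ) (ι : Type) := Option (Fin m) ⊕ (ι ⊕ ι)

/-- A token swapping run on the tree, with non-item tokens `X b` travelling from the ordering
gadget to slot gadget `sl b` and tokens `Y b` travelling in the opposite direction. -/
structure Run (m : ℕ) (ι : Type) [Fintype ι] where
  k : ℕ
  L : ℕ
  N : ℕ
  len : Fin m → ℕ
  sl : ι → Fin m
  pos : ι → ℕ
  spos : ι → ℕ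
  P : ℕ → Tk m ι → Vtx m
  two_le_k : 2 ≤ k
  L_eq : L = Fintype.card ι
  len_eq : ∀ l, len l = (Finset.univ.filter fun b => sl b = l).card
  pos_inj : Function.Injective pos
  pos_lt : ∀ b, pos b < L
  spos_lt : ∀ b, spos b < len (sl b)
  spos_mono : ∀ b b', sl b = sl b' → pos b < pos b' → spos b < spos b'
  init_X : ∀ b, P 0 (.inr (.inl b)) = .ord (pos b)
  init_Y : ∀ b, P 0 (.inr (.inr b)) = .slot (sl b) (spos b)
  final_X : ∀ b, P N (.inr (.inl b)) = .slot (sl b) (len (sl b) - 1 - spos b)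
  final_Y : ∀ b, P N (.inr (.inr b)) = .ord (L - 1 - pos b)
  init_item : ∃ ρ : Equiv.Perm (Option (Fin m)), ∀ e, P 0 (.inl e) = itemVtx (ρ e)
  final_item : ∃ ρ : Equiv.Perm (Option (Fin m)), ∀ e, P N (.inl e) = itemVtx (ρ e)
  step : ∀ t < N, ∃ u v, (Tree len L k).Adj u v ∧ ∀ x, P (t + 1) x = swapV (u, v) (P t x)

namespace Run

variable {m : ℕ} {ι : Type} [Fintype ι] (R : Run m ι)

/-- The number of path vertices in a region. -/
def lenR : Option (Fin m) → ℕ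
  | none => R.L
  | some l => R.len l

lemma valid_pv (r : Option (Fin m)) (d : ℕ) : valid R.len R.L (pv r d) ↔ d < R.lenR r := by
  cases r <;> rfl

lemma pos_surj {d : ℕ} (h : d < R.L) : ∃ b, R.pos b = d := by
  have hb : Function.Bijective (fun b => (⟨R.pos b, R.pos_lt b⟩ : Fin R.L)) := by
    rw [Fintype.bijective_iff_injective_and_card]
    refine ⟨fun a b hab => R.pos_inj (by simpa using hab), by simp [R.L_eq]⟩
  obtain ⟨b, hb⟩ := hb.2 ⟨d, h⟩
  exact ⟨b, by simpa using hb⟩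

lemma spos_inj {b b' : ι} (h : R.sl b = R.sl b') (h' : R.spos b = R.spos b') : b = b' := by
  rcases lt_trichotomy (R.pos b) (R.pos b') with hlt | heq | hlt
  · have := R.spos_mono b b' h hlt; omega
  · exact R.pos_inj heq
  · have := R.spos_mono b' b h.symm hlt; omega

lemma spos_surj {l : Fin m} {d : ℕ} (h : d < R.len l) : ∃ b, R.sl b = l ∧ R.spos b = d := by
  have hb : Function.Bijective
      (fun b : {b // R.sl b = l} => (⟨R.spos b, by have := R.spos_lt b; rwa [b.2] at this⟩ : Fin (R.len l))) := by
    rw [Fintype.bijective_iff_injective_and_card]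
    refine ⟨fun a b hab => Subtype.ext (R.spos_inj (a.2.trans b.2.symm) (by simpa using hab)), ?_⟩
    simp [R.len_eq, Fintype.card_subtype]
  obtain ⟨b, hb⟩ := hb.2 ⟨d, h⟩
  exact ⟨b, b.2, by simpa using hb⟩

lemma swapV_invol {V : Type*} [DecidableEq V] (u v : V) : Function.Involutive (swapV (u, v)) := by
  intro x
  unfold swapV
  split_ifs <;> simp_all

lemma itemVtx_inj : Function.Injective (itemVtx (m := m)) := by
  intro a b h
  cases a <;> cases b <;> simp_all [itemVtx]

lemma occ_zero : (Function.Injective (R.P 0)) ∧ (∀ v, valid R.len R.L v ↔ ∃ x, R.P 0 x = v) := by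
  obtain ⟨ρ, hρ⟩ := R.init_item
  constructor
  · rintro (e | b | b) (e' | b' | b') h
    · rw [hρ, hρ] at h
      rw [ρ.injective (itemVtx_inj h)]
    · rw [hρ, R.init_X] at h; cases hh : ρ e <;> simp [hh, itemVtx] at h
    · rw [hρ, R.init_Y] at h; cases hh : ρ e <;> simp [hh, itemVtx] at h
    · rw [hρ, R.init_X] at h; cases hh : ρ e' <;> simp [hh, itemVtx] at h
    · rw [R.init_X, R.init_X] at h
      have := @R.pos_inj b b' (by simpa using h)
      rw [this]
    · rw [R.init_X, R.init_Y] at h; simp at h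
    · rw [hρ, R.init_Y] at h; cases hh : ρ e' <;> simp [hh, itemVtx] at h
    · rw [R.init_X, R.init_Y] at h; simp at h
    · rw [R.init_Y, R.init_Y] at h
      simp only [Vtx.slot.injEq] at h
      rw [R.spos_inj h.1 h.2]
  · intro v
    constructor
    · intro hv
      cases v with
      | root => exact ⟨.inl (ρ.symm none), by simp [hρ, itemVtx]⟩
      | ord d =>
        obtain ⟨b, hb⟩ := R.pos_surj hv
        exact ⟨.inr (.inl b), by rw [R.init_X, hb]⟩
      | slot l d =>
        obtain ⟨b, rfl, hb⟩ := R.spos_surj hv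
        exact ⟨.inr (.inr b), by rw [R.init_Y, hb]⟩
      | nook l => exact ⟨.inl (ρ.symm (some l)), by simp [hρ, itemVtx]⟩
    · rintro ⟨x, rfl⟩
      rcases x with e | b | b
      · rw [hρ]; cases ρ e <;> trivial
      · rw [R.init_X]; exact R.pos_lt b
      · rw [R.init_Y]; exact R.spos_lt b

lemma occ {t : ℕ} (ht : t ≤ R.N) :
    (Function.Injective (R.P t)) ∧ (∀ v, valid R.len R.L v ↔ ∃ x, R.P t x = v) := by
  induction t with
  | zero => exact R.occ_zero
  | succ t ih =>
    obtain ⟨hi, hs⟩ := ih (by omega)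
    obtain ⟨u, v, huv, hst⟩ := R.step t (by omega)
    obtain ⟨-, hu, hv, -⟩ := edge_of_adj huv
    have hval : ∀ w, valid R.len R.L w → valid R.len R.L (swapV (u, v) w) := by
      intro w hw
      unfold swapV
      split_ifs <;> assumption
    constructor
    · intro x y hxy
      rw [hst, hst] at hxy
      exact hi ((swapV_invol u v).injective hxy)
    · intro w
      constructor
      · intro hw
        obtain ⟨x, hx⟩ := (hs _).1 (hval w hw)
        exact ⟨x, by rw [hst, hx, swapV_invol u v]⟩
      · rintro ⟨x, rfl⟩
        rw [hst]
        exact hval _ ((hs _).2 ⟨x, rfl⟩)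

lemma inj {t : ℕ} (ht : t ≤ R.N) {x y : Tk m ι} (h : R.P t x = R.P t y) : x = y :=
  (R.occ ht).1 h

lemma exists_at {t : ℕ} (ht : t ≤ R.N) {v : Vtx m} (hv : valid R.len R.L v) :
    ∃ x, R.P t x = v := ((R.occ ht).2 v).1 hv

lemma valid_P {t : ℕ} (ht : t ≤ R.N) (x : Tk m ι) : valid R.len R.L (R.P t x) :=
  ((R.occ ht).2 _).2 ⟨x, rfl⟩

/-- At step `t` the token `p` moves down the tree, exchanging its place with `q`. -/
structure Swaps (t : ℕ) (p q : Tk m ι) : Prop where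
  lt : t < R.N
  edge : Edge R.k (R.P t p) (R.P t q)
  ne : p ≠ q
  down : R.P (t + 1) p = R.P t q
  up : R.P (t + 1) q = R.P t p
  other : ∀ x, x ≠ p → x ≠ q → R.P (t + 1) x = R.P t x

lemma exists_swaps {t : ℕ} (ht : t < R.N) : ∃ p q, R.Swaps t p q := by
  obtain ⟨u, v, huv, hst⟩ := R.step t ht
  obtain ⟨he, hu, hv, hne⟩ := edge_of_adj huv
  obtain ⟨p, rfl⟩ := R.exists_at ht.le hu
  obtain ⟨q, rfl⟩ := R.exists_at ht.le hv
  have hpq : p ≠ q := fun h => hne (h ▸ rfl)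
  have ho : ∀ x, x ≠ p → x ≠ q → R.P (t + 1) x = R.P t x := by
    intro x hxp hxq
    rw [hst, swapV, if_neg (fun h => hxp (R.inj ht.le h)), if_neg (fun h => hxq (R.inj ht.le h))]
  have h1 : R.P (t + 1) p = R.P t q := by simp [hst, swapV]
  have h2 : R.P (t + 1) q = R.P t p := by simp [hst, swapV]
  rcases he with he | he
  · exact ⟨p, q, ht, he, hpq, h1, h2, ho⟩
  · exact ⟨q, p, ht, he, hpq.symm, h2, h1, fun x a b => ho x b a⟩

end Run

namespace Run

variable {m : ℕ} {ι : Type} [Fintype ι] (R : Run m ι)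

/-- The initial region of a non-item token. -/
def home : ι ⊕ ι → Option (Fin m)
  | .inl _ => none
  | .inr b => some (R.sl b)

/-- The final region of a non-item token. -/
def goal : ι ⊕ ι → Option (Fin m)
  | .inl b => some (R.sl b)
  | .inr _ => none

/-- The token has not left its initial region up to time `t`. -/
def reg1 (a : ι ⊕ ι) (t : ℕ) : Prop := ∀ t' ≤ t, rg (R.P t' (.inr a)) = some (R.home a)

/-- The token stays in its final region from time `t` on. -/
def reg3 (a : ι ⊕ ι) (t : ℕ) : Prop :=
  ∀ t', t ≤ t' → t' ≤ R.N → rg (R.P t' (.inr a)) = some (R.goal a)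

/-- The value of a token: `-1` before its departure, `1` after its arrival, `0` otherwise. -/
noncomputable def vl : Tk m ι → ℕ → ℤ
  | .inl _, _ => 0
  | .inr a, t => if R.reg1 a t then -1 else if R.reg3 a t then 1 else 0

lemma home_ne_goal (a : ι ⊕ ι) : R.home a ≠ R.goal a := by
  rcases a with b | b <;> simp [home, goal]

variable {R}

lemma reg1_mono {a : ι ⊕ ι} {t t' : ℕ} (h : R.reg1 a t) (ht : t' ≤ t) : R.reg1 a t' :=
  fun s hs => h s (hs.trans ht)

lemma reg3_mono {a : ι ⊕ ι} {t t' : ℕ} (h : R.reg3 a t) (ht : t ≤ t') : R.reg3 a t' :=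
  fun s hs => h s (ht.trans hs)

lemma reg1.rg {a : ι ⊕ ι} {t : ℕ} (h : R.reg1 a t) :
    rg (R.P t (.inr a)) = some (R.home a) := h t le_rfl

lemma reg3.rg {a : ι ⊕ ι} {t : ℕ} (h : R.reg3 a t) (ht : t ≤ R.N) :
    rg (R.P t (.inr a)) = some (R.goal a) := h t le_rfl ht

lemma reg1.not_reg3 {a : ι ⊕ ι} {t : ℕ} (h : R.reg1 a t) (ht : t ≤ R.N) : ¬R.reg3 a t := by
  intro h3
  have := h.rg.symm.trans (h3.rg ht)
  exact R.home_ne_goal a (by simpa using this)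

lemma reg1_succ {a : ι ⊕ ι} {t : ℕ} :
    R.reg1 a (t + 1) ↔ R.reg1 a t ∧ rg (R.P (t + 1) (.inr a)) = some (R.home a) := by
  constructor
  · intro h; exact ⟨reg1_mono h (by omega), h.rg⟩
  · rintro ⟨h, h'⟩ s hs
    rcases Nat.lt_or_ge t s with hlt | hge
    · obtain rfl : s = t + 1 := by omega
      exact h'
    · exact h s hge

lemma reg3_pred {a : ι ⊕ ι} {t : ℕ} (ht : t < R.N) :
    R.reg3 a t ↔ R.reg3 a (t + 1) ∧ rg (R.P t (.inr a)) = some (R.goal a) := by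
  constructor
  · intro h; exact ⟨reg3_mono h (by omega), h.rg ht.le⟩
  · rintro ⟨h, h'⟩ s hs hsN
    rcases Nat.lt_or_ge t s with hlt | hge
    · exact h s hlt hsN
    · obtain rfl : s = t := by omega
      exact h'

variable (R)

lemma reg1_zero (a : ι ⊕ ι) : R.reg1 a 0 := by
  intro t ht
  obtain rfl : t = 0 := by omega
  rcases a with b | b
  · rw [R.init_X]; rfl
  · rw [R.init_Y]; rfl

lemma reg3_N (a : ι ⊕ ι) : R.reg3 a R.N := by
  intro t ht ht'
  obtain rfl : t = R.N := by omega
  rcases a with b | b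
  · rw [R.final_X]; rfl
  · rw [R.final_Y]; rfl

lemma not_reg3_zero (a : ι ⊕ ι) : ¬R.reg3 a 0 := (R.reg1_zero a).not_reg3 (Nat.zero_le _)

lemma not_reg1_N (a : ι ⊕ ι) : ¬R.reg1 a R.N := fun h => h.not_reg3 le_rfl (R.reg3_N a)

@[simp] lemma vl_inl (e : Option (Fin m)) (t : ℕ) : R.vl (.inl e) t = 0 := rfl

variable {R}

lemma vl_eq_neg_one {x : Tk m ι} {t : ℕ} : R.vl x t = -1 ↔ ∃ a, x = .inr a ∧ R.reg1 a t := by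
  rcases x with e | a
  · simp
  · by_cases h1 : R.reg1 a t
    · simp [vl, h1]
    · by_cases h3 : R.reg3 a t <;> simp [vl, h1, h3]

lemma vl_eq_one {x : Tk m ι} {t : ℕ} (ht : t ≤ R.N) :
    R.vl x t = 1 ↔ ∃ a, x = .inr a ∧ R.reg3 a t := by
  rcases x with e | a
  · simp
  · by_cases h1 : R.reg1 a t
    · simp [vl, h1, h1.not_reg3 ht]
    · by_cases h3 : R.reg3 a t <;> simp [vl, h1, h3]

lemma vl_inr_neg {a : ι ⊕ ι} {t : ℕ} : R.vl (.inr a) t = -1 ↔ R.reg1 a t := by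
  simp [vl_eq_neg_one]

lemma vl_inr_one {a : ι ⊕ ι} {t : ℕ} (ht : t ≤ R.N) : R.vl (.inr a) t = 1 ↔ R.reg3 a t := by
  simp [vl_eq_one ht]

lemma vl_inr_zero {a : ι ⊕ ι} {t : ℕ} :
    R.vl (.inr a) t = 0 ↔ ¬R.reg1 a t ∧ ¬R.reg3 a t := by
  by_cases h1 : R.reg1 a t
  · simp [vl, h1]
  · by_cases h3 : R.reg3 a t <;> simp [vl, h1, h3]

lemma vl_cases (R : Run m ι) (x : Tk m ι) (t : ℕ) : R.vl x t = -1 ∨ R.vl x t = 0 ∨ R.vl x t = 1 := by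
  rcases x with e | a
  · simp
  · by_cases h1 : R.reg1 a t
    · simp [vl, h1]
    · by_cases h3 : R.reg3 a t <;> simp [vl, h1, h3]

lemma vl_root {x : Tk m ι} {t : ℕ} (ht : t ≤ R.N) (h : R.P t x = .root) : R.vl x t = 0 := by
  rcases x with e | a
  · rfl
  · rw [vl_inr_zero]
    constructor
    · intro h1; have := h1.rg; rw [h] at this; simp at this
    · intro h1; have := h1.rg ht; rw [h] at this; simp at this

lemma reg1_iff_of_rg {a : ι ⊕ ι} {t : ℕ}
    (h : rg (R.P (t + 1) (.inr a)) = rg (R.P t (.inr a))) : R.reg1 a (t + 1) ↔ R.reg1 a t := by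
  rw [reg1_succ]
  exact ⟨fun h => h.1, fun h' => ⟨h', h.trans h'.rg⟩⟩

lemma reg3_iff_of_rg {a : ι ⊕ ι} {t : ℕ} (ht : t < R.N)
    (h : rg (R.P (t + 1) (.inr a)) = rg (R.P t (.inr a))) : R.reg3 a (t + 1) ↔ R.reg3 a t := by
  rw [reg3_pred ht]
  exact ⟨fun h' => ⟨h', h.symm.trans (h'.rg ht)⟩, fun h' => h'.1⟩

lemma vl_eq_of_rg {x : Tk m ι} {t : ℕ} (ht : t < R.N)
    (h : rg (R.P (t + 1) x) = rg (R.P t x)) : R.vl x (t + 1) = R.vl x t := by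
  rcases x with e | a
  · rfl
  · simp only [vl, reg1_iff_of_rg h, reg3_iff_of_rg ht h]

lemma home_of_vl {a : ι ⊕ ι} {t : ℕ} {r : Option (Fin m)} (h : R.vl (.inr a) t = -1)
    (hr : rg (R.P t (.inr a)) = some r) : R.home a = r := by
  have := (vl_inr_neg.1 h).rg; rw [hr] at this; simpa using this.symm

lemma goal_of_vl {a : ι ⊕ ι} {t : ℕ} {r : Option (Fin m)} (ht : t ≤ R.N)
    (h : R.vl (.inr a) t = 1) (hr : rg (R.P t (.inr a)) = some r) : R.goal a = r := by
  have := ((vl_inr_one ht).1 h).rg ht; rw [hr] at this; simpa using this.symm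

variable (R)

/-- The number of tokens that have left their initial region `r`. -/
noncomputable def out (r : Option (Fin m)) (t : ℕ) : ℕ :=
  (Finset.univ.filter fun a => R.home a = r ∧ ¬R.reg1 a t).card

/-- The number of tokens that have arrived for good in their final region `r`. -/
noncomputable def inn (r : Option (Fin m)) (t : ℕ) : ℕ :=
  (Finset.univ.filter fun a => R.goal a = r ∧ R.reg3 a t).card

/-- The number of `X` tokens of slot `l` that have left the ordering gadget. -/
noncomputable def lamX (l : Fin m) (t : ℕ) : ℕ :=
  (Finset.univ.filter fun b => R.sl b = l ∧ ¬R.reg1 (.inl b) t).card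

/-- The number of `Y` tokens of slot `l` that have arrived for good in the ordering gadget. -/
noncomputable def tY (l : Fin m) (t : ℕ) : ℕ :=
  (Finset.univ.filter fun b => R.sl b = l ∧ R.reg3 (.inr b) t).card

lemma card_sum_filter (p : ι ⊕ ι → Prop) [DecidablePred p] : (Finset.univ.filter p).card =
    (Finset.univ.filter fun b => p (.inl b)).card +
      (Finset.univ.filter fun b => p (.inr b)).card := by
  rw [← Finset.univ_disjSum_univ]
  simp only [Finset.card_filter, Finset.sum_disjSum]

lemma out_none (t : ℕ) :
    R.out none t = (Finset.univ.filter fun b => ¬R.reg1 (.inl b) t).card := by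
  rw [out, card_sum_filter]; simp [home]

lemma out_some (l : Fin m) (t : ℕ) : R.out (some l) t =
    (Finset.univ.filter fun b => R.sl b = l ∧ ¬R.reg1 (.inr b) t).card := by
  rw [out, card_sum_filter]; simp [home]

lemma inn_none (t : ℕ) :
    R.inn none t = (Finset.univ.filter fun b => R.reg3 (.inr b) t).card := by
  rw [inn, card_sum_filter]; simp [goal]

lemma inn_some (l : Fin m) (t : ℕ) : R.inn (some l) t =
    (Finset.univ.filter fun b => R.sl b = l ∧ R.reg3 (.inl b) t).card := by
  rw [inn, card_sum_filter]; simp [goal]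

lemma card_home (r : Option (Fin m)) :
    (Finset.univ.filter fun a => R.home a = r).card = R.lenR r := by
  rw [card_sum_filter]
  cases r <;> simp [home, lenR, R.L_eq, R.len_eq]

lemma card_goal (r : Option (Fin m)) :
    (Finset.univ.filter fun a => R.goal a = r).card = R.lenR r := by
  rw [card_sum_filter]
  cases r <;> simp [goal, lenR, R.L_eq, R.len_eq]

lemma out_zero (r : Option (Fin m)) : R.out r 0 = 0 := by simp [out, R.reg1_zero]

lemma inn_zero (r : Option (Fin m)) : R.inn r 0 = 0 := by simp [inn, R.not_reg3_zero]

lemma out_N (r : Option (Fin m)) : R.out r R.N = R.lenR r := by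
  simp [out, R.not_reg1_N, R.card_home]

lemma inn_N (r : Option (Fin m)) : R.inn r R.N = R.lenR r := by
  simp [inn, R.reg3_N, R.card_goal]

variable {R}

lemma out_mono (r : Option (Fin m)) {t t' : ℕ} (h : t ≤ t') : R.out r t ≤ R.out r t' := by
  refine Finset.card_le_card fun a ha => ?_
  simp only [Finset.mem_filter, Finset.mem_univ, true_and] at ha ⊢
  exact ⟨ha.1, fun h1 => ha.2 (reg1_mono h1 h)⟩

lemma inn_mono (r : Option (Fin m)) {t t' : ℕ} (h : t ≤ t') : R.inn r t ≤ R.inn r t' := by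
  refine Finset.card_le_card fun a ha => ?_
  simp only [Finset.mem_filter, Finset.mem_univ, true_and] at ha ⊢
  exact ⟨ha.1, reg3_mono ha.2 h⟩

lemma lamX_mono (l : Fin m) {t t' : ℕ} (h : t ≤ t') : R.lamX l t ≤ R.lamX l t' := by
  refine Finset.card_le_card fun a ha => ?_
  simp only [Finset.mem_filter, Finset.mem_univ, true_and] at ha ⊢
  exact ⟨ha.1, fun h1 => ha.2 (reg1_mono h1 h)⟩

lemma inn_le_lamX (l : Fin m) {t : ℕ} (ht : t ≤ R.N) : R.inn (some l) t ≤ R.lamX l t := by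
  rw [inn_some]
  refine Finset.card_le_card fun a ha => ?_
  simp only [Finset.mem_filter, Finset.mem_univ, true_and] at ha ⊢
  exact ⟨ha.1, fun h1 => h1.not_reg3 ht ha.2⟩

lemma tY_le_out (l : Fin m) {t : ℕ} (ht : t ≤ R.N) : R.tY l t ≤ R.out (some l) t := by
  rw [out_some]
  refine Finset.card_le_card fun a ha => ?_
  simp only [Finset.mem_filter, Finset.mem_univ, true_and] at ha ⊢
  exact ⟨ha.1, fun h1 => h1.not_reg3 ht ha.2⟩

variable (R)

/-- The tokens in transit located in region `r`. -/
noncomputable def specs (r : Option (Fin m)) (t : ℕ) : Finset (Tk m ι) :=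
  Finset.univ.filter fun x => R.vl x t = 0 ∧ rg (R.P t x) = some r

variable {R}

lemma mem_specs {r : Option (Fin m)} {t : ℕ} {x : Tk m ι} :
    x ∈ R.specs r t ↔ R.vl x t = 0 ∧ rg (R.P t x) = some r := by simp [specs]

lemma card_region (r : Option (Fin m)) {t : ℕ} (ht : t ≤ R.N) :
    (Finset.univ.filter fun x => rg (R.P t x) = some r).card =
      R.lenR r + if r = none then 0 else 1 := by
  have himg : (Finset.univ.filter fun x => rg (R.P t x) = some r).image (R.P t) =
      (Finset.range (R.lenR r)).image (pv r) ∪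
        (match r with | none => ∅ | some l => {Vtx.nook l}) := by
    ext v
    simp only [Finset.mem_image, Finset.mem_filter, Finset.mem_univ, true_and, Finset.mem_union,
      Finset.mem_range]
    constructor
    · rintro ⟨x, hx, rfl⟩
      have hv := R.valid_P ht x
      rcases vtx_cases (R.P t x) with h | ⟨r', d, h⟩ | ⟨l, h⟩
      · rw [h] at hx; simp at hx
      · rw [h] at hx hv ⊢
        obtain rfl : r' = r := by simpa using hx
        exact Or.inl ⟨d, (R.valid_pv _ _).1 hv, rfl⟩
      · rw [h] at hx ⊢
        obtain rfl : some l = r := by simpa using hx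
        simp
    · rintro (⟨d, hd, rfl⟩ | hv)
      · obtain ⟨x, hx⟩ := R.exists_at ht ((R.valid_pv r d).2 hd)
        exact ⟨x, by rw [hx]; simp, hx⟩
      · cases r with
        | none => simp at hv
        | some l =>
          obtain rfl : v = .nook l := by simpa using hv
          obtain ⟨x, hx⟩ := R.exists_at ht (v := .nook l) trivial
          exact ⟨x, by rw [hx]; simp, hx⟩
  rw [← Finset.card_image_of_injective _ (R.occ ht).1, himg, Finset.card_union_of_disjoint,
    Finset.card_image_of_injective _ (fun a b h => (pv_inj h).2), Finset.card_range]
  · cases r <;> simp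
  · cases r with
    | none => simp
    | some l =>
      simp only [Finset.disjoint_singleton_right, Finset.mem_image, not_exists, not_and]
      exact fun d _ => pv_ne_nook _ _ _

lemma card_specs (r : Option (Fin m)) {t : ℕ} (ht : t ≤ R.N) :
    (R.specs r t).card + R.inn r t = R.out r t + if r = none then 0 else 1 := by
  have h1 := card_region (R := R) r ht
  have h2 : (Finset.univ.filter fun x => rg (R.P t x) = some r) =
      (R.specs r t ∪ (Finset.univ.filter fun a => R.goal a = r ∧ R.reg3 a t).image Sum.inr) ∪
        (Finset.univ.filter fun a => R.home a = r ∧ R.reg1 a t).image Sum.inr := by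
    ext x
    simp only [Finset.mem_filter, Finset.mem_univ, true_and, Finset.mem_union, mem_specs,
      Finset.mem_image]
    constructor
    · intro h
      rcases R.vl_cases x t with hv | hv | hv
      · obtain ⟨a, rfl, ha⟩ := vl_eq_neg_one.1 hv
        exact Or.inr ⟨a, ⟨home_of_vl hv h, ha⟩, rfl⟩
      · exact Or.inl (Or.inl ⟨hv, h⟩)
      · obtain ⟨a, rfl, ha⟩ := (vl_eq_one ht).1 hv
        exact Or.inl (Or.inr ⟨a, ⟨goal_of_vl ht hv h, ha⟩, rfl⟩)
    · rintro ((h | ⟨a, ⟨rfl, ha⟩, rfl⟩) | ⟨a, ⟨rfl, ha⟩, rfl⟩)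
      · exact h.2
      · exact ha.rg ht
      · exact ha.rg
  rw [h2, Finset.card_union_of_disjoint, Finset.card_union_of_disjoint,
    Finset.card_image_of_injective _ Sum.inr_injective,
    Finset.card_image_of_injective _ Sum.inr_injective] at h1
  · have h3 := R.card_home r
    rw [← Finset.card_filter_add_card_filter_not (fun a => R.reg1 a t), Finset.filter_filter,
      Finset.filter_filter] at h3
    simp only [inn, out]
    omega
  · rw [Finset.disjoint_left]
    simp only [mem_specs, Finset.mem_image, Finset.mem_filter, Finset.mem_univ, true_and, not_exists]
    rintro _ ⟨h, -⟩ a ⟨⟨-, ha⟩, rfl⟩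
    rw [(vl_inr_one ht).2 ha] at h; simp at h
  · rw [Finset.disjoint_left]
    simp only [mem_specs, Finset.mem_image, Finset.mem_filter, Finset.mem_univ, true_and,
      Finset.mem_union, not_exists]
    rintro _ (⟨h, -⟩ | ⟨a, ⟨-, ha⟩, rfl⟩) a' ⟨⟨-, ha'⟩, h'⟩
    · subst h'
      rw [vl_inr_neg.2 ha'] at h; simp at h
    · obtain rfl := Sum.inr_injective h'
      exact ha'.not_reg3 ht ha

end Run

namespace Run

variable {m : ℕ} {ι : Type} [Fintype ι] {R : Run m ι}

lemma Swaps.rg_eq {t : ℕ} {p q : Tk m ι} (h : R.Swaps t p q) (hr : rg (R.P t p) = rg (R.P t q))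
    (x : Tk m ι) : rg (R.P (t + 1) x) = rg (R.P t x) := by
  by_cases hp : x = p
  · subst hp; rw [h.down, hr]
  by_cases hq : x = q
  · subst hq; rw [h.up, hr]
  rw [h.other x hp hq]

lemma Swaps.vl_eq {t : ℕ} {p q : Tk m ι} (h : R.Swaps t p q) (hr : rg (R.P t p) = rg (R.P t q))
    (x : Tk m ι) : R.vl x (t + 1) = R.vl x t := vl_eq_of_rg h.lt (h.rg_eq hr x)

lemma Swaps.counters_eq {t : ℕ} {p q : Tk m ι} (h : R.Swaps t p q)
    (hr : rg (R.P t p) = rg (R.P t q)) :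
    (∀ r, R.out r (t + 1) = R.out r t) ∧ (∀ r, R.inn r (t + 1) = R.inn r t) ∧
      (∀ l, R.lamX l (t + 1) = R.lamX l t) ∧ ∀ l, R.tY l (t + 1) = R.tY l t := by
  have h1 : ∀ a, R.reg1 a (t + 1) ↔ R.reg1 a t := fun a => reg1_iff_of_rg (h.rg_eq hr _)
  have h3 : ∀ a, R.reg3 a (t + 1) ↔ R.reg3 a t := fun a => reg3_iff_of_rg h.lt (h.rg_eq hr _)
  simp only [out, inn, lamX, tY, h1, h3, implies_true, and_self]

lemma card_filter_insert {α : Type*} [Fintype α] {p p' : α → Prop} [DecidablePred p]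
    [DecidablePred p'] {a₀ : α}
    (h : ∀ a, p' a ↔ p a ∨ a = a₀) (h₀ : ¬p a₀) :
    (Finset.univ.filter p').card = (Finset.univ.filter p).card + 1 := by
  have : Finset.univ.filter p' = insert a₀ (Finset.univ.filter p) := by
    ext a
    simp [h, or_comm]
  rw [this, Finset.card_insert_of_notMem (by simpa using h₀)]

section Top

variable {t : ℕ} {p q : Tk m ι} {r : Option (Fin m)}

lemma Swaps.top_reg1 (h : R.Swaps t p q) (hp : R.P t p = .root) (a : ι ⊕ ι) :
    R.reg1 a (t + 1) ↔ R.reg1 a t ∧ .inr a ≠ q := by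
  by_cases haq : Sum.inr a = q
  · subst haq
    simp only [ne_eq, not_true_eq_false, and_false, iff_false]
    intro h1
    have := h1.rg
    rw [h.up, hp] at this; simp at this
  by_cases hap : Sum.inr a = p
  · subst hap
    have : ¬R.reg1 a t := fun h1 => by have := h1.rg; rw [hp] at this; simp at this
    simp only [this, false_and, iff_false]
    exact fun h1 => this (reg1_mono h1 (by omega))
  · rw [reg1_iff_of_rg (by rw [h.other _ hap haq])]
    simp [haq]

lemma Swaps.top_reg3 (h : R.Swaps t p q) (hp : R.P t p = .root) (a : ι ⊕ ι) (hap : .inr a ≠ p) :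
    R.reg3 a (t + 1) ↔ R.reg3 a t := by
  have hlt := h.lt
  by_cases haq : Sum.inr a = q
  · subst haq
    have : ¬R.reg3 a (t + 1) := fun h1 => by
      have := h1.rg h.lt; rw [h.up, hp] at this; simp at this
    simp only [this, false_iff]
    exact fun h1 => this (reg3_mono h1 (by omega))
  · rw [reg3_iff_of_rg hlt (by rw [h.other _ hap haq])]

lemma Swaps.top_vl_up (h : R.Swaps t p q) (hp : R.P t p = .root) : R.vl q (t + 1) = 0 :=
  vl_root h.lt (by rw [h.up, hp])

lemma Swaps.top_vl_old (h : R.Swaps t p q) (hp : R.P t p = .root) :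
    R.vl q t = -1 ∨ R.vl q t = 0 := by
  rcases R.vl_cases q t with h' | h' | h'
  · exact Or.inl h'
  · exact Or.inr h'
  · obtain ⟨a, rfl, ha⟩ := (vl_eq_one h.lt.le).1 h'
    have := (vl_inr_one h.lt).2 (reg3_mono ha (Nat.le_succ t))
    rw [h.top_vl_up hp] at this; simp at this

lemma Swaps.top_vl_new (h : R.Swaps t p q) (hp : R.P t p = .root) :
    R.vl p (t + 1) = 0 ∨ R.vl p (t + 1) = 1 := by
  rcases R.vl_cases p (t + 1) with h' | h' | h'
  · obtain ⟨a, rfl, ha⟩ := vl_eq_neg_one.1 h'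
    have := vl_inr_neg.2 (reg1_mono ha (Nat.le_succ t))
    rw [vl_root h.lt.le hp] at this; simp at this
  · exact Or.inl h'
  · exact Or.inr h'

lemma Swaps.top_out (h : R.Swaps t p q) (hp : R.P t p = .root) (hq : R.P t q = pv r 0) :
    R.out r (t + 1) = R.out r t + if R.vl q t = -1 then 1 else 0 := by
  simp only [out]
  split_ifs with hv
  · obtain ⟨a, rfl, ha⟩ := vl_eq_neg_one.1 hv
    apply card_filter_insert (a₀ := a)
    · intro a'
      rw [h.top_reg1 hp]
      by_cases haa : a' = a
      · subst haa
        have := home_of_vl hv (r := r) (by rw [hq]; simp)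
        simp [this]
      · simp [haa]
    · simp [ha]
  · congr 1
    ext a
    simp only [Finset.mem_filter, Finset.mem_univ, true_and, h.top_reg1 hp]
    by_cases haq : Sum.inr a = q
    · subst haq
      have : ¬R.reg1 a t := fun h => hv (vl_inr_neg.2 h)
      simp [this]
    · simp [haq]

lemma Swaps.top_out_ne (h : R.Swaps t p q) (hp : R.P t p = .root) (hq : R.P t q = pv r 0)
    {r' : Option (Fin m)} (hr : r' ≠ r) : R.out r' (t + 1) = R.out r' t := by
  simp only [out]
  congr 1
  ext a
  simp only [Finset.mem_filter, Finset.mem_univ, true_and, h.top_reg1 hp]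
  by_cases haq : Sum.inr a = q
  · subst haq
    have : R.home a = r' → ¬R.reg1 a t := by
      rintro rfl h1
      have := h1.rg
      rw [hq] at this
      exact hr (by simpa using this.symm)
    simp only [ne_eq, not_true_eq_false, and_false, not_false_eq_true, and_true]
    tauto
  · simp [haq]

lemma Swaps.top_inn (h : R.Swaps t p q) (hp : R.P t p = .root) (hq : R.P t q = pv r 0) :
    R.inn r (t + 1) = R.inn r t + if R.vl p (t + 1) = 1 then 1 else 0 := by
  simp only [inn]
  have hnot : ∀ a, Sum.inr a = p → ¬R.reg3 a t := by
    rintro a rfl h3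
    have := h3.rg h.lt.le
    rw [hp] at this; simp at this
  split_ifs with hv
  · obtain ⟨a, rfl, ha⟩ := (vl_eq_one h.lt).1 hv
    apply card_filter_insert (a₀ := a)
    · intro a'
      by_cases haa : a' = a
      · subst haa
        have := goal_of_vl h.lt hv (r := r) (by rw [h.down, hq]; simp)
        simp [this, ha]
      · rw [h.top_reg3 hp _ (by simpa using haa)]
        simp [haa]
    · simp [hnot a rfl]
  · congr 1
    ext a
    simp only [Finset.mem_filter, Finset.mem_univ, true_and]
    by_cases hap : Sum.inr a = p
    · have h1 := hnot a hap
      subst hap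
      have : ¬R.reg3 a (t + 1) := fun h' => hv ((vl_inr_one h.lt).2 h')
      simp [this, h1]
    · rw [h.top_reg3 hp _ hap]

lemma Swaps.top_inn_ne (h : R.Swaps t p q) (hp : R.P t p = .root) (hq : R.P t q = pv r 0)
    {r' : Option (Fin m)} (hr : r' ≠ r) : R.inn r' (t + 1) = R.inn r' t := by
  simp only [inn]
  congr 1
  ext a
  simp only [Finset.mem_filter, Finset.mem_univ, true_and]
  by_cases hap : Sum.inr a = p
  · subst hap
    have h1 : R.goal a = r' → ¬R.reg3 a (t + 1) := by
      rintro rfl h1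
      have := h1.rg h.lt
      rw [h.down, hq] at this
      exact hr (by simpa using this.symm)
    have h2 : ¬R.reg3 a t := fun h3 => by
      have := h3.rg h.lt.le
      rw [hp] at this; simp at this
    tauto
  · rw [h.top_reg3 hp _ hap]

end Top

/-- A step either exchanges two vertices of the same region or uses a root edge. -/
lemma Swaps.cases {t : ℕ} {p q : Tk m ι} (h : R.Swaps t p q) :
    (∃ r, R.P t p = .root ∧ R.P t q = pv r 0) ∨
    (∃ r d, R.P t p = pv r d ∧ R.P t q = pv r (d + 1)) ∨
    (∃ l, R.P t p = pv (some l) (R.k - 1) ∧ R.P t q = .nook l) := by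
  have := h.edge
  generalize hu : R.P t p = u at this
  generalize hv : R.P t q = v at this
  cases this with
  | top r => exact Or.inl ⟨r, rfl, rfl⟩
  | path r d => exact Or.inr (Or.inl ⟨r, d, rfl, rfl⟩)
  | side l => exact Or.inr (Or.inr ⟨l, rfl, rfl⟩)

lemma out_succ_le (r : Option (Fin m)) {t : ℕ} (ht : t < R.N) :
    R.out r (t + 1) ≤ R.out r t + 1 := by
  obtain ⟨p, q, h⟩ := R.exists_swaps ht
  rcases h.cases with ⟨r', hp, hq⟩ | ⟨r', d, hp, hq⟩ | ⟨l, hp, hq⟩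
  · by_cases hr : r = r'
    · subst hr
      rw [h.top_out hp hq]; split_ifs <;> omega
    · rw [h.top_out_ne hp hq hr]; omega
  · rw [(h.counters_eq (by rw [hp, hq]; simp)).1]; omega
  · rw [(h.counters_eq (by rw [hp, hq]; simp)).1]; omega

/-- The time-reversed run. -/
def rev (R : Run m ι) : Run m ι where
  k := R.k
  L := R.L
  N := R.N
  len := R.len
  sl := R.sl
  pos b := R.L - 1 - R.pos b
  spos b := R.len (R.sl b) - 1 - R.spos b
  P t x := R.P (R.N - t) (x.map id Sum.swap)
  two_le_k := R.two_le_k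
  L_eq := R.L_eq
  len_eq := R.len_eq
  pos_inj a b h := R.pos_inj (by have := R.pos_lt a; have := R.pos_lt b; simp only at h; omega)
  pos_lt b := by have := R.pos_lt b; omega
  spos_lt b := by have := R.spos_lt b; omega
  spos_mono b b' h h' := by
    have := R.pos_lt b; have := R.pos_lt b'
    have h1 := R.spos_mono b' b h.symm (by omega)
    have h2 := R.spos_lt b
    rw [← h]; omega
  init_X b := by simpa using R.final_Y b
  init_Y b := by simpa using R.final_X b
  final_X b := by
    have h := R.init_Y b
    have := R.spos_lt b
    simp only [Nat.sub_self, Sum.map_inr, Sum.swap_inl, h]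
    congr 1; omega
  final_Y b := by
    have h := R.init_X b
    have := R.pos_lt b
    simp only [Nat.sub_self, Sum.map_inr, Sum.swap_inr, h]
    congr 1; omega
  init_item := by simpa using R.final_item
  final_item := by simpa using R.init_item
  step t ht := by
    obtain ⟨u, v, huv, h⟩ := R.step (R.N - (t + 1)) (by omega)
    refine ⟨u, v, huv, fun x => ?_⟩
    have e : R.N - t = R.N - (t + 1) + 1 := by omega
    rw [e, h, swapV_invol u v]

@[simp] lemma rev_k : R.rev.k = R.k := rfl
@[simp] lemma rev_N : R.rev.N = R.N := rfl
@[simp] lemma rev_sl : R.rev.sl = R.sl := rfl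
@[simp] lemma rev_pos (b : ι) : R.rev.pos b = R.L - 1 - R.pos b := rfl
lemma rev_P_inr (t : ℕ) (a : ι ⊕ ι) : R.rev.P t (.inr a) = R.P (R.N - t) (.inr a.swap) := rfl

lemma rev_home (a : ι ⊕ ι) : R.rev.home a = R.goal a.swap := by rcases a with b | b <;> rfl
lemma rev_goal (a : ι ⊕ ι) : R.rev.goal a = R.home a.swap := by rcases a with b | b <;> rfl

lemma rev_reg1 (a : ι ⊕ ι) {t : ℕ} (ht : t ≤ R.N) :
    R.rev.reg1 a t ↔ R.reg3 a.swap (R.N - t) := by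
  constructor
  · intro h s hs hsN
    have := h (R.N - s) (by omega)
    rw [rev_P_inr, rev_home, show R.N - (R.N - s) = s by omega] at this
    exact this
  · intro h s hs
    rw [rev_P_inr, rev_home]
    exact h (R.N - s) (by omega) (by omega)

lemma rev_reg3 (a : ι ⊕ ι) {t : ℕ} (ht : t ≤ R.N) :
    R.rev.reg3 a t ↔ R.reg1 a.swap (R.N - t) := by
  constructor
  · intro h s hs
    have := h (R.N - s) (by omega) (by simp)
    rw [rev_P_inr, rev_goal, show R.N - (R.N - s) = s by omega] at this
    exact this
  · intro h s hs hsN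
    rw [rev_P_inr, rev_goal]
    exact h (R.N - s) (by omega)

lemma rev_vl_inr (a : ι ⊕ ι) {t : ℕ} (ht : t ≤ R.N) :
    R.rev.vl (.inr a) t = -R.vl (.inr a.swap) (R.N - t) := by
  simp only [vl, rev_reg1 a ht, rev_reg3 a ht]
  by_cases h1 : R.reg1 a.swap (R.N - t)
  · have := h1.not_reg3 (Nat.sub_le _ _)
    simp [h1, this]
  · simp [h1]; split_ifs <;> simp

end Run

namespace Run

variable {m : ℕ} {ι : Type} [Fintype ι] (R : Run m ι)

/-- The number of tokens in transit in region `r` at depth more than `d`. -/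
noncomputable def deepCount (r : Option (Fin m)) (d t : ℕ) : ℕ :=
  (Finset.univ.filter fun x =>
    R.vl x t = 0 ∧ rg (R.P t x) = some r ∧ d < dp R.k (R.P t x)).card

/-- The threshold for `deepCount` in the weights of the potential. -/
def thr (r : Option (Fin m)) (d : ℕ) : ℕ := if r = none then 1 else if d < R.k then 2 else 1

/-- Indicator that `deepCount` reaches its threshold. -/
noncomputable def ee (r : Option (Fin m)) (d t : ℕ) : ℤ :=
  if R.thr r d ≤ R.deepCount r d t then 1 else 0

/-- The weight of a vertex in the potential. -/
noncomputable def wt (v : Vtx m) (t : ℕ) : ℤ :=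
  match v with
  | .root => 0
  | .ord d => 2 * (R.ee none (d + 1) t - (d + 1))
  | .slot l d => 2 * (R.ee (some l) (d + 1) t - (d + 1))
  | .nook _ => 1 - 2 * R.k

/-- The potential of the configuration at time `t`. -/
noncomputable def pot (t : ℕ) : ℤ := ∑ x, R.vl x t * R.wt (R.P t x) t

/-- Step `t` simultaneously completes a departure from and an arrival to region `r`, at a moment
when the region holds at most the minimal number of tokens in transit. -/
def merged (r : Option (Fin m)) (t : ℕ) : Prop :=
  R.out r t < R.out r (t + 1) ∧ R.inn r t < R.inn r (t + 1) ∧ R.out r t ≤ R.inn r t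

/-- The slack of step `t`. -/
noncomputable def sg (t : ℕ) : ℤ :=
  4 + (R.pot (t + 1) - R.pot t)
    - 2 * ∑ r, (((R.out r (t + 1) : ℤ) - R.out r t) + ((R.inn r (t + 1) : ℤ) - R.inn r t))
    + 4 * ∑ r, (if R.merged r t then (1 : ℤ) else 0)

lemma wt_pv (r : Option (Fin m)) (d t : ℕ) :
    R.wt (pv r d) t = 2 * (R.ee r (d + 1) t - (d + 1)) := by
  cases r <;> rfl

lemma ee_cases (r : Option (Fin m)) (d t : ℕ) : R.ee r d t = 0 ∨ R.ee r d t = 1 := by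
  unfold ee; split_ifs <;> simp

variable {R} {t : ℕ} {p q : Tk m ι}

lemma Swaps.pot_diff (h : R.Swaps t p q)
    (ho : ∀ x, x ≠ p → x ≠ q → R.wt (R.P t x) (t + 1) = R.wt (R.P t x) t) :
    R.pot (t + 1) - R.pot t =
      (R.vl p (t + 1) * R.wt (R.P t q) (t + 1) - R.vl p t * R.wt (R.P t p) t) +
      (R.vl q (t + 1) * R.wt (R.P t p) (t + 1) - R.vl q t * R.wt (R.P t q) t) := by
  unfold pot
  rw [← Finset.sum_sub_distrib, Finset.sum_eq_add p q h.ne, h.down, h.up]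
  · rintro x - ⟨hp, hq⟩
    rw [h.other x hp hq, ho x hp hq, vl_eq_of_rg h.lt (by rw [h.other x hp hq])]
    ring
  · simp
  · simp

lemma deepCount_congr {r : Option (Fin m)} {d : ℕ}
    (h : ∀ x, (R.vl x (t + 1) = 0 ∧ rg (R.P (t + 1) x) = some r ∧ d < dp R.k (R.P (t + 1) x)) ↔
      (R.vl x t = 0 ∧ rg (R.P t x) = some r ∧ d < dp R.k (R.P t x))) :
    R.deepCount r d (t + 1) = R.deepCount r d t := by
  unfold deepCount; congr 1; ext x; simp [h]

lemma ee_congr {r : Option (Fin m)} {d t t' : ℕ} (h : R.deepCount r d t = R.deepCount r d t') :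
    R.ee r d t = R.ee r d t' := by unfold ee; rw [h]

lemma wt_congr {v : Vtx m} {t t' : ℕ} (h : ∀ r d, v = pv r d → R.ee r (d + 1) t = R.ee r (d + 1) t') :
    R.wt v t = R.wt v t' := by
  rcases vtx_cases v with rfl | ⟨r, d, rfl⟩ | ⟨l, rfl⟩
  · rfl
  · rw [wt_pv, wt_pv, h r d rfl]
  · rfl

/-! ### Steps along root edges -/

lemma Swaps.top_deepCount (h : R.Swaps t p q) {r : Option (Fin m)} (hp : R.P t p = .root)
    (hq : R.P t q = pv r 0) {r' : Option (Fin m)} {d : ℕ} (hd : 1 ≤ d) :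
    R.deepCount r' d (t + 1) = R.deepCount r' d t := by
  apply deepCount_congr
  intro x
  by_cases hxp : x = p
  · subst hxp
    simp only [h.down, hp, hq, dp_pv, dp_root]
    omega
  by_cases hxq : x = q
  · subst hxq
    simp only [h.up, hp, hq, dp_pv, dp_root]
    omega
  · rw [h.other x hxp hxq, vl_eq_of_rg h.lt (by rw [h.other x hxp hxq])]

/-- The number of counter increments at a root step. -/
lemma Swaps.sg_top (h : R.Swaps t p q) {r : Option (Fin m)} (hp : R.P t p = .root)
    (hq : R.P t q = pv r 0) :
    R.sg t = 4 + (R.vl p (t + 1) - R.vl q t) * (2 * R.ee r 1 t - 4) +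
      4 * (if R.merged r t then 1 else 0) := by
  have hpot := h.pot_diff (fun x hxp hxq => wt_congr fun r' d hx =>
    ee_congr (h.top_deepCount hp hq (by omega)))
  rw [h.top_vl_up hp, vl_root h.lt.le hp, hq, wt_pv, wt_pv,
    ee_congr (h.top_deepCount hp hq (by omega) : R.deepCount r (0 + 1) (t + 1) = _)] at hpot
  have hs1 : ∑ r, (((R.out r (t + 1) : ℤ) - R.out r t) + ((R.inn r (t + 1) : ℤ) - R.inn r t)) =
      R.vl p (t + 1) - R.vl q t := by
    rw [Finset.sum_eq_single r]
    · rw [h.top_out hp hq, h.top_inn hp hq]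
      rcases h.top_vl_old hp with h1 | h1 <;> rcases h.top_vl_new hp with h2 | h2 <;>
        simp [h1, h2]
    · intro r' _ hr
      rw [h.top_out_ne hp hq hr, h.top_inn_ne hp hq hr]; ring
    · simp
  have hs2 : ∑ r', (if R.merged r' t then (1 : ℤ) else 0) = if R.merged r t then 1 else 0 := by
    rw [Finset.sum_eq_single r]
    · intro r' _ hr
      rw [if_neg]
      intro hm
      have := hm.1
      rw [h.top_out_ne hp hq hr] at this; omega
    · simp
  rw [sg, hpot, hs1, hs2]
  push_cast
  ring

lemma dp_pos {t : ℕ} {x : Tk m ι} {r : Option (Fin m)} (h : rg (R.P t x) = some r) :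
    0 < dp R.k (R.P t x) := by
  have := R.two_le_k
  rcases vtx_cases (R.P t x) with h' | ⟨r', d, h'⟩ | ⟨l, h'⟩ <;> rw [h'] at h ⊢ <;>
    simp at h ⊢; omega

lemma Swaps.top_deepCount_one (h : R.Swaps t p q) {r : Option (Fin m)}
    (hq : R.P t q = pv r 0) (hv : R.vl q t ≠ 0) :
    R.deepCount r 1 t = (R.specs r t).card := by
  unfold deepCount specs
  congr 1
  ext x
  simp only [Finset.mem_filter, Finset.mem_univ, true_and, and_congr_right_iff]
  intro h0
  refine ⟨fun h => h.1, fun hr => ⟨hr, ?_⟩⟩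
  have hk := R.two_le_k
  rcases vtx_cases (R.P t x) with h' | ⟨r', d, h'⟩ | ⟨l, h'⟩
  · rw [h'] at hr; simp at hr
  · rw [h'] at hr
    obtain rfl : r' = r := by simpa using hr
    rw [h', dp_pv]
    rcases Nat.eq_zero_or_pos d with rfl | hd
    · exact absurd h0 ((R.inj h.lt.le (h'.trans hq.symm)) ▸ hv)
    · omega
  · rw [h', dp_nook]; omega

lemma Swaps.ee_one (h : R.Swaps t p q) {r : Option (Fin m)}
    (hq : R.P t q = pv r 0) (hv : R.vl q t ≠ 0) :
    R.ee r 1 t = if R.inn r t < R.out r t then 1 else 0 := by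
  have h1 := card_specs r h.lt.le
  have h2 := R.two_le_k
  rw [ee, h.top_deepCount_one hq hv, thr]
  congr 1
  rw [if_pos (show 1 < R.k by omega)]
  split_ifs at h1 ⊢ <;> simp only [eq_iff_iff] <;> omega

lemma Swaps.sg_top_nonneg (h : R.Swaps t p q) {r : Option (Fin m)} (hp : R.P t p = .root)
    (hq : R.P t q = pv r 0) : 0 ≤ R.sg t := by
  rw [h.sg_top hp hq]
  have hm : (0 : ℤ) ≤ if R.merged r t then 1 else 0 := by split_ifs <;> simp
  rcases h.top_vl_old hp with h1 | h1
  · rcases h.top_vl_new hp with h2 | h2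
    · rcases R.ee_cases r 1 t with h3 | h3 <;> rw [h1, h2, h3] <;> linarith
    · rw [h1, h2, h.ee_one hq (by rw [h1]; simp)]
      by_cases hlt : R.inn r t < R.out r t
      · rw [if_pos hlt]; linarith
      · rw [if_neg hlt, if_pos ⟨by rw [h.top_out hp hq]; simp [h1],
          by rw [h.top_inn hp hq]; simp [h2], by omega⟩]
        norm_num
  · rcases h.top_vl_new hp with h2 | h2 <;>
    rcases R.ee_cases r 1 t with h3 | h3 <;> rw [h1, h2, h3] <;> linarith

lemma Swaps.sg_grow (h : R.Swaps t p q) {r : Option (Fin m)} (hp : R.P t p = .root)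
    (hq : R.P t q = pv r 0) (ho : R.out r t < R.out r (t + 1)) (hi : R.inn r (t + 1) = R.inn r t)
    (hlt : R.inn r t < R.out r t) : 2 ≤ R.sg t := by
  rw [h.sg_top hp hq]
  have hm : (0 : ℤ) ≤ if R.merged r t then 1 else 0 := by split_ifs <;> simp
  rw [h.top_out hp hq] at ho
  rw [h.top_inn hp hq] at hi
  have h1 : R.vl q t = -1 := by
    by_contra h1
    simp [h1] at ho
  have h2 : R.vl p (t + 1) = 0 := by
    rcases h.top_vl_new hp with h2 | h2
    · exact h2
    · simp [h2] at hi
  rw [h.ee_one hq (by rw [h1]; simp), if_pos hlt, h1, h2]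
  linarith

/-! ### Steps along nook edges -/

lemma Swaps.sg_same_region (h : R.Swaps t p q) (hr : rg (R.P t p) = rg (R.P t q)) :
    R.sg t = 4 + (R.pot (t + 1) - R.pot t) := by
  obtain ⟨h1, h2, -, -⟩ := h.counters_eq hr
  have hM : ∀ r, ¬R.merged r t := fun r hm => by have := hm.1; rw [h1] at this; omega
  simp [sg, h1, h2, hM]

lemma Swaps.sg_side (h : R.Swaps t p q) {l : Fin m} (hp : R.P t p = pv (some l) (R.k - 1))
    (hq : R.P t q = .nook l) : 2 ≤ R.sg t := by
  have hk := R.two_le_k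
  have hr : rg (R.P t p) = rg (R.P t q) := by rw [hp, hq]; simp
  have hc : ∀ r d, R.deepCount r d (t + 1) = R.deepCount r d t := by
    intro r d
    apply deepCount_congr
    intro x
    rw [h.vl_eq hr, h.rg_eq hr]
    by_cases hxp : x = p
    · subst hxp; rw [h.down, hp, hq, dp_pv, dp_nook, Nat.sub_add_cancel (by omega)]
    by_cases hxq : x = q
    · subst hxq; rw [h.up, hp, hq, dp_pv, dp_nook, Nat.sub_add_cancel (by omega)]
    rw [h.other x hxp hxq]
  rw [h.sg_same_region hr, h.pot_diff (fun x _ _ => wt_congr fun r d _ => ee_congr (hc _ _)),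
    hp, hq, wt_pv, wt_pv, h.vl_eq hr, h.vl_eq hr, ee_congr (hc _ _)]
  have : ((R.k - 1 : ℕ) : ℤ) = R.k - 1 := by push_cast [Nat.cast_sub (show 1 ≤ R.k by omega)]; ring
  simp only [wt, this]
  rcases R.ee_cases (some l) (R.k - 1 + 1) t with h3 | h3 <;>
    rcases R.vl_cases p t with h1 | h1 | h1 <;> rcases R.vl_cases q t with h2 | h2 | h2 <;>
    rw [h1, h2, h3] <;> linarith

/-! ### Steps along path edges -/

section Path
variable {r : Option (Fin m)} {d : ℕ}

lemma Swaps.path_deepCount (h : R.Swaps t p q) (hp : R.P t p = pv r d)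
    (hq : R.P t q = pv r (d + 1)) {r' : Option (Fin m)} {D : ℕ} (hne : ¬(r' = r ∧ D = d + 1)) :
    R.deepCount r' D (t + 1) = R.deepCount r' D t := by
  have hr : rg (R.P t p) = rg (R.P t q) := by rw [hp, hq]; simp
  apply deepCount_congr
  intro x
  rw [h.vl_eq hr, h.rg_eq hr]
  simp only [and_congr_right_iff]
  intro _ hx
  by_cases hxp : x = p
  · subst hxp
    rw [hp] at hx
    obtain rfl : r = r' := by simpa using hx
    rw [h.down, hp, hq, dp_pv, dp_pv]
    simp only [true_and] at hne; omega
  by_cases hxq : x = q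
  · subst hxq
    rw [hq] at hx
    obtain rfl : r = r' := by simpa using hx
    rw [h.up, hp, hq, dp_pv, dp_pv]
    simp only [true_and] at hne; omega
  rw [h.other x hxp hxq]

lemma Swaps.path_deepCount_eq (h : R.Swaps t p q) (hp : R.P t p = pv r d)
    (hq : R.P t q = pv r (d + 1)) (hv : R.vl p t = 0 ↔ R.vl q t = 0) (r' : Option (Fin m)) (D : ℕ) :
    R.deepCount r' D (t + 1) = R.deepCount r' D t := by
  have hr : rg (R.P t p) = rg (R.P t q) := by rw [hp, hq]; simp
  refine Finset.card_equiv (Equiv.swap p q) fun x => ?_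
  simp only [Finset.mem_filter, Finset.mem_univ, true_and]
  rw [h.vl_eq hr]
  by_cases hxp : x = p
  · subst hxp
    rw [Equiv.swap_apply_left, h.down, hv]
  by_cases hxq : x = q
  · subst hxq
    rw [Equiv.swap_apply_right, h.up, hv]
  rw [Equiv.swap_apply_of_ne_of_ne hxp hxq, h.other x hxp hxq]

lemma Swaps.sg_path (h : R.Swaps t p q) (hp : R.P t p = pv r d) (hq : R.P t q = pv r (d + 1)) :
    R.sg t = 4 + 2 * (R.vl p t * (R.ee r (d + 2) t - 1 - R.ee r (d + 1) t) +
      R.vl q t * (R.ee r (d + 1) (t + 1) + 1 - R.ee r (d + 2) t)) := by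
  have hr : rg (R.P t p) = rg (R.P t q) := by rw [hp, hq]; simp
  rw [h.sg_same_region hr, h.pot_diff, h.vl_eq hr, h.vl_eq hr, hp, hq, wt_pv, wt_pv, wt_pv, wt_pv,
    ee_congr (h.path_deepCount hp hq (r' := r) (D := d + 1 + 1) (by omega))]
  · push_cast; ring
  · intro x hxp hxq
    refine wt_congr fun r' D hx => ee_congr (h.path_deepCount hp hq ?_)
    rintro ⟨rfl, hD⟩
    obtain rfl : D = d := by omega
    exact hxp (R.inj h.lt.le (hx.trans hp.symm))

lemma Swaps.sg_path_eq (h : R.Swaps t p q) (hp : R.P t p = pv r d) (hq : R.P t q = pv r (d + 1))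
    (hv : R.vl p t = R.vl q t) : R.sg t = 4 := by
  rw [h.sg_path hp hq, ee_congr (h.path_deepCount_eq hp hq (by rw [hv]) r (d + 1)), hv]
  ring

lemma Swaps.sg_path_wrong (h : R.Swaps t p q) (hp : R.P t p = pv r d)
    (hq : R.P t q = pv r (d + 1)) (hv : R.vl p t = -1 ∨ R.vl q t = 1) : 4 ≤ R.sg t := by
  rw [h.sg_path hp hq]
  by_cases heq : R.vl p t = R.vl q t
  · rw [ee_congr (h.path_deepCount_eq hp hq (by rw [heq]) r (d + 1)), heq]
    linarith
  have h3 := R.ee_cases r (d + 1) t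
  have h4 := R.ee_cases r (d + 1) (t + 1)
  have h5 := R.ee_cases r (d + 2) t
  rcases R.vl_cases p t with h1 | h1 | h1 <;> rcases R.vl_cases q t with h2 | h2 | h2 <;>
    rw [h1, h2] at hv heq ⊢ <;> omega

lemma Swaps.ee_path_le (h : R.Swaps t p q) (hq : R.P t q = pv r (d + 1)) (hv : R.vl q t ≠ 0) :
    R.ee r (d + 1) t ≤ R.ee r (d + 2) t := by
  obtain ⟨y, hy⟩ : ∃ y, ∀ l, r = some l → R.P t y = .nook l := by
    cases r with
    | none => exact ⟨q, by simp⟩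
    | some l =>
      obtain ⟨y, hy⟩ := R.exists_at h.lt.le (v := .nook l) trivial
      exact ⟨y, by simp [hy]⟩
  have key : ∀ x, R.vl x t = 0 → rg (R.P t x) = some r → d + 1 < dp R.k (R.P t x) →
      d + 2 < dp R.k (R.P t x) ∨ (r ≠ none ∧ R.k = d + 2 ∧ x = y) := by
    intro x h0 hxr hd
    rcases vtx_cases (R.P t x) with h' | ⟨r', d', h'⟩ | ⟨l, h'⟩
    · rw [h'] at hxr; simp at hxr
    · rw [h'] at hxr hd ⊢
      obtain rfl : r' = r := by simpa using hxr
      rw [dp_pv] at hd ⊢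
      by_cases hdd : d' = d + 1
      · subst hdd
        exact absurd h0 ((R.inj h.lt.le (h'.trans hq.symm)) ▸ hv)
      · left; omega
    · rw [h'] at hxr hd ⊢
      obtain rfl : some l = r := by simpa using hxr
      rw [dp_nook] at hd ⊢
      by_cases hk : R.k = d + 2
      · exact Or.inr ⟨by simp, hk, R.inj h.lt.le (h'.trans (hy l rfl).symm)⟩
      · left; omega
  unfold ee
  by_cases hc : r ≠ none ∧ R.k = d + 2
  · have hle : R.deepCount r (d + 1) t ≤ R.deepCount r (d + 2) t + 1 := by
      refine (Finset.card_le_card fun x hx => ?_).trans (Finset.card_insert_le y _)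
      simp only [Finset.mem_filter, Finset.mem_univ, true_and, Finset.mem_insert] at hx ⊢
      rcases key x hx.1 hx.2.1 hx.2.2 with h1 | h1
      · exact Or.inr ⟨hx.1, hx.2.1, h1⟩
      · exact Or.inl h1.2.2
    have t1 : R.thr r (d + 1) = 2 := by simp [thr, hc]
    have t2 : R.thr r (d + 2) = 1 := by simp [thr, hc]
    rw [t1, t2]
    split_ifs <;> omega
  · have hle : R.deepCount r (d + 1) t ≤ R.deepCount r (d + 2) t := by
      refine Finset.card_le_card fun x hx => ?_
      simp only [Finset.mem_filter, Finset.mem_univ, true_and] at hx ⊢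
      rcases key x hx.1 hx.2.1 hx.2.2 with h1 | h1
      · exact ⟨hx.1, hx.2.1, h1⟩
      · exact absurd ⟨h1.1, h1.2.1⟩ hc
    have t1 : R.thr r (d + 2) ≤ R.thr r (d + 1) := by
      unfold thr; split_ifs <;> omega
    split_ifs <;> omega

lemma Swaps.sg_path_nonneg (h : R.Swaps t p q) (hp : R.P t p = pv r d)
    (hq : R.P t q = pv r (d + 1)) : 0 ≤ R.sg t := by
  by_cases hw : R.vl p t = -1 ∨ R.vl q t = 1
  · linarith [h.sg_path_wrong hp hq hw]
  rw [not_or] at hw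
  rw [h.sg_path hp hq]
  by_cases hreg : R.vl p t = 1 ∧ R.vl q t = -1
  · have h1 := h.ee_path_le hq (by rw [hreg.2]; simp)
    rw [ee_congr (h.path_deepCount_eq hp hq (by rw [hreg.1, hreg.2]; simp) r (d + 1)), hreg.1,
      hreg.2]
    linarith
  · have h3 := R.ee_cases r (d + 1) t
    have h4 := R.ee_cases r (d + 1) (t + 1)
    have h5 := R.ee_cases r (d + 2) t
    rcases R.vl_cases p t with h1 | h1 | h1 <;> rcases R.vl_cases q t with h2 | h2 | h2 <;>
      rw [h1, h2] at hreg hw ⊢ <;> omega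

/-- Lifting the only deep token in transit of a slot costs slack. -/
lemma Swaps.sg_path_lone (h : R.Swaps t p q) (hp : R.P t p = pv r d)
    (hq : R.P t q = pv r (d + 1)) (hr : r ≠ none) (hd : d + 1 < R.k) (hv : R.vl q t = 0)
    (hS : R.deepCount r (d + 1) t ≤ 1) : 2 ≤ R.sg t := by
  have h1 : R.ee r (d + 1) t = 0 := by
    rw [ee, if_neg]
    simp only [thr, hr, if_false, if_pos hd]; omega
  have hlt : R.deepCount r (d + 2) t < R.deepCount r (d + 1) t := by
    refine Finset.card_lt_card ⟨fun x hx => ?_, fun hsub => ?_⟩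
    · simp only [Finset.mem_filter, Finset.mem_univ, true_and] at hx ⊢
      exact ⟨hx.1, hx.2.1, by omega⟩
    · have : q ∈ Finset.univ.filter fun x =>
          R.vl x t = 0 ∧ rg (R.P t x) = some r ∧ d + 1 < dp R.k (R.P t x) := by
        simp [hv, hq]
      have := hsub this
      simp [hq] at this
  have h2 : R.ee r (d + 2) t = 0 := by
    rw [ee, if_neg]
    have : 1 ≤ R.thr r (d + 2) := by unfold thr; split_ifs <;> omega
    omega
  rw [h.sg_path hp hq, h1, h2, hv]
  rcases R.vl_cases p t with h3 | h3 | h3 <;> rw [h3] <;> norm_num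

end Path

lemma sg_nonneg (ht : t < R.N) : 0 ≤ R.sg t := by
  obtain ⟨p, q, h⟩ := R.exists_swaps ht
  rcases h.cases with ⟨r', hp, hq⟩ | ⟨r', d, hp, hq⟩ | ⟨l, hp, hq⟩
  · exact h.sg_top_nonneg hp hq
  · exact h.sg_path_nonneg hp hq
  · linarith [h.sg_side hp hq]

end Run

lemma Edge.asymm {m k : ℕ} {u v : Vtx m} (h : Edge k u v) : ¬Edge k v u := by
  intro h'
  have key : ∀ {u v : Vtx m}, Edge k u v →
      (dp k u < dp k v) ∨ (∃ r d, u = pv r d) ∧ ∃ l, v = .nook l := by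
    intro u v h
    cases h with
    | top r => left; simp
    | path r d => left; simp
    | side l => exact Or.inr ⟨⟨_, _, rfl⟩, _, rfl⟩
  have key2 : ∀ {u v : Vtx m}, Edge k u v → dp k u ≤ dp k v ∨ ∃ l, v = .nook l := fun h =>
    (key h).imp le_of_lt (fun h => h.2)
  rcases key h with h1 | ⟨-, l, rfl⟩
  · rcases key2 h' with h2 | ⟨l, rfl⟩
    · omega
    · generalize hu : (Vtx.nook l : Vtx m) = w at h
      cases h with
      | top r => cases hu
      | path r d => exact pv_ne_nook _ _ _ hu.symm
      | side l' => exact pv_ne_nook _ _ _ hu.symm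
  · generalize hu : (Vtx.nook l : Vtx m) = w at h'
    cases h' with
    | top r => cases hu
    | path r d => exact pv_ne_nook _ _ _ hu.symm
    | side l' => exact pv_ne_nook _ _ _ hu.symm

namespace Run

variable {m : ℕ} {ι : Type} [Fintype ι] {R : Run m ι} {t : ℕ}

lemma Swaps.unique {p q p' q' : Tk m ι} (h : R.Swaps t p q) (h' : R.Swaps t p' q') :
    p = p' ∧ q = q' := by
  have hmove : ∀ {p q : Tk m ι}, R.Swaps t p q → R.P (t + 1) p ≠ R.P t p :=
    fun h he => h.ne (R.inj h.lt.le (he.symm.trans h.down))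
  by_cases hp : p = p'
  · subst hp
    exact ⟨rfl, R.inj h.lt.le (h.down.symm.trans h'.down)⟩
  · by_cases hq : p = q'
    · subst hq
      have : q = p' := R.inj h.lt.le (h.down.symm.trans h'.up)
      subst this
      exact absurd h'.edge h.edge.asymm
    · exact absurd (h'.other p hp hq) (hmove h)

variable (R)

/-- At step `t` two tokens that have not yet left the ordering gadget exchange their places,
`b` moving away from the root. -/
def XSwap (t : ℕ) (b c : ι) : Prop :=
  R.Swaps t (.inr (.inl b)) (.inr (.inl c)) ∧ R.reg1 (.inl b) t ∧ R.reg1 (.inl c) t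

/-- The rank of `b` in the order in which the tokens currently queue to leave the ordering
gadget. -/
noncomputable def rank (b : ι) (t : ℕ) : ℕ :=
  R.out none t + (Finset.univ.filter fun b' => R.reg1 (.inl b') t ∧
    dp R.k (R.P t (.inr (.inl b'))) < dp R.k (R.P t (.inr (.inl b)))).card

/-- The number of tokens of slot `l` among the first `a` positions. -/
noncomputable def cc (l : Fin m) (a : ℕ) : ℕ :=
  (Finset.univ.filter fun b => R.sl b = l ∧ R.pos b < a).card

/-- The steps at which tokens of different slots exchange the ranks `a - 1` and `a`. -/
noncomputable def cutX (a : ℕ) : Finset ℕ :=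
  (Finset.range R.N).filter fun t => ∃ b b', R.XSwap t b b' ∧ R.sl b ≠ R.sl b' ∧ R.rank b t + 1 = a

variable {R}

lemma XSwap.unique {b b' c c' : ι} (h : R.XSwap t b b') (h' : R.XSwap t c c') :
    b = c ∧ b' = c' := by
  have := h.1.unique h'.1
  simpa using this

lemma reg1_inl_pos {b : ι} (ht : R.reg1 (.inl b) t) : ∃ d, R.P t (.inr (.inl b)) = pv none d := by
  have h := ht.rg
  rcases vtx_cases (R.P t (.inr (.inl b))) with h' | ⟨r', d, h'⟩ | ⟨l, h'⟩
  · rw [h'] at h; simp at h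
  · rw [h'] at h ⊢
    obtain rfl : r' = none := by simpa [home] using h
    exact ⟨d, rfl⟩
  · rw [h'] at h; simp [home] at h

lemma XSwap.pos {b b' : ι} (h : R.XSwap t b b') :
    ∃ d, R.P t (.inr (.inl b)) = pv none d ∧ R.P t (.inr (.inl b')) = pv none (d + 1) := by
  obtain ⟨hs, h1, h2⟩ := h
  obtain ⟨d, e⟩ := reg1_inl_pos h1
  obtain ⟨d', e'⟩ := reg1_inl_pos h2
  rcases hs.cases with ⟨r, hp, hq⟩ | ⟨r, d₀, hp, hq⟩ | ⟨l, hp, hq⟩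
  · rw [e] at hp; exact absurd hp (pv_ne_root _ _)
  · rw [e] at hp
    obtain ⟨rfl, rfl⟩ := pv_inj hp
    exact ⟨d, e, hq⟩
  · rw [e'] at hq; exact absurd hq (pv_ne_nook _ _ _)

/-- A single step does not change the relative order of two tokens waiting in the ordering gadget
unless it exchanges them. -/
lemma order_succ {b b' : ι} (ht : t < R.N) (h : R.reg1 (.inl b) (t + 1))
    (h' : R.reg1 (.inl b') (t + 1)) (hn : ¬R.XSwap t b b') (hn' : ¬R.XSwap t b' b) :
    dp R.k (R.P (t + 1) (.inr (.inl b))) < dp R.k (R.P (t + 1) (.inr (.inl b'))) ↔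
      dp R.k (R.P t (.inr (.inl b))) < dp R.k (R.P t (.inr (.inl b'))) := by
  by_cases hbb : b = b'
  · subst hbb; simp
  have g := reg1_mono h (Nat.le_succ t)
  have g' := reg1_mono h' (Nat.le_succ t)
  obtain ⟨d, e⟩ := reg1_inl_pos g
  obtain ⟨d', e'⟩ := reg1_inl_pos g'
  obtain ⟨c, f⟩ := reg1_inl_pos h
  obtain ⟨c', f'⟩ := reg1_inl_pos h'
  have hd : d ≠ d' := by
    rintro rfl
    exact hbb (by simpa using R.inj ht.le (e.trans e'.symm))
  have hc : c ≠ c' := by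
    rintro rfl
    exact hbb (by simpa using R.inj ht (f.trans f'.symm))
  obtain ⟨p, q, hs⟩ := R.exists_swaps ht
  have hstep : ∀ {b d c}, R.P t (.inr (.inl b)) = pv none d →
      R.P (t + 1) (.inr (.inl b)) = pv none c →
      (Sum.inr (Sum.inl b) = p ∧ c = d + 1) ∨ (Sum.inr (Sum.inl b) = q ∧ d = c + 1) ∨
      (c = d ∧ Sum.inr (Sum.inl b) ≠ p ∧ Sum.inr (Sum.inl b) ≠ q) := by
    intro b d c e f
    by_cases hp : Sum.inr (Sum.inl b) = p
    · left
      refine ⟨hp, ?_⟩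
      subst hp
      rcases hs.cases with ⟨r, hp, hq⟩ | ⟨r, d₀, hp, hq⟩ | ⟨l, hp, hq⟩
      · rw [e] at hp; exact absurd hp (pv_ne_root _ _)
      · rw [hs.down, hq] at f; rw [e] at hp
        have := (pv_inj f).2; have := (pv_inj hp).2; omega
      · rw [e] at hp; have := (pv_inj hp).1; simp at this
    by_cases hq : Sum.inr (Sum.inl b) = q
    · right; left
      refine ⟨hq, ?_⟩
      subst hq
      rcases hs.cases with ⟨r, hp, hq⟩ | ⟨r, d₀, hp, hq⟩ | ⟨l, hp, hq⟩
      · rw [hs.up, hp] at f; exact absurd f.symm (pv_ne_root _ _)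
      · rw [hs.up, hp] at f; rw [e] at hq
        have := (pv_inj f).2; have := (pv_inj hq).2; omega
      · rw [e] at hq; exact absurd hq (pv_ne_nook _ _ _)
    · right; right
      rw [hs.other _ hp hq, e] at f
      exact ⟨(pv_inj f).2.symm, hp, hq⟩
  rw [e, e', f, f', dp_pv, dp_pv, dp_pv, dp_pv]
  rcases hstep e f with ⟨hp, _⟩ | ⟨hq, _⟩ | ⟨_, hp, hq⟩ <;>
    rcases hstep e' f' with ⟨hp', _⟩ | ⟨hq', _⟩ | ⟨_, hp', hq'⟩
  · exact absurd (hp.trans hp'.symm) (by simpa using hbb)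
  · exact absurd ⟨by rw [hp, hq']; exact hs, g, g'⟩ hn
  · omega
  · exact absurd ⟨by rw [hp', hq]; exact hs, g', g⟩ hn'
  · exact absurd (hq.trans hq'.symm) (by simpa using hbb)
  · omega
  · omega
  · omega
  · omega

lemma rank_succ {b : ι} (ht : t < R.N) (h : R.reg1 (.inl b) (t + 1))
    (hn : ∀ b', ¬R.XSwap t b b' ∧ ¬R.XSwap t b' b) : R.rank b (t + 1) = R.rank b t := by
  unfold rank
  obtain ⟨p, q, hs⟩ := R.exists_swaps ht
  have hord : ∀ b', R.reg1 (.inl b') (t + 1) → (dp R.k (R.P (t + 1) (.inr (.inl b'))) <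
      dp R.k (R.P (t + 1) (.inr (.inl b))) ↔ dp R.k (R.P t (.inr (.inl b'))) <
      dp R.k (R.P t (.inr (.inl b)))) :=
    fun b' h' => order_succ ht h' h (hn b').2 (hn b').1
  have hsame : R.out none (t + 1) = R.out none t →
      (∀ b', R.reg1 (.inl b') (t + 1) ↔ R.reg1 (.inl b') t) →
      R.out none (t + 1) + (Finset.univ.filter fun b' => R.reg1 (.inl b') (t + 1) ∧
        dp R.k (R.P (t + 1) (.inr (.inl b'))) < dp R.k (R.P (t + 1) (.inr (.inl b)))).card =
      R.out none t + (Finset.univ.filter fun b' => R.reg1 (.inl b') t ∧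
        dp R.k (R.P t (.inr (.inl b'))) < dp R.k (R.P t (.inr (.inl b)))).card := by
    intro h1 h2
    rw [h1]
    congr 2
    ext b'
    simp only [Finset.mem_filter, Finset.mem_univ, true_and]
    constructor
    · rintro ⟨h3, h4⟩; exact ⟨(h2 b').1 h3, (hord b' h3).1 h4⟩
    · rintro ⟨h3, h4⟩; exact ⟨(h2 b').2 h3, (hord b' ((h2 b').2 h3)).2 h4⟩
  have hreg : rg (R.P t p) = rg (R.P t q) → ∀ b', R.reg1 (.inl b') (t + 1) ↔ R.reg1 (.inl b') t :=
    fun hr b' => reg1_iff_of_rg (hs.rg_eq hr _)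
  rcases hs.cases with ⟨r, hp, hq⟩ | ⟨r, d₀, hp, hq⟩ | ⟨l, hp, hq⟩
  · by_cases hdep : ∃ b₀, q = .inr (.inl b₀) ∧ R.reg1 (.inl b₀) t
    · obtain ⟨b₀, rfl, h0⟩ := hdep
      have hr : r = none := by
        have := h0.rg; rw [hq] at this; simpa [home] using this
      subst hr
      rw [hs.top_out hp hq, if_pos (vl_inr_neg.2 h0)]
      have hne : b ≠ b₀ := by
        rintro rfl
        exact ((hs.top_reg1 hp _).1 h).2 rfl
      rw [card_filter_insert (p' := fun b' => R.reg1 (.inl b') t ∧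
        dp R.k (R.P t (.inr (.inl b'))) < dp R.k (R.P t (.inr (.inl b)))) (a₀ := b₀)
        (p := fun b' => R.reg1 (.inl b') (t + 1) ∧ dp R.k (R.P (t + 1) (.inr (.inl b'))) <
          dp R.k (R.P (t + 1) (.inr (.inl b))))]
      · ring
      · intro b'
        by_cases hb' : b' = b₀
        · subst hb'
          simp only [h0, true_and, or_true, iff_true]
          obtain ⟨d, e⟩ := reg1_inl_pos (reg1_mono h (Nat.le_succ t))
          rw [e, hq, dp_pv, dp_pv]
          have : d ≠ 0 := by
            rintro rfl
            exact hne (by simpa using R.inj ht.le (e.trans hq.symm))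
          omega
        · have h2 : R.reg1 (.inl b') (t + 1) ↔ R.reg1 (.inl b') t := by
            rw [hs.top_reg1 hp]; simp [hb']
          simp only [hb', or_false, ← h2]
          exact ⟨fun h3 => ⟨h3.1, (hord b' h3.1).2 h3.2⟩, fun h3 => ⟨h3.1, (hord b' h3.1).1 h3.2⟩⟩
      · intro h3
        exact ((hs.top_reg1 hp _).1 h3.1).2 rfl
    · have h2 : ∀ b', R.reg1 (.inl b') (t + 1) ↔ R.reg1 (.inl b') t := by
        intro b'
        rw [hs.top_reg1 hp]
        exact ⟨fun h => h.1, fun h => ⟨h, fun he => hdep ⟨b', he.symm, h⟩⟩⟩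
      refine hsame ?_ h2
      rw [out_none, out_none]
      simp only [h2]
  · exact hsame ((hs.counters_eq (by rw [hp, hq]; simp)).1 _) (hreg (by rw [hp, hq]; simp))
  · exact hsame ((hs.counters_eq (by rw [hp, hq]; simp)).1 _) (hreg (by rw [hp, hq]; simp))

lemma XSwap.reg1_iff {b b' : ι} (h : R.XSwap t b b') (a : ι ⊕ ι) :
    R.reg1 a (t + 1) ↔ R.reg1 a t := by
  obtain ⟨d, hp, hq⟩ := h.pos
  exact reg1_iff_of_rg (h.1.rg_eq (by rw [hp, hq]; simp) _)

lemma XSwap.rank_lower {b b' : ι} (h : R.XSwap t b b') : R.rank b' t = R.rank b t + 1 := by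
  obtain ⟨d, hp, hq⟩ := h.pos
  unfold rank
  rw [card_filter_insert (a₀ := b) (p' := fun c => R.reg1 (.inl c) t ∧
        dp R.k (R.P t (.inr (.inl c))) < dp R.k (R.P t (.inr (.inl b'))))
        (p := fun c => R.reg1 (.inl c) t ∧
        dp R.k (R.P t (.inr (.inl c))) < dp R.k (R.P t (.inr (.inl b))))]
  · ring
  · intro c
    by_cases hc : c = b
    · subst hc; simp [h.2.1, hp, hq]
    · simp only [hc, or_false, and_congr_right_iff]
      intro h1
      obtain ⟨d', e⟩ := reg1_inl_pos h1
      rw [e, hp, hq, dp_pv, dp_pv, dp_pv]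
      have : d' ≠ d := by
        rintro rfl
        exact hc (by simpa using R.inj h.1.lt.le (e.trans hp.symm))
      omega
  · simp

lemma XSwap.rank_succ {b b' : ι} (h : R.XSwap t b b') :
    R.rank b (t + 1) = R.rank b t + 1 ∧ R.rank b' (t + 1) = R.rank b t := by
  obtain ⟨d, hp, hq⟩ := h.pos
  have hr : rg (R.P t (.inr (.inl b))) = rg (R.P t (.inr (.inl b'))) := by rw [hp, hq]; simp
  have hbb : b ≠ b' := fun he => h.1.ne (by rw [he])
  have ho := (h.1.counters_eq hr).1 none
  have key : R.rank b' (t + 1) = R.rank b t := by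
    unfold rank
    rw [ho, h.1.up, hp]
    congr 2
    ext c
    simp only [Finset.mem_filter, Finset.mem_univ, true_and, h.reg1_iff, and_congr_right_iff]
    intro h1
    by_cases hc : c = b
    · subst hc; rw [h.1.down, hp, hq]; simp
    by_cases hc' : c = b'
    · subst hc'; rw [h.1.up, hp, hq]; simp
    rw [h.1.other _ (by simpa using hc) (by simpa using hc')]
  refine ⟨?_, key⟩
  have : R.rank b (t + 1) = R.rank b' t := by
    unfold rank
    rw [ho, h.1.down, hq]
    rw [show (Finset.univ.filter fun c => R.reg1 (.inl c) (t + 1) ∧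
        dp R.k (R.P (t + 1) (.inr (.inl c))) < dp R.k (pv none (d + 1) : Vtx m)) =
      (Finset.univ.filter fun c => R.reg1 (.inl c) t ∧
        dp R.k (R.P t (.inr (.inl c))) < dp R.k (pv none (d + 1) : Vtx m)).image
        (Equiv.swap b b') from ?_]
    · rw [Finset.card_image_of_injective _ (Equiv.injective _)]
    · ext c
      simp only [Finset.mem_filter, Finset.mem_univ, true_and, h.reg1_iff, Finset.mem_image]
      constructor
      · rintro ⟨h1, h2⟩
        refine ⟨Equiv.swap b b' c, ?_, by simp⟩
        by_cases hc : c = b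
        · subst hc; rw [h.1.down, hq] at h2; simp at h2
        by_cases hc' : c = b'
        · subst hc'; rw [Equiv.swap_apply_right, hp]; simp [h.2.1]
        rw [Equiv.swap_apply_of_ne_of_ne hc hc']
        rw [h.1.other _ (by simpa using hc) (by simpa using hc')] at h2
        exact ⟨h1, h2⟩
      · rintro ⟨c, ⟨h1, h2⟩, rfl⟩
        by_cases hc : c = b
        · subst hc; rw [Equiv.swap_apply_left, h.1.up, hp]; simp [h.2.2]
        by_cases hc' : c = b'
        · subst hc'; rw [hq] at h2; simp at h2
        rw [Equiv.swap_apply_of_ne_of_ne hc hc',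
          h.1.other _ (by simpa using hc) (by simpa using hc')]
        exact ⟨h1, h2⟩
  rw [this, h.rank_lower]

lemma rank_zero (b : ι) : R.rank b 0 = R.pos b := by
  unfold rank
  simp only [R.out_zero, R.reg1_zero, R.init_X, true_and, dp, zero_add]
  have : (Finset.univ.filter fun b' => R.pos b' + 1 < R.pos b + 1).image R.pos =
      Finset.range (R.pos b) := by
    ext d
    simp only [Finset.mem_image, Finset.mem_filter, Finset.mem_univ, true_and, Finset.mem_range]
    constructor
    · rintro ⟨b', h, rfl⟩; omega
    · intro h
      obtain ⟨b', rfl⟩ := R.pos_surj (h.trans (R.pos_lt b))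
      exact ⟨b', by omega, rfl⟩
  rw [← Finset.card_image_of_injective _ R.pos_inj, this, Finset.card_range]

end Run

namespace Run

variable {m : ℕ} {ι : Type} [Fintype ι] (R : Run m ι)

/-- The tokens of slot `l` that have left the ordering gadget or have rank below `a`. -/
noncomputable def queue (a : ℕ) (l : Fin m) (t : ℕ) : Finset ι :=
  Finset.univ.filter fun b => R.sl b = l ∧ (¬R.reg1 (.inl b) t ∨ R.rank b t < a)

variable {R} {t : ℕ}

lemma queue_zero (a : ℕ) (l : Fin m) : (R.queue a l 0).card = R.cc l a := by
  simp [queue, cc, R.reg1_zero, rank_zero]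

lemma queue_of_out (l : Fin m) : (R.queue (R.out none t) l t).card = R.lamX l t := by
  unfold queue lamX
  congr 1
  ext b
  have : ¬R.rank b t < R.out none t := by unfold rank; omega
  simp [this]

lemma rank_of_leave {b : ι} (ht : t < R.N) (h : R.reg1 (.inl b) t) (h' : ¬R.reg1 (.inl b) (t + 1)) :
    R.rank b t = R.out none t ∧ R.out none (t + 1) = R.out none t + 1 := by
  obtain ⟨p, q, hs⟩ := R.exists_swaps ht
  rcases hs.cases with ⟨r, hp, hq⟩ | ⟨r, d₀, hp, hq⟩ | ⟨l, hp, hq⟩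
  · rw [hs.top_reg1 hp] at h'
    have hqb : Sum.inr (Sum.inl b) = q := by by_contra hc; exact h' ⟨h, hc⟩
    subst hqb
    have hr : r = none := by
      have := h.rg; rw [hq] at this; simpa [home] using this
    subst hr
    rw [hs.top_out hp hq, if_pos (vl_inr_neg.2 h)]
    refine ⟨?_, rfl⟩
    simp only [rank, hq, dp_pv, Nat.add_eq_left, Finset.card_eq_zero, Finset.filter_eq_empty_iff]
    rintro b' - ⟨h1, h2⟩
    have := dp_pos h1.rg
    omega
  · exact absurd ((reg1_iff_of_rg (hs.rg_eq (by rw [hp, hq]; simp) _)).2 h) h'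
  · exact absurd ((reg1_iff_of_rg (hs.rg_eq (by rw [hp, hq]; simp) _)).2 h) h'

lemma queue_mem_iff {a : ℕ} {b : ι} (ht : t < R.N) (ha : R.out none (t + 1) ≤ a)
    (hn : ∀ b', ¬(R.XSwap t b b' ∧ R.rank b t + 1 = a) ∧ ¬(R.XSwap t b' b ∧ R.rank b' t + 1 = a)) :
    (¬R.reg1 (.inl b) (t + 1) ∨ R.rank b (t + 1) < a) ↔ (¬R.reg1 (.inl b) t ∨ R.rank b t < a) := by
  by_cases h1 : R.reg1 (.inl b) (t + 1)
  · have h0 := reg1_mono h1 (Nat.le_succ t)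
    simp only [h1, h0, not_true_eq_false, false_or]
    by_cases hu : ∃ b', R.XSwap t b b'
    · obtain ⟨b', hb⟩ := hu
      have := hb.rank_succ
      have := (hn b').1
      simp only [hb, true_and] at this
      omega
    by_cases hl : ∃ b', R.XSwap t b' b
    · obtain ⟨b', hb⟩ := hl
      have := hb.rank_succ
      have := hb.rank_lower
      have := (hn b').2
      simp only [hb, true_and] at this
      omega
    · rw [Run.rank_succ ht h1 fun b' => ⟨fun h => hu ⟨b', h⟩, fun h => hl ⟨b', h⟩⟩]
  · simp only [h1, not_false_eq_true, true_or, true_iff]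
    by_cases h0 : R.reg1 (.inl b) t
    · have := rank_of_leave ht h0 h1
      right; omega
    · exact Or.inl h0

lemma queue_succ_eq {a : ℕ} {l : Fin m} (ht : t < R.N) (ha : R.out none (t + 1) ≤ a)
    (hn : t ∉ R.cutX a) : (R.queue a l (t + 1)).card = (R.queue a l t).card := by
  by_cases hx : ∃ b b', R.XSwap t b b' ∧ R.rank b t + 1 = a
  · obtain ⟨b, b', hX, hr⟩ := hx
    have hsl : R.sl b = R.sl b' := by
      by_contra hc
      exact hn (by simp only [cutX, Finset.mem_filter, Finset.mem_range]; exact ⟨ht, b, b', hX, hc, hr⟩)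
    refine Finset.card_equiv (Equiv.swap b b') fun c => ?_
    simp only [queue, Finset.mem_filter, Finset.mem_univ, true_and, hX.reg1_iff]
    have h1 := hX.rank_succ
    have h2 := hX.rank_lower
    by_cases hc : c = b
    · subst hc
      rw [Equiv.swap_apply_left, hsl]
      simp only [hX.2.1, hX.2.2, not_true_eq_false, false_or]
      rw [h1.1, h2]
    by_cases hc' : c = b'
    · subst hc'
      rw [Equiv.swap_apply_right, hsl]
      simp only [hX.2.1, hX.2.2, not_true_eq_false, false_or]
      rw [h1.2]
    rw [Equiv.swap_apply_of_ne_of_ne hc hc', ← queue_mem_iff ht ha, hX.reg1_iff]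
    intro d
    exact ⟨fun h => hc (h.1.unique hX).1, fun h => hc' (h.1.unique hX).2⟩
  · unfold queue
    congr 1
    ext c
    simp only [Finset.mem_filter, Finset.mem_univ, true_and, and_congr_right_iff]
    intro _
    exact queue_mem_iff ht ha fun d => ⟨fun h => hx ⟨_, _, h⟩, fun h => hx ⟨_, _, h⟩⟩

lemma queue_succ_le {a : ℕ} {l : Fin m} (ht : t < R.N) (ha : R.out none (t + 1) ≤ a)
    (hn : t ∈ R.cutX a) : (R.queue a l (t + 1)).card ≤ (R.queue a l t).card + 1 ∧
      (R.queue a l t).card ≤ (R.queue a l (t + 1)).card + 1 := by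
  simp only [cutX, Finset.mem_filter] at hn
  obtain ⟨-, b, b', hX, hsl, hr⟩ := hn
  have hoth : ∀ c, c ≠ b → c ≠ b' → (c ∈ R.queue a l (t + 1) ↔ c ∈ R.queue a l t) := by
    intro c hc hc'
    simp only [queue, Finset.mem_filter, Finset.mem_univ, true_and, and_congr_right_iff]
    intro _
    exact queue_mem_iff ht ha fun d =>
      ⟨fun h => hc (h.1.unique hX).1, fun h => hc' (h.1.unique hX).2⟩
  have h1 := hX.rank_succ
  have h2 := hX.rank_lower
  have hb : b ∉ R.queue a l (t + 1) := by
    simp only [queue, Finset.mem_filter, Finset.mem_univ, true_and, hX.reg1_iff, hX.2.1, h1.1]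
    simp; omega
  have hb' : b' ∉ R.queue a l t := by
    simp only [queue, Finset.mem_filter, Finset.mem_univ, true_and, hX.2.2, h2]
    simp; omega
  constructor
  · refine (Finset.card_le_card (t := insert b' (R.queue a l t)) fun c hc => ?_).trans
      (Finset.card_insert_le _ _)
    by_cases hcb : c = b
    · exact absurd (hcb ▸ hc) hb
    by_cases hcb' : c = b'
    · simp [hcb']
    · simp [(hoth c hcb hcb').1 hc]
  · refine (Finset.card_le_card (t := insert b (R.queue a l (t + 1))) fun c hc => ?_).trans
      (Finset.card_insert_le _ _)
    by_cases hcb : c = b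
    · simp [hcb]
    by_cases hcb' : c = b'
    · exact absurd (hcb' ▸ hc) hb'
    · simp [(hoth c hcb hcb').2 hc]

lemma queue_bound {a : ℕ} (l : Fin m) (ht : t ≤ R.N) (ha : R.out none t ≤ a) :
    (R.queue a l t).card ≤ R.cc l a + ((R.cutX a).filter (· < t)).card ∧
      R.cc l a ≤ (R.queue a l t).card + ((R.cutX a).filter (· < t)).card := by
  induction t with
  | zero => simp [queue_zero]
  | succ t ih =>
    have ih := ih (by omega) ((out_mono none (Nat.le_succ t)).trans ha)
    by_cases h : t ∈ R.cutX a
    · have h1 := queue_succ_le (l := l) (by omega) ha h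
      have h2 : ((R.cutX a).filter (· < t + 1)).card = ((R.cutX a).filter (· < t)).card + 1 := by
        rw [show (R.cutX a).filter (· < t + 1) = insert t ((R.cutX a).filter (· < t)) from ?_,
          Finset.card_insert_of_notMem (by simp)]
        ext s
        simp only [Finset.mem_filter, Finset.mem_insert]
        constructor
        · rintro ⟨h1, h2⟩
          by_cases hs : s = t
          · exact Or.inl hs
          · exact Or.inr ⟨h1, by omega⟩
        · rintro (rfl | ⟨h1, h2⟩)
          · exact ⟨h, by omega⟩
          · exact ⟨h1, by omega⟩
      omega
    · have h1 := queue_succ_eq (l := l) (by omega) ha h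
      have h2 : ((R.cutX a).filter (· < t)).card ≤ ((R.cutX a).filter (· < t + 1)).card :=
        Finset.card_le_card fun s hs => by
          simp only [Finset.mem_filter] at hs ⊢; exact ⟨hs.1, by omega⟩
      omega

/-- When `a` tokens have left the ordering gadget, they are distributed among the slots as the
first `a` tokens, up to the number of exchanges across that cut. -/
lemma lamX_bound (l : Fin m) (ht : t ≤ R.N) :
    R.lamX l t ≤ R.cc l (R.out none t) + (R.cutX (R.out none t)).card ∧
      R.cc l (R.out none t) ≤ R.lamX l t + (R.cutX (R.out none t)).card := by
  have h1 := queue_bound (R := R) l ht le_rfl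
  rw [queue_of_out] at h1
  have h2 : ((R.cutX (R.out none t)).filter (· < t)).card ≤ (R.cutX (R.out none t)).card :=
    Finset.card_le_card (Finset.filter_subset _ _)
  omega

/-! ### Consequences for the reversed run -/

lemma rev_out_none (ht : t ≤ R.N) : R.rev.out none t + R.inn none (R.N - t) = R.L := by
  rw [out_none, inn_none, R.L_eq, ← Finset.card_univ, add_comm,
    ← Finset.card_filter_add_card_filter_not (s := Finset.univ) (fun b => R.reg3 (.inr b) (R.N - t))]
  congr 2
  ext b
  simp [rev_reg1 _ ht]

lemma rev_lamX (l : Fin m) (ht : t ≤ R.N) : R.rev.lamX l t + R.tY l (R.N - t) = R.len l := by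
  rw [lamX, tY, R.len_eq, add_comm, ← Finset.card_filter_add_card_filter_not
    (s := Finset.univ.filter fun b => R.sl b = l) (fun b => R.reg3 (.inr b) (R.N - t)),
    Finset.filter_filter, Finset.filter_filter]
  congr 2
  ext b
  simp [rev_reg1 _ ht]

lemma rev_cc (l : Fin m) {a : ℕ} (ha : a ≤ R.L) : R.rev.cc l (R.L - a) + R.cc l a = R.len l := by
  have h : R.rev.cc l (R.L - a) =
      ((Finset.univ.filter fun b => R.sl b = l).filter fun b => ¬R.pos b < a).card := by
    rw [cc, Finset.filter_filter]
    refine congrArg Finset.card (Finset.filter_congr fun b _ => ?_)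
    have := R.pos_lt b
    rw [rev_sl, rev_pos]
    refine and_congr_right fun _ => ?_
    omega
  rw [h, cc, R.len_eq, add_comm, ← Finset.filter_filter]
  exact Finset.card_filter_add_card_filter_not _

lemma tY_bound (l : Fin m) (ht : t ≤ R.N) :
    R.tY l t ≤ R.cc l (R.inn none t) + (R.rev.cutX (R.L - R.inn none t)).card ∧
      R.cc l (R.inn none t) ≤ R.tY l t + (R.rev.cutX (R.L - R.inn none t)).card := by
  have hs : R.N - (R.N - t) = t := by omega
  have h1 := lamX_bound (R := R.rev) l (t := R.N - t) (Nat.sub_le _ _)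
  have h2 := rev_out_none (R := R) (t := R.N - t) (Nat.sub_le _ _)
  have h3 := rev_lamX (R := R) l (t := R.N - t) (Nat.sub_le _ _)
  rw [hs] at h2 h3
  have h4 := rev_cc (R := R) l (a := R.inn none t) (by omega)
  have h5 : R.rev.out none (R.N - t) = R.L - R.inn none t := by omega
  rw [h5] at h1
  omega

lemma out_none_eq_sum (t : ℕ) : R.out none t = ∑ l, R.lamX l t := by
  rw [out_none, Finset.card_eq_sum_card_fiberwise (f := R.sl) (t := Finset.univ) (by simp)]
  simp only [lamX, Finset.filter_filter]
  refine Finset.sum_congr rfl fun l _ => ?_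
  congr 1
  ext b
  simp [and_comm]

lemma rev_swaps {s : ℕ} {x y : Tk m ι} (h : R.rev.Swaps s x y) :
    R.Swaps (R.N - 1 - s) (y.map id Sum.swap) (x.map id Sum.swap) := by
  have hlt : s < R.N := h.lt
  have e1 : R.N - s = R.N - 1 - s + 1 := by omega
  have e2 : R.N - (s + 1) = R.N - 1 - s := by omega
  have hP : ∀ z, R.rev.P s z = R.P (R.N - 1 - s + 1) (z.map id Sum.swap) := fun z => by
    rw [← e1]; rfl
  have hP' : ∀ z, R.rev.P (s + 1) z = R.P (R.N - 1 - s) (z.map id Sum.swap) := fun z => by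
    rw [← e2]; rfl
  have hinv : ∀ z : Tk m ι, (z.map id Sum.swap).map id Sum.swap = z := by
    rintro (e | b | b) <;> rfl
  refine ⟨by omega, ?_, ?_, ?_, ?_, ?_⟩
  · have := h.edge
    rw [← h.up, ← h.down, hP', hP'] at this
    exact this
  · intro he
    apply h.ne
    have := congrArg (Sum.map id Sum.swap) he
    rw [hinv, hinv] at this
    exact this.symm
  · rw [← hP, ← hP', h.down]
  · rw [← hP, ← hP', h.up]
  · intro z h1 h2
    have := h.other (z.map id Sum.swap) (fun he => h2 (by rw [← he, hinv]))
      (fun he => h1 (by rw [← he, hinv]))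
    rw [hP, hP', hinv] at this
    exact this.symm

end Run

namespace Run

variable {m : ℕ} {ι : Type} [Fintype ι] {R : Run m ι} {t : ℕ}

/-- The run exceeds the trivial lower bound for its length by at most `c`. -/
def Budget (R : Run m ι) (c : ℕ) : Prop :=
  2 * R.N ≤ ∑ a : ι ⊕ ι, (dp R.k (R.P 0 (.inr a)) + dp R.k (R.P R.N (.inr a)) + 1) + 2 * c

lemma Budget.rev {c : ℕ} (h : R.Budget c) : R.rev.Budget c := by
  unfold Budget at *
  refine h.trans (le_of_eq ?_)
  congr 1
  refine Fintype.sum_equiv (Equiv.sumComm ι ι) _ _ fun a => ?_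
  simp only [rev_k, rev_N, rev_P_inr, Nat.sub_zero, Nat.sub_self, Equiv.sumComm_apply,
    Sum.swap_swap]
  ring

lemma sum_lenR : ∑ r, R.lenR r = 2 * R.L := by
  rw [Fintype.sum_option, two_mul]
  refine congrArg₂ _ rfl ?_
  simp only [lenR, R.len_eq]
  rw [R.L_eq, ← Finset.card_univ, Finset.card_eq_sum_card_fiberwise (f := R.sl) (t := Finset.univ) (by simp)]

lemma deepCount_init {τ : ℕ} (hitem : ∃ ρ : Equiv.Perm (Option (Fin m)), ∀ e, R.P τ (.inl e) = itemVtx (ρ e))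
    (hv : ∀ a, R.vl (.inr a) τ ≠ 0) (r : Option (Fin m)) (d : ℕ) : R.ee r d τ = 0 := by
  obtain ⟨ρ, hρ⟩ := hitem
  unfold ee
  rw [if_neg]
  rw [not_le]
  have h0 : ∀ x, R.vl x τ = 0 ∧ rg (R.P τ x) = some r ∧ d < dp R.k (R.P τ x) →
      ∃ l, r = some l ∧ d < R.k ∧ x = .inl (ρ.symm (some l)) := by
    rintro (e | a) ⟨h1, h2, h3⟩
    · rw [hρ] at h2 h3
      cases he : ρ e with
      | none => simp [he, itemVtx] at h2
      | some l =>
        simp only [he, itemVtx, rg_nook, Option.some.injEq, dp_nook] at h2 h3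
        exact ⟨l, h2.symm, h3, by rw [← he]; simp⟩
    · exact absurd h1 (hv a)
  unfold deepCount thr
  by_cases hr : r = none
  · rw [if_pos hr, Nat.lt_one_iff, Finset.card_eq_zero, Finset.filter_eq_empty_iff]
    intro x _ hx
    obtain ⟨l, hl, -⟩ := h0 x hx
    simp [hr] at hl
  · rw [if_neg hr]
    by_cases hd : d < R.k
    · rw [if_pos hd, Nat.lt_succ_iff, Finset.card_le_one]
      intro x hx y hy
      obtain ⟨l, hl, -, rfl⟩ := h0 x (Finset.mem_filter.1 hx).2
      obtain ⟨l', hl', -, rfl⟩ := h0 y (Finset.mem_filter.1 hy).2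
      rw [hl] at hl'
      cases hl'
      rfl
    · rw [if_neg hd, Nat.lt_one_iff, Finset.card_eq_zero, Finset.filter_eq_empty_iff]
      intro x _ hx
      obtain ⟨l, -, h, -⟩ := h0 x hx
      exact hd h

lemma pot_eq {τ : ℕ} {ε : ℤ} (hε : ∀ a, R.vl (.inr a) τ = ε) (hε0 : ε ≠ 0)
    (hitem : ∃ ρ : Equiv.Perm (Option (Fin m)), ∀ e, R.P τ (.inl e) = itemVtx (ρ e))
    (hpv : ∀ a : ι ⊕ ι, ∃ r d, R.P τ (.inr a) = pv r d) :
    R.pot τ = -2 * ε * ∑ a : ι ⊕ ι, (dp R.k (R.P τ (.inr a)) : ℤ) := by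
  unfold pot
  rw [Fintype.sum_sum_type]
  simp only [vl_inl, zero_mul, Finset.sum_const_zero, zero_add, hε]
  rw [Finset.mul_sum]
  refine Finset.sum_congr rfl fun a _ => ?_
  obtain ⟨r, d, hd⟩ := hpv a
  rw [hd, wt_pv, deepCount_init hitem (fun a => by rw [hε]; exact hε0), dp_pv]
  push_cast
  ring

lemma pot_zero : R.pot 0 = 2 * ∑ a : ι ⊕ ι, (dp R.k (R.P 0 (.inr a)) : ℤ) := by
  rw [pot_eq (ε := -1) (fun a => vl_inr_neg.2 (R.reg1_zero a)) (by norm_num) R.init_item]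
  · ring
  · rintro (b | b)
    · exact ⟨none, _, R.init_X b⟩
    · exact ⟨some _, _, R.init_Y b⟩

lemma pot_N : R.pot R.N = -2 * ∑ a : ι ⊕ ι, (dp R.k (R.P R.N (.inr a)) : ℤ) := by
  rw [pot_eq (ε := 1) (fun a => (vl_inr_one le_rfl).2 (R.reg3_N a)) (by norm_num) R.final_item]
  · ring
  · rintro (b | b)
    · exact ⟨some _, _, R.final_X b⟩
    · exact ⟨none, _, R.final_Y b⟩

/-- The pairs of a step and a region in which an entering and a leaving token merge. -/
noncomputable def mergeSet (R : Run m ι) : Finset (ℕ × Option (Fin m)) :=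
  (Finset.range R.N ×ˢ Finset.univ).filter fun x => R.merged x.2 x.1

lemma Budget.sum_sg {c : ℕ} (h : R.Budget c) :
    ∑ t ∈ Finset.range R.N, R.sg t + 4 * R.L ≤ 4 * c + 4 * (R.mergeSet.card : ℤ) := by
  have hM : (R.mergeSet.card : ℤ) =
      ∑ t ∈ Finset.range R.N, ∑ r, (if R.merged r t then (1 : ℤ) else 0) := by
    rw [mergeSet, Finset.card_filter, Finset.sum_product]
    push_cast
    rfl
  have hout : ∀ r, ∑ t ∈ Finset.range R.N, (((R.out r (t + 1) : ℤ) - R.out r t) +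
      ((R.inn r (t + 1) : ℤ) - R.inn r t)) = 2 * R.lenR r := by
    intro r
    rw [Finset.sum_add_distrib, Finset.sum_range_sub (fun t => (R.out r t : ℤ)),
      Finset.sum_range_sub (fun t => (R.inn r t : ℤ)), out_N, inn_N, out_zero, inn_zero]
    push_cast; ring
  have hl : ∑ r, (R.lenR r : ℤ) = 2 * R.L := by exact_mod_cast R.sum_lenR
  have hsum : ∑ t ∈ Finset.range R.N, R.sg t =
      4 * R.N + (R.pot R.N - R.pot 0) - 8 * R.L + 4 * R.mergeSet.card := by
    unfold sg
    rw [Finset.sum_add_distrib, Finset.sum_sub_distrib, Finset.sum_add_distrib,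
      Finset.sum_range_sub, ← Finset.mul_sum, ← Finset.mul_sum, Finset.sum_comm, hM]
    simp only [hout]
    rw [← Finset.mul_sum, hl]
    simp
    ring
  unfold Budget at h
  have hc : (Fintype.card (ι ⊕ ι) : ℤ) = 2 * R.L := by
    rw [Fintype.card_sum, R.L_eq]; push_cast; ring
  have h' : (2 * R.N : ℤ) ≤ (∑ a : ι ⊕ ι, (dp R.k (R.P 0 (.inr a)) : ℤ)) +
      (∑ a : ι ⊕ ι, (dp R.k (R.P R.N (.inr a)) : ℤ)) + 2 * R.L + 2 * c := by
    rw [← hc, ← Finset.sum_add_distrib]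
    have := h
    rw [Finset.sum_add_distrib] at this
    zify at this
    simpa using this
  rw [hsum, pot_zero, pot_N]
  linarith

end Run

lemma exists_jump (f : ℕ → ℕ) {r T : ℕ} (h0 : f 0 < r) (hT : r ≤ f T) :
    ∃ t < T, f t < r ∧ r ≤ f (t + 1) := by
  induction T with
  | zero => omega
  | succ T ih =>
    by_cases h : r ≤ f T
    · obtain ⟨t, ht, h'⟩ := ih h
      exact ⟨t, by omega, h'⟩
    · exact ⟨T, by omega, by omega, hT⟩

lemma jump_unique {f : ℕ → ℕ} (hf : Monotone f) {r t t' : ℕ} (h1 : f t < r) (h2 : r ≤ f (t + 1))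
    (h1' : f t' < r) (h2' : r ≤ f (t' + 1)) : t = t' := by
  rcases lt_trichotomy t t' with h | h | h
  · have := hf (show t + 1 ≤ t' by omega); omega
  · exact h
  · have := hf (show t' + 1 ≤ t by omega); omega

namespace Run

variable {m : ℕ} {ι : Type} [Fintype ι] {R : Run m ι} {t : ℕ}

lemma grow_unique {r r' : Option (Fin m)} (ht : t < R.N)
    (h : R.out r t < R.out r (t + 1) ∨ R.inn r t < R.inn r (t + 1))
    (h' : R.out r' t < R.out r' (t + 1) ∨ R.inn r' t < R.inn r' (t + 1)) : r = r' := by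
  obtain ⟨p, q, hs⟩ := R.exists_swaps ht
  have same : rg (R.P t p) = rg (R.P t q) → r = r' := by
    intro hr
    have hc := hs.counters_eq hr
    have := hc.1 r; have := hc.2.1 r
    omega
  rcases hs.cases with ⟨r₀, hp, hq⟩ | ⟨r₀, d, hp, hq⟩ | ⟨l, hp, hq⟩
  · have key : ∀ r, (R.out r t < R.out r (t + 1) ∨ R.inn r t < R.inn r (t + 1)) → r = r₀ := by
      intro r h
      by_contra hr
      have := hs.top_out_ne hp hq hr
      have := hs.top_inn_ne hp hq hr
      omega
    rw [key r h, key r' h']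
  · exact same (by rw [hp, hq]; simp)
  · exact same (by rw [hp, hq]; simp)

lemma lamX_grow {l : Fin m} (h : R.lamX l t < R.lamX l (t + 1)) :
    R.out none t < R.out none (t + 1) := by
  rw [out_none_eq_sum, out_none_eq_sum]
  exact Finset.sum_lt_sum (fun l _ => R.lamX_mono l (Nat.le_succ t)) ⟨l, Finset.mem_univ _, h⟩

lemma lamX_succ_le (l : Fin m) (ht : t < R.N) : R.lamX l (t + 1) ≤ R.lamX l t + 1 := by
  have h := R.out_succ_le none ht
  rw [out_none_eq_sum, out_none_eq_sum, ← Finset.add_sum_erase _ _ (Finset.mem_univ l),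
    ← Finset.add_sum_erase _ (fun l => R.lamX l t) (Finset.mem_univ l)] at h
  have : ∑ l ∈ Finset.univ.erase l, R.lamX l t ≤ ∑ l ∈ Finset.univ.erase l, R.lamX l (t + 1) :=
    Finset.sum_le_sum fun l _ => R.lamX_mono l (Nat.le_succ t)
  omega

lemma lamX_grow_unique {l l' : Fin m} (ht : t < R.N) (h : R.lamX l t < R.lamX l (t + 1))
    (h' : R.lamX l' t < R.lamX l' (t + 1)) : l = l' := by
  by_contra hne
  have h1 := R.out_succ_le none ht
  rw [out_none_eq_sum, out_none_eq_sum, ← Finset.add_sum_erase _ _ (Finset.mem_univ l),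
    ← Finset.add_sum_erase _ (fun l => R.lamX l t) (Finset.mem_univ l)] at h1
  have : ∑ l ∈ Finset.univ.erase l, R.lamX l t < ∑ l ∈ Finset.univ.erase l, R.lamX l (t + 1) :=
    Finset.sum_lt_sum (fun l _ => R.lamX_mono l (Nat.le_succ t))
      ⟨l', by simp [Ne.symm hne], h'⟩
  omega

lemma inn_le_out_none (ht : t ≤ R.N) : R.inn none t ≤ R.out none t := by
  have := R.card_specs none ht
  rw [if_pos rfl] at this
  omega

lemma lamX_zero (l : Fin m) : R.lamX l 0 = 0 := by simp [lamX, R.reg1_zero]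

lemma merged.exists_leave {l : Fin m} (h : R.merged (some l) t) (ht : t < R.N) :
    ∃ t₁ < t, R.lamX l t₁ < R.lamX l (t₁ + 1) ∧ R.lamX l (t₁ + 1) = R.inn (some l) (t + 1) := by
  obtain ⟨h1, h2, h3⟩ := h
  have h4 := R.inn_le_lamX l (t := t + 1) (by omega)
  obtain ⟨t₁, ht₁, h5, h6⟩ := exists_jump (R.lamX l) (r := R.inn (some l) (t + 1)) (T := t + 1)
    (by rw [lamX_zero]; omega) h4
  have h7 := R.lamX_succ_le l (t := t₁) (by omega)
  refine ⟨t₁, ?_, by omega, by omega⟩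
  rcases Nat.lt_succ_iff_lt_or_eq.1 ht₁ with h | rfl
  · exact h
  · have := grow_unique (R := R) (by omega) (Or.inl h1) (Or.inl (lamX_grow (by omega : R.lamX l t₁ < _)))
    simp at this

/-- The cuts crossed by a swap of two tokens of different slots. -/
noncomputable def crossCuts (R : Run m ι) : Finset ℕ :=
  (Finset.Icc 1 R.L).filter fun a => (R.cutX a).Nonempty ∨ (R.rev.cutX (R.L - a)).Nonempty

lemma mergeSet_card_le : R.mergeSet.card ≤ R.L + R.crossCuts.card := by
  set M0 := (Finset.range R.N).filter fun t => R.merged none t with hM0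
  set M1 := (Finset.range R.N ×ˢ (Finset.univ : Finset (Fin m))).filter
    fun x => R.merged (some x.2) x.1 with hM1
  have hM : R.mergeSet.card = M0.card + M1.card := by
    rw [mergeSet, hM0, hM1, Finset.card_filter, Finset.card_filter, Finset.card_filter,
      Finset.sum_product, Finset.sum_product, ← Finset.sum_add_distrib]
    refine Finset.sum_congr rfl fun t _ => ?_
    rw [Fintype.sum_option]
  have hmono : Monotone (R.out none) := fun _ _ => R.out_mono none
  have hex : ∀ x : ℕ × Fin m, ∃ t₁, x ∈ M1 → t₁ < x.1 ∧ R.lamX x.2 t₁ < R.lamX x.2 (t₁ + 1) ∧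
      R.lamX x.2 (t₁ + 1) = R.inn (some x.2) (x.1 + 1) := by
    intro x
    by_cases hx : x ∈ M1
    · have hx' := hx
      simp only [hM1, Finset.mem_filter, Finset.mem_product, Finset.mem_range, Finset.mem_univ,
        and_true] at hx'
      obtain ⟨t₁, h⟩ := hx'.2.exists_leave hx'.1
      exact ⟨t₁, fun _ => h⟩
    · exact ⟨0, fun h => absurd h hx⟩
  choose g hg using hex
  have hM0' : ∀ t ∈ M0, t < R.N ∧ R.merged none t := by
    intro t ht
    simpa [hM0] using ht
  have hM1' : ∀ x ∈ M1, x.1 < R.N ∧ R.merged (some x.2) x.1 := by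
    intro x hx
    simpa [hM1] using hx
  set I0 := M0.image fun t => R.out none (t + 1) with hI0
  set I1 := M1.image fun x => R.out none (g x + 1) with hI1
  have hlt : ∀ x ∈ M1, R.out none (g x) < R.out none (g x + 1) := fun x hx =>
    lamX_grow (hg x hx).2.1
  have c0 : I0.card = M0.card := by
    refine Finset.card_image_of_injOn ?_
    intro t ht t' ht' h
    have h1 := (hM0' t ht).2.1
    have h2 := (hM0' t' ht').2.1
    dsimp only at h
    exact jump_unique hmono h1 le_rfl (by omega) (by omega)
  have c1 : I1.card = M1.card := by
    refine Finset.card_image_of_injOn ?_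
    intro x hx y hy h
    have hx := Finset.mem_coe.1 hx
    have hy := Finset.mem_coe.1 hy
    dsimp only at h
    have h1 := hlt x hx
    have h2 := hlt y hy
    have he : g x = g y := jump_unique hmono h1 le_rfl (by omega) (by omega)
    obtain ⟨a1, a2, a3⟩ := hg x hx
    obtain ⟨b1, b2, b3⟩ := hg y hy
    rw [← he] at b1 b2 b3
    have hl : x.2 = y.2 := lamX_grow_unique (by have := (hM1' x hx).1; omega) a2 b2
    obtain ⟨t, l⟩ := x
    obtain ⟨t', l'⟩ := y
    dsimp only at *
    subst hl
    have hx2 : R.inn (some l) t < R.inn (some l) (t + 1) := (hM1' _ hx).2.2.1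
    have hy2 : R.inn (some l) t' < R.inn (some l) (t' + 1) := (hM1' _ hy).2.2.1
    have := jump_unique (f := R.inn (some l)) (t' := t') (fun _ _ => R.inn_mono _) hx2 le_rfl
      (by omega) (by omega)
    rw [this]
  have hL : ∀ {t}, t < R.N → R.out none (t + 1) ≤ R.L := by
    intro t ht
    have := R.out_mono none (show t + 1 ≤ R.N by omega)
    rwa [out_N] at this
  have hsub : I0 ∪ I1 ⊆ Finset.Icc 1 R.L := by
    refine Finset.union_subset ?_ ?_
    · intro a ha
      obtain ⟨t, ht, rfl⟩ := Finset.mem_image.1 ha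
      have := hM0' t ht
      have := this.2.1
      have := hL (hM0' t ht).1
      rw [Finset.mem_Icc]; omega
    · intro a ha
      obtain ⟨x, hx, rfl⟩ := Finset.mem_image.1 ha
      have := hlt x hx
      have := hL (t := g x) (by have := (hg x hx).1; have := (hM1' x hx).1; omega)
      rw [Finset.mem_Icc]; omega
  have hbad : I0 ∩ I1 ⊆ R.crossCuts := by
    intro a ha
    have haI := hsub (Finset.mem_union_left _ (Finset.mem_inter.1 ha).1)
    obtain ⟨ha0, ha1⟩ := Finset.mem_inter.1 ha
    obtain ⟨t, ht, rfl⟩ := Finset.mem_image.1 ha0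
    obtain ⟨x, hx, hxa⟩ := Finset.mem_image.1 ha1
    obtain ⟨htN, o1, o2, o3⟩ := hM0' t ht
    obtain ⟨g1, g2, g3⟩ := hg x hx
    obtain ⟨hxN, p1, p2, p3⟩ := hM1' x hx
    have hx' := hlt x hx
    have he : g x = t := jump_unique hmono hx' le_rfl (by omega) (by omega)
    rw [he] at g1 g2 g3
    have hin := R.inn_le_out_none (t := t + 1) (by omega)
    have hos := R.out_succ_le none htN
    have hio : R.inn none (t + 1) = R.out none (t + 1) := by omega
    have q1 := R.tY_le_out x.2 (t := t + 1) (by omega)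
    have q2 := R.out_mono (some x.2) (show t + 1 ≤ x.1 by omega)
    rw [crossCuts, Finset.mem_filter]
    refine ⟨haI, ?_⟩
    by_contra hno
    push Not at hno
    have b1 := lamX_bound (R := R) x.2 (t := t + 1) (by omega)
    have b2 := tY_bound (R := R) x.2 (t := t + 1) (by omega)
    rw [hio] at b2
    rw [hno.1, Finset.card_empty] at b1
    rw [hno.2, Finset.card_empty] at b2
    omega
  have h1 := Finset.card_union_add_card_inter I0 I1
  have h2 := Finset.card_le_card hsub
  have h3 := Finset.card_le_card hbad
  rw [Nat.card_Icc] at h2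
  omega

end Run

namespace Run

variable {m : ℕ} {ι : Type} [Fintype ι] {R : Run m ι} {t : ℕ}

/-- The steps exchanging two tokens that have not yet left the ordering gadget. -/
noncomputable def xxSteps (R : Run m ι) : Finset ℕ :=
  (Finset.range R.N).filter fun t => ∃ b c, R.XSwap t b c

/-- The steps exchanging two tokens that have arrived in the ordering gadget for good. -/
noncomputable def yySteps (R : Run m ι) : Finset ℕ :=
  R.rev.xxSteps.image fun t => R.N - 1 - t

/-- The steps exchanging two tokens of the same slot that have not yet left the ordering
gadget. -/
noncomputable def sameX (R : Run m ι) : Finset ℕ :=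
  (Finset.range R.N).filter fun t => ∃ b b', R.XSwap t b b' ∧ R.sl b = R.sl b'

lemma mem_xxSteps : t ∈ R.xxSteps ↔ ∃ b b', R.XSwap t b b' := by
  rw [xxSteps, Finset.mem_filter, Finset.mem_range]
  exact ⟨fun h => h.2, fun h => ⟨by obtain ⟨_, _, h⟩ := h; exact h.1.lt, h⟩⟩

lemma mem_yySteps (h : t ∈ R.yySteps) : ∃ p q, R.Swaps t p q ∧ R.vl p t = 1 ∧ R.vl q t = 1 ∧
    ∃ d, R.P t p = pv none d ∧ R.P t q = pv none (d + 1) := by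
  obtain ⟨s, hs, rfl⟩ := Finset.mem_image.1 h
  obtain ⟨b, b', hsw⟩ := mem_xxSteps.1 hs
  have hlt : s < R.N := hsw.1.lt
  have h1 := rev_swaps hsw.1
  have r1 : R.rev.reg1 (.inl b) (s + 1) := (hsw.reg1_iff _).2 hsw.2.1
  have r2 : R.rev.reg1 (.inl b') (s + 1) := (hsw.reg1_iff _).2 hsw.2.2
  rw [rev_reg1 _ hlt] at r1 r2
  have e2 : R.N - (s + 1) = R.N - 1 - s := by omega
  rw [e2] at r1 r2
  obtain ⟨d, hd1, hd2⟩ := hsw.pos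
  refine ⟨_, _, h1, (vl_inr_one (by omega)).2 r2, (vl_inr_one (by omega)).2 r1, d, ?_, ?_⟩
  · rw [← hd1, ← hsw.1.up, rev_P_inr, e2]; rfl
  · rw [← hd2, ← hsw.1.down, rev_P_inr, e2]; rfl

lemma mem_xxSteps_swaps (h : t ∈ R.xxSteps) : ∃ p q, R.Swaps t p q ∧ R.vl p t = -1 ∧ R.vl q t = -1 ∧
    ∃ d, R.P t p = pv none d ∧ R.P t q = pv none (d + 1) := by
  obtain ⟨b, b', h⟩ := mem_xxSteps.1 h
  exact ⟨_, _, h.1, vl_inr_neg.2 h.2.1, vl_inr_neg.2 h.2.2, h.pos⟩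

lemma disjoint_xx_yy : Disjoint R.xxSteps R.yySteps := by
  rw [Finset.disjoint_left]
  intro t h h'
  obtain ⟨p, q, h1, h2, -⟩ := mem_xxSteps_swaps h
  obtain ⟨p', q', h1', h2', -⟩ := mem_yySteps h'
  rw [(h1.unique h1').1] at h2
  omega

/-- The steps exchanging two tokens with the same status in the ordering gadget. -/
noncomputable def quiet (R : Run m ι) : Finset ℕ := R.xxSteps ∪ R.yySteps

lemma quiet_swaps (h : t ∈ R.quiet) : ∃ p q, R.Swaps t p q ∧
    ∃ d, R.P t p = pv none d ∧ R.P t q = pv none (d + 1) ∧ R.sg t = 4 := by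
  rcases Finset.mem_union.1 h with h | h
  · obtain ⟨p, q, h1, h2, h3, d, h4, h5⟩ := mem_xxSteps_swaps h
    exact ⟨p, q, h1, d, h4, h5, h1.sg_path_eq h4 h5 (by rw [h2, h3])⟩
  · obtain ⟨p, q, h1, h2, h3, d, h4, h5⟩ := mem_yySteps h
    exact ⟨p, q, h1, d, h4, h5, h1.sg_path_eq h4 h5 (by rw [h2, h3])⟩

lemma cutX_subset (a : ℕ) : R.cutX a ⊆ R.xxSteps := by
  intro t ht
  obtain ⟨-, b, b', h, -⟩ := Finset.mem_filter.1 ht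
  exact mem_xxSteps.2 ⟨b, b', h⟩

lemma cutX_eq {a a' : ℕ} (h : t ∈ R.cutX a) (h' : t ∈ R.cutX a') : a = a' := by
  obtain ⟨-, b, b', h1, -, h2⟩ := Finset.mem_filter.1 h
  obtain ⟨-, c, c', h1', -, h2'⟩ := Finset.mem_filter.1 h'
  rw [(h1.unique h1').1] at h2
  omega

lemma exists_cutChoice (R : Run m ι) : ∃ f : ℕ → ℕ, (∀ a ∈ R.crossCuts, f a ∈ R.cutX a ∨
    f a ∈ R.yySteps) ∧ Set.InjOn f R.crossCuts := by
  have hex : ∀ a, ∃ t, a ∈ R.crossCuts → t ∈ R.cutX a ∨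
      ∃ s ∈ R.rev.cutX (R.L - a), t = R.N - 1 - s := by
    intro a
    by_cases ha : a ∈ R.crossCuts
    · obtain ⟨-, ⟨t, ht⟩ | ⟨t, ht⟩⟩ := Finset.mem_filter.1 ha
      · exact ⟨t, fun _ => Or.inl ht⟩
      · exact ⟨_, fun _ => Or.inr ⟨t, ht, rfl⟩⟩
    · exact ⟨0, fun h => absurd h ha⟩
  choose f hf using hex
  have hyy : ∀ {a s}, s ∈ R.rev.cutX (R.L - a) → R.N - 1 - s ∈ R.yySteps := by
    intro a s hs
    exact Finset.mem_image_of_mem _ (cutX_subset _ hs)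
  refine ⟨f, fun a ha => ?_, ?_⟩
  · rcases hf a ha with h | ⟨s, hs, h⟩
    · exact Or.inl h
    · exact Or.inr (h ▸ hyy hs)
  · intro a ha a' ha' h
    have hd := R.disjoint_xx_yy
    rw [Finset.disjoint_left] at hd
    rcases hf a ha with h1 | ⟨s, hs, h1⟩ <;> rcases hf a' ha' with h2 | ⟨s', hs', h2⟩
    · rw [h] at h1; exact cutX_eq h1 h2
    · exact absurd (h2 ▸ hyy hs') (hd (cutX_subset a (h ▸ h1)))
    · exact absurd (h1 ▸ hyy hs) (hd (cutX_subset a' (h ▸ h2)))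
    · have l1 := (Finset.mem_range.1 (Finset.mem_filter.1 hs).1)
      have l2 := (Finset.mem_range.1 (Finset.mem_filter.1 hs').1)
      rw [rev_N] at l1 l2
      have : s = s' := by omega
      subst this
      have h3 := cutX_eq hs hs'
      have b1 := (Finset.mem_Icc.1 (Finset.mem_filter.1 ha).1)
      have b2 := (Finset.mem_Icc.1 (Finset.mem_filter.1 ha').1)
      omega

lemma Budget.key {c : ℕ} (h : R.Budget c) :
    ∑ t ∈ Finset.range R.N \ R.quiet, R.sg t ≤ 4 * c ∧ R.sameX.card ≤ c ∧
      ∀ a, (R.cutX a).card ≤ c + 1 := by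
  obtain ⟨f, hf, hinj⟩ := R.exists_cutChoice
  set Z := R.crossCuts.image f with hZ
  have hZc : Z.card = R.crossCuts.card := Finset.card_image_of_injOn hinj
  have hqN : R.quiet ⊆ Finset.range R.N := by
    intro t ht
    obtain ⟨p, q, h, -⟩ := quiet_swaps ht
    exact Finset.mem_range.2 h.lt
  have hZq : Z ⊆ R.quiet := by
    intro t ht
    obtain ⟨a, ha, rfl⟩ := Finset.mem_image.1 ht
    rcases hf a ha with h | h
    · exact Finset.mem_union_left _ (cutX_subset a h)
    · exact Finset.mem_union_right _ h
  have hq : ∑ t ∈ R.quiet, R.sg t = 4 * R.quiet.card := by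
    rw [Finset.sum_congr rfl (g := fun _ => (4 : ℤ))]
    · simp [mul_comm]
    · intro t ht
      obtain ⟨p, q, -, d, -, -, h⟩ := quiet_swaps ht
      exact h
  have h1 := h.sum_sg
  have h2 : (R.mergeSet.card : ℤ) ≤ R.L + R.crossCuts.card := by exact_mod_cast R.mergeSet_card_le
  rw [← Finset.sum_sdiff hqN, hq] at h1
  have h3 := Finset.card_sdiff_add_card_eq_card hZq
  have h4 : 0 ≤ ∑ t ∈ Finset.range R.N \ R.quiet, R.sg t := by
    refine Finset.sum_nonneg fun t ht => sg_nonneg ?_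
    exact Finset.mem_range.1 (Finset.mem_sdiff.1 ht).1
  zify at h3 hZc
  have h5 : 4 * ((R.quiet \ Z).card : ℤ) + ∑ t ∈ Finset.range R.N \ R.quiet, R.sg t ≤ 4 * c := by
    linarith
  have h6 : (R.quiet \ Z).card ≤ c := by
    zify
    linarith
  have hd := R.disjoint_xx_yy
  rw [Finset.disjoint_left] at hd
  refine ⟨by linarith [Int.natCast_nonneg (R.quiet \ Z).card], ?_, ?_⟩
  · refine le_trans (Finset.card_le_card ?_) h6
    intro t ht
    obtain ⟨-, b, b', hs, he⟩ := Finset.mem_filter.1 ht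
    have hx := mem_xxSteps.2 ⟨b, b', hs⟩
    refine Finset.mem_sdiff.2 ⟨Finset.mem_union_left _ hx, fun hz => ?_⟩
    obtain ⟨a, ha, rfl⟩ := Finset.mem_image.1 hz
    rcases hf a ha with h | h
    · obtain ⟨-, c, c', hs', hne, -⟩ := Finset.mem_filter.1 h
      obtain ⟨rfl, rfl⟩ := hs.unique hs'
      exact hne he
    · exact hd hx h
  · intro a
    have : R.cutX a ⊆ insert (f a) (R.quiet \ Z) := by
      intro t ht
      rw [Finset.mem_insert]
      by_cases hta : t = f a
      · exact Or.inl hta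
      · refine Or.inr (Finset.mem_sdiff.2 ⟨Finset.mem_union_left _ (cutX_subset a ht), fun hz => ?_⟩)
        obtain ⟨a', ha, rfl⟩ := Finset.mem_image.1 hz
        rcases hf a' ha with h | h
        · exact hta (by rw [cutX_eq ht h])
        · exact hd (cutX_subset a ht) h
    have h7 := Finset.card_le_card this
    have h8 := Finset.card_insert_le (f a) (R.quiet \ Z)
    omega

end Run

namespace Run

variable {m : ℕ} {ι : Type} [Fintype ι] {R : Run m ι} {t c : ℕ} {p q : Tk m ι}

lemma Swaps.not_quiet (h : R.Swaps t p q) (hp : rg (R.P t p) ≠ some none) : t ∉ R.quiet := by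
  intro ht
  obtain ⟨p', q', h', d, hd, -⟩ := quiet_swaps ht
  rw [(h.unique h').1, hd] at hp
  simp at hp

/-- The wasteful steps outside the ordering gadget. -/
noncomputable def waste (R : Run m ι) (t : ℕ) : Finset ℕ :=
  (Finset.range t).filter fun s => s ∉ R.quiet ∧ 2 ≤ R.sg s

lemma Budget.waste_card (h : R.Budget c) (ht : t ≤ R.N) : (R.waste t).card ≤ 2 * c := by
  have h1 := h.key.1
  have hsub : R.waste t ⊆ Finset.range R.N \ R.quiet := by
    intro s hs
    obtain ⟨h1, h2, -⟩ := Finset.mem_filter.1 hs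
    rw [Finset.mem_range] at h1
    exact Finset.mem_sdiff.2 ⟨Finset.mem_range.2 (by omega), h2⟩
  have h2 : ∑ s ∈ R.waste t, R.sg s ≤ ∑ s ∈ Finset.range R.N \ R.quiet, R.sg s :=
    Finset.sum_le_sum_of_subset_of_nonneg hsub fun s hs _ =>
      sg_nonneg (Finset.mem_range.1 (Finset.mem_sdiff.1 hs).1)
  have h3 : (R.waste t).card • (2 : ℤ) ≤ ∑ s ∈ R.waste t, R.sg s :=
    Finset.card_nsmul_le_sum _ _ _ fun s hs => (Finset.mem_filter.1 hs).2.2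
  rw [nsmul_eq_mul] at h3
  zify
  linarith

lemma waste_mono (R : Run m ι) (t : ℕ) : (R.waste t).card ≤ (R.waste (t + 1)).card := by
  refine Finset.card_le_card (Finset.filter_subset_filter _ ?_)
  exact Finset.range_subset_range.2 (Nat.le_succ t)

lemma waste_succ (h : t ∉ R.quiet) (h' : 2 ≤ R.sg t) :
    (R.waste (t + 1)).card = (R.waste t).card + 1 := by
  rw [waste, Finset.range_add_one, Finset.filter_insert, if_pos ⟨h, h'⟩,
    Finset.card_insert_of_notMem (by simp)]
  rfl

lemma Swaps.moved (h : R.Swaps t p q) {x : Tk m ι} (hx : R.P (t + 1) x ≠ R.P t x) :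
    x = p ∨ x = q := by
  by_contra hn
  push Not at hn
  exact hx (h.other x hn.1 hn.2)

lemma pos_cases_of_rg {r : Option (Fin m)} (x : Tk m ι) (hr : rg (R.P t x) = some r) :
    (∃ d, R.P t x = pv r d) ∨ ∃ l, r = some l ∧ R.P t x = .nook l := by
  rcases vtx_cases (R.P t x) with h | ⟨r', d, h⟩ | ⟨l, h⟩
  · rw [h] at hr; simp at hr
  · rw [h, rg_pv] at hr; cases hr; exact Or.inl ⟨d, h⟩
  · rw [h, rg_nook] at hr; cases hr; exact Or.inr ⟨l, rfl, h⟩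

/-- Every slot gadget always contains a special token close to the depth of its nook. -/
lemma Budget.exists_deep_waste (h : R.Budget c) (hk : 2 * c + 1 < R.k) (l : Fin m) (ht : t ≤ R.N) :
    ∃ x ∈ R.specs (some l) t, R.k ≤ dp R.k (R.P t x) + (R.waste t).card := by
  induction t with
  | zero =>
    obtain ⟨ρ, hρ⟩ := R.init_item
    refine ⟨.inl (ρ.symm (some l)), ?_, ?_⟩
    · simp [mem_specs, hρ, itemVtx]
    · simp [hρ, itemVtx]
  | succ t ih =>
    obtain ⟨x, hx, hd⟩ := ih (by omega)
    have hw := R.waste_mono t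
    have hwc := h.waste_card (t := t) (by omega)
    obtain ⟨hv, hr⟩ := mem_specs.1 hx
    have stay : ∀ y ∈ R.specs (some l) t, rg (R.P (t + 1) y) = some (some l) →
        y ∈ R.specs (some l) (t + 1) := by
      intro y hy hy'
      obtain ⟨h1, h2⟩ := mem_specs.1 hy
      exact mem_specs.2 ⟨by rw [vl_eq_of_rg (by omega) (by rw [hy', h2]), h1], hy'⟩
    obtain ⟨p, q, hs⟩ := R.exists_swaps (t := t) (by omega)
    by_cases hxp : x = p
    · subst hxp
      rcases hs.cases with ⟨r, hp, hq⟩ | ⟨r, d, hp, hq⟩ | ⟨l', hp, hq⟩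
      · rw [hp] at hr; simp at hr
      · rw [hp, rg_pv] at hr; cases hr
        refine ⟨x, stay x hx (by rw [hs.down, hq]; simp), ?_⟩
        rw [hs.down, hq, dp_pv]
        rw [hp, dp_pv] at hd
        omega
      · rw [hp, rg_pv] at hr; cases hr
        refine ⟨x, stay x hx (by rw [hs.down, hq]; simp), ?_⟩
        rw [hs.down, hq, dp_nook]
        omega
    by_cases hxq : x = q
    · subst hxq
      rcases hs.cases with ⟨r, hp, hq⟩ | ⟨r, d, hp, hq⟩ | ⟨l', hp, hq⟩
      · rw [hq, dp_pv] at hd; omega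
      · rw [hq, rg_pv] at hr; cases hr
        rw [hq, dp_pv] at hd
        by_cases hdk : d + 1 < R.k
        · by_cases hS : R.deepCount (some l) (d + 1) t ≤ 1
          · have h1 := hs.sg_path_lone hp hq (by simp) hdk hv hS
            have h2 := waste_succ (hs.not_quiet (by rw [hp]; simp)) h1
            refine ⟨x, stay x hx (by rw [hs.up, hp]; simp), ?_⟩
            rw [hs.up, hp, dp_pv]
            omega
          · rw [not_le, deepCount, Finset.one_lt_card] at hS
            obtain ⟨y, hy, z, hz, hyz⟩ := hS
            obtain ⟨y, hyx, hy⟩ : ∃ y, y ≠ x ∧ (R.vl y t = 0 ∧ rg (R.P t y) = some (some l) ∧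
                d + 1 < dp R.k (R.P t y)) := by
              by_cases hyx : y = x
              · exact ⟨z, fun h => hyz (hyx.trans h.symm), (Finset.mem_filter.1 hz).2⟩
              · exact ⟨y, hyx, (Finset.mem_filter.1 hy).2⟩
            have hyp : y ≠ p := by
              rintro rfl
              rw [hp, dp_pv] at hy
              omega
            have ho := hs.other y hyp hyx
            refine ⟨y, stay y (mem_specs.2 ⟨hy.1, hy.2.1⟩) (by rw [ho]; exact hy.2.1), ?_⟩
            rw [ho]
            omega
        · refine ⟨x, stay x hx (by rw [hs.up, hp]; simp), ?_⟩
          rw [hs.up, hp, dp_pv]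
          omega
      · have := R.two_le_k
        rw [hq, rg_nook] at hr; cases hr
        refine ⟨x, stay x hx (by rw [hs.up, hp]; simp), ?_⟩
        rw [hs.up, hp, dp_pv]
        omega
    · have ho := hs.other x hxp hxq
      refine ⟨x, stay x hx (by rw [ho]; exact hr), ?_⟩
      rw [ho]
      omega

lemma Budget.exists_deep (h : R.Budget c) (hk : 2 * c + 1 < R.k) (l : Fin m) (ht : t ≤ R.N) :
    ∃ x ∈ R.specs (some l) t, R.k ≤ dp R.k (R.P t x) + 2 * c := by
  obtain ⟨x, hx, hd⟩ := h.exists_deep_waste hk l ht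
  have := h.waste_card ht
  exact ⟨x, hx, by omega⟩

lemma Budget.inn_le_out (h : R.Budget c) (hk : 2 * c + 1 < R.k) (l : Fin m) (ht : t ≤ R.N) :
    R.inn (some l) t ≤ R.out (some l) t := by
  obtain ⟨x, hx, -⟩ := h.exists_deep hk l ht
  have h1 := Finset.card_pos.2 ⟨x, hx⟩
  have h2 := R.card_specs (some l) ht
  simp only [reduceCtorEq, if_false] at h2
  omega

lemma out_le_inn_waste (r : Option (Fin m)) (ht : t ≤ R.N) :
    R.out r t ≤ R.inn r t + 1 + (R.waste t).card := by
  induction t with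
  | zero => rw [out_zero]; omega
  | succ t ih =>
    have ih := ih (by omega)
    have h1 := R.out_succ_le r (t := t) (by omega)
    have h2 : R.inn r t ≤ R.inn r (t + 1) := R.inn_mono r (Nat.le_succ t)
    have h3 := R.waste_mono t
    obtain ⟨p, q, hs⟩ := R.exists_swaps (t := t) (by omega)
    by_contra hlt
    have ho : R.out r t < R.out r (t + 1) := by omega
    have hi : R.inn r (t + 1) = R.inn r t := by omega
    have top : ∃ r', R.P t p = .root ∧ R.P t q = pv r' 0 := by
      rcases hs.cases with h | ⟨r', d, hp, hq⟩ | ⟨l', hp, hq⟩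
      · exact h
      · have := (hs.counters_eq (by rw [hp, hq]; simp)).1 r; omega
      · have := (hs.counters_eq (by rw [hp, hq]; simp)).1 r; omega
    obtain ⟨r', hp, hq⟩ := top
    by_cases hr : r = r'
    · subst hr
      by_cases hio : R.inn r t < R.out r t
      · have := waste_succ (hs.not_quiet (by rw [hp]; simp)) (hs.sg_grow hp hq ho hi hio)
        omega
      · omega
    · have := hs.top_out_ne hp hq hr; omega

lemma Budget.out_le_inn (h : R.Budget c) (r : Option (Fin m)) (ht : t ≤ R.N) :
    R.out r t ≤ R.inn r t + 1 + 2 * c := by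
  have := R.out_le_inn_waste r ht
  have := h.waste_card ht
  omega

lemma cc_mono (R : Run m ι) (l : Fin m) {a a' : ℕ} (h : a ≤ a') : R.cc l a ≤ R.cc l a' := by
  unfold cc
  refine Finset.card_le_card fun b hb => ?_
  rw [Finset.mem_filter] at hb ⊢
  exact ⟨hb.1, hb.2.1, by omega⟩

lemma cc_lipschitz (R : Run m ι) (l : Fin m) (a a' : ℕ) :
    R.cc l a' ≤ R.cc l a + (a' - a) := by
  unfold cc
  have h1 : (Finset.univ.filter fun b => R.sl b = l ∧ R.pos b < a') ⊆
      (Finset.univ.filter fun b => R.sl b = l ∧ R.pos b < a) ∪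
      Finset.univ.filter fun b => a ≤ R.pos b ∧ R.pos b < a' := by
    intro b hb
    simp only [Finset.mem_union, Finset.mem_filter, Finset.mem_univ, true_and] at hb ⊢
    omega
  have h2 : (Finset.univ.filter fun b => a ≤ R.pos b ∧ R.pos b < a').card ≤ a' - a := by
    rw [← Nat.card_Ico]
    refine Finset.card_le_card_of_injOn R.pos ?_ R.pos_inj.injOn
    intro b hb
    simpa using hb
  exact (Finset.card_le_card h1).trans ((Finset.card_union_le _ _).trans (by omega))

/-- All counters of a slot are determined by the number of tokens that have left the ordering
gadget, up to a small error. -/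
lemma Budget.sync (h : R.Budget c) (hk : 2 * c + 1 < R.k) (l : Fin m) (ht : t ≤ R.N) :
    R.lamX l t ≤ R.cc l (R.out none t) + c + 1 ∧ R.cc l (R.out none t) ≤ R.cc l (R.inn none t) + 2 * c + 1 ∧
    R.cc l (R.inn none t) ≤ R.cc l (R.out none t) ∧
    R.out (some l) t ≤ R.cc l (R.out none t) + 3 * c + 2 ∧
    R.cc l (R.out none t) ≤ R.out (some l) t + 3 * c + 2 ∧
    R.cc l (R.out none t) ≤ R.inn (some l) t + 5 * c + 3 := by
  have h1 := lamX_bound (R := R) l ht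
  have h2 := tY_bound (R := R) l ht
  have h3 := h.key.2.2 (R.out none t)
  have h4 := h.rev.key.2.2 (R.L - R.inn none t)
  have h5 := h.inn_le_out hk l ht
  have h6 := h.out_le_inn (some l) ht
  have h7 := R.inn_le_out_none ht
  have h8 := h.out_le_inn none ht
  have h9 := R.cc_mono l h7
  have h10 := R.cc_lipschitz l (R.inn none t) (R.out none t)
  have h11 := R.tY_le_out l ht
  have h12 := R.inn_le_lamX l ht
  omega

end Run

namespace Run

variable {m : ℕ} {ι : Type} [Fintype ι] {R : Run m ι} {t c : ℕ} {p q : Tk m ι}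

/-- A step inside a slot gadget using the nook, or moving a token in its wrong direction. -/
def OffStep (R : Run m ι) (t : ℕ) (p q : Tk m ι) : Prop :=
  R.Swaps t p q ∧ ((∃ l, R.P t p = pv (some l) (R.k - 1) ∧ R.P t q = .nook l) ∨
    ∃ l d, R.P t p = pv (some l) d ∧ R.P t q = pv (some l) (d + 1) ∧
      (R.vl p t = -1 ∨ R.vl q t = 1))

/-- The tokens taking part in an `OffStep`. -/
noncomputable def badSet (R : Run m ι) : Finset (Tk m ι) :=
  Finset.univ.filter fun x => ∃ t p q, R.OffStep t p q ∧ (x = p ∨ x = q)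

lemma OffStep.mem_waste (h : R.OffStep t p q) : t ∈ R.waste R.N := by
  obtain ⟨h, ⟨l, hp, hq⟩ | ⟨l, d, hp, hq, hv⟩⟩ := h
  · exact Finset.mem_filter.2 ⟨Finset.mem_range.2 h.lt, h.not_quiet (by rw [hp]; simp),
      h.sg_side hp hq⟩
  · exact Finset.mem_filter.2 ⟨Finset.mem_range.2 h.lt, h.not_quiet (by rw [hp]; simp),
      by have := h.sg_path_wrong hp hq hv; omega⟩

lemma Budget.badSet_card (h : R.Budget c) : R.badSet.card ≤ 4 * c := by
  have h1 : R.badSet ⊆ (R.waste R.N).biUnion fun s =>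
      Finset.univ.filter fun x => ∃ p q, R.OffStep s p q ∧ (x = p ∨ x = q) := by
    intro x hx
    obtain ⟨-, t, p, q, ho, hxx⟩ := Finset.mem_filter.1 hx
    exact Finset.mem_biUnion.2 ⟨t, ho.mem_waste, Finset.mem_filter.2 ⟨Finset.mem_univ _, p, q, ho, hxx⟩⟩
  have h2 := (Finset.card_le_card h1).trans (Finset.card_biUnion_le_card_mul _ _ 2 ?_)
  · have := h.waste_card le_rfl
    omega
  · intro s hs
    obtain ⟨p, q, hsw⟩ := R.exists_swaps (Finset.mem_range.1 (Finset.mem_filter.1 hs).1)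
    refine (Finset.card_le_card (t := {p, q}) ?_).trans Finset.card_le_two
    intro x hx
    obtain ⟨-, p', q', ho, hxx⟩ := Finset.mem_filter.1 hx
    obtain ⟨rfl, rfl⟩ := hsw.unique ho.1
    simpa using hxx

lemma not_mem_badSet {x : Tk m ι} (hx : x ∉ R.badSet) (h : R.OffStep t p q) : x ≠ p ∧ x ≠ q := by
  constructor <;> rintro rfl <;>
    exact hx (Finset.mem_filter.2 ⟨Finset.mem_univ _, t, _, _, h, by simp⟩)

lemma ne_nook_of_not_bad {a : ι ⊕ ι} (ha : .inr a ∉ R.badSet) (ht : t ≤ R.N) (l : Fin m) :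
    R.P t (.inr a) ≠ .nook l := by
  induction t with
  | zero => rcases a with b | b <;> simp [R.init_X, R.init_Y]
  | succ t ih =>
    have ih := ih (by omega)
    obtain ⟨p, q, hs⟩ := R.exists_swaps (t := t) (by omega)
    by_cases hp : .inr a = p
    · rw [hp, hs.down]
      rcases hs.cases with ⟨r, h1, h2⟩ | ⟨r, d, h1, h2⟩ | ⟨l', h1, h2⟩
      · rw [h2]; exact pv_ne_nook _ _ _
      · rw [h2]; exact pv_ne_nook _ _ _
      · exact absurd hp (not_mem_badSet ha ⟨hs, Or.inl ⟨l', h1, h2⟩⟩).1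
    by_cases hq : .inr a = q
    · rw [hq, hs.up]
      rcases hs.cases with ⟨r, h1, h2⟩ | ⟨r, d, h1, h2⟩ | ⟨l', h1, h2⟩
      · rw [h1]; simp
      · rw [h1]; exact pv_ne_nook _ _ _
      · rw [h1]; exact pv_ne_nook _ _ _
    rw [hs.other _ hp hq]
    exact ih

lemma pv_of_not_bad {a : ι ⊕ ι} (ha : .inr a ∉ R.badSet) (ht : t ≤ R.N) {r : Option (Fin m)}
    (hr : rg (R.P t (.inr a)) = some r) : ∃ d, R.P t (.inr a) = pv r d := by
  rcases pos_cases_of_rg _ hr with h | ⟨l, -, h⟩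
  · exact h
  · exact absurd h (ne_nook_of_not_bad ha ht l)

/-- A token of a slot gadget stays above a well-behaved token that has arrived there. -/
lemma below_reg3 {a : ι ⊕ ι} {x : Tk m ι} {l : Fin m} (ha : .inr a ∉ R.badSet) (ht : t < R.N)
    (hv : R.reg3 a t) (hl : R.goal a = some l) (hx : rg (R.P t x) = some (some l))
    (hx' : rg (R.P (t + 1) x) = some (some l))
    (hd : dp R.k (R.P t x) < dp R.k (R.P t (.inr a))) :
    dp R.k (R.P (t + 1) x) < dp R.k (R.P (t + 1) (.inr a)) := by
  obtain ⟨p, q, hs⟩ := R.exists_swaps ht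
  have hr : rg (R.P t (.inr a)) = some (some l) := by rw [hv.rg ht.le, hl]
  have hr' : rg (R.P (t + 1) (.inr a)) = some (some l) := by
    rw [(R.reg3_mono hv (Nat.le_succ t)).rg ht, hl]
  have hv1 : R.vl (.inr a) t = 1 := (vl_inr_one ht.le).2 hv
  obtain ⟨e, he⟩ := pv_of_not_bad ha ht.le hr
  rcases hs.cases with ⟨r, h1, h2⟩ | ⟨r, d, h1, h2⟩ | ⟨l', h1, h2⟩
  · have e1 : ∀ y, rg (R.P t y) = some (some l) → rg (R.P (t + 1) y) = some (some l) →
        R.P (t + 1) y = R.P t y := by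
      intro y hy hy'
      refine hs.other y ?_ ?_
      · rintro rfl; rw [h1] at hy; simp at hy
      · rintro rfl; rw [hs.up, h1] at hy'; simp at hy'
    rwa [e1 x hx hx', e1 _ hr hr']
  · have hq : .inr a ≠ q := by
      rintro rfl
      rw [h2, rg_pv] at hr
      cases hr
      exact (not_mem_badSet ha ⟨hs, Or.inr ⟨l, d, h1, h2, Or.inr hv1⟩⟩).2 rfl
    by_cases hp : .inr a = p
    · rw [hp] at hd ⊢
      have hxp : x ≠ p := by rintro rfl; omega
      have hxq : x ≠ q := by
        rintro rfl
        rw [h1, h2, dp_pv, dp_pv] at hd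
        omega
      rw [hs.other x hxp hxq, hs.down, h2, dp_pv]
      rw [h1, dp_pv] at hd
      omega
    · rw [hs.other _ hp hq]
      by_cases hxp : x = p
      · subst hxp
        rw [h1, rg_pv] at hx
        cases hx
        rw [hs.down, h2, dp_pv]
        rw [h1, dp_pv] at hd
        rw [he, dp_pv] at hd ⊢
        have : e ≠ d + 1 := by
          rintro rfl
          exact hq (R.inj ht.le (he.trans h2.symm))
        omega
      by_cases hxq : x = q
      · subst hxq
        rw [hs.up, h1, dp_pv]
        rw [h2, dp_pv] at hd
        omega
      · rwa [hs.other _ hxp hxq]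
  · have := R.two_le_k
    have e1 : ∀ y, dp R.k (R.P (t + 1) y) = dp R.k (R.P t y) := by
      intro y
      by_cases hyp : y = p
      · rw [hyp, hs.down, h1, h2, dp_pv, dp_nook]; omega
      by_cases hyq : y = q
      · rw [hyq, hs.up, h1, h2, dp_pv, dp_nook]; omega
      rw [hs.other _ hyp hyq]
    rwa [e1, e1]

/-- A token of a slot gadget stays below a well-behaved token that has not yet left it. -/
lemma above_reg1 {a : ι ⊕ ι} {x : Tk m ι} {l : Fin m} (ha : .inr a ∉ R.badSet) (ht : t < R.N)
    (hv : R.reg1 a (t + 1)) (hl : R.home a = some l) (hx : rg (R.P t x) = some (some l))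
    (hx' : rg (R.P (t + 1) x) = some (some l))
    (hd : dp R.k (R.P t (.inr a)) < dp R.k (R.P t x)) :
    dp R.k (R.P (t + 1) (.inr a)) < dp R.k (R.P (t + 1) x) := by
  obtain ⟨p, q, hs⟩ := R.exists_swaps ht
  have hv0 := R.reg1_mono hv (Nat.le_succ t)
  have hr : rg (R.P t (.inr a)) = some (some l) := by rw [hv0.rg, hl]
  have hr' : rg (R.P (t + 1) (.inr a)) = some (some l) := by rw [hv.rg, hl]
  have hv1 : R.vl (.inr a) t = -1 := vl_inr_neg.2 hv0
  obtain ⟨e, he⟩ := pv_of_not_bad ha ht.le hr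
  rcases hs.cases with ⟨r, h1, h2⟩ | ⟨r, d, h1, h2⟩ | ⟨l', h1, h2⟩
  · have e1 : ∀ y, rg (R.P t y) = some (some l) → rg (R.P (t + 1) y) = some (some l) →
        R.P (t + 1) y = R.P t y := by
      intro y hy hy'
      refine hs.other y ?_ ?_
      · rintro rfl; rw [h1] at hy; simp at hy
      · rintro rfl; rw [hs.up, h1] at hy'; simp at hy'
    rwa [e1 x hx hx', e1 _ hr hr']
  · have hp : .inr a ≠ p := by
      rintro rfl
      rw [h1, rg_pv] at hr
      cases hr
      exact (not_mem_badSet ha ⟨hs, Or.inr ⟨l, d, h1, h2, Or.inl hv1⟩⟩).1 rfl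
    by_cases hq : .inr a = q
    · rw [hq] at hd ⊢
      have hxq : x ≠ q := by rintro rfl; omega
      have hxp : x ≠ p := by
        rintro rfl
        rw [h1, h2, dp_pv, dp_pv] at hd
        omega
      rw [hs.other x hxp hxq, hs.up, h1, dp_pv]
      rw [h2, dp_pv] at hd
      omega
    · rw [hs.other _ hp hq]
      by_cases hxq : x = q
      · subst hxq
        rw [h2, rg_pv] at hx
        cases hx
        rw [hs.up, h1, dp_pv]
        rw [h2, dp_pv] at hd
        rw [he, dp_pv] at hd ⊢
        have : e ≠ d := by
          rintro rfl
          exact hp (R.inj ht.le (he.trans h1.symm))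
        omega
      by_cases hxp : x = p
      · subst hxp
        rw [hs.down, h2, dp_pv]
        rw [h1, dp_pv] at hd
        omega
      · rwa [hs.other _ hxp hxq]
  · have := R.two_le_k
    have e1 : ∀ y, dp R.k (R.P (t + 1) y) = dp R.k (R.P t y) := by
      intro y
      by_cases hyp : y = p
      · rw [hyp, hs.down, h1, h2, dp_pv, dp_nook]; omega
      by_cases hyq : y = q
      · rw [hyq, hs.up, h1, h2, dp_pv, dp_nook]; omega
      rw [hs.other _ hyp hyq]
    rwa [e1, e1]

lemma below_reg3_le {a : ι ⊕ ι} {x : Tk m ι} {l : Fin m} {t' : ℕ} (ha : .inr a ∉ R.badSet)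
    (hv : R.reg3 a t) (hl : R.goal a = some l) (htt : t ≤ t') (ht : t' ≤ R.N)
    (hx : ∀ s, t ≤ s → s ≤ t' → rg (R.P s x) = some (some l))
    (hd : dp R.k (R.P t x) < dp R.k (R.P t (.inr a))) :
    dp R.k (R.P t' x) < dp R.k (R.P t' (.inr a)) := by
  induction t', htt using Nat.le_induction with
  | base => exact hd
  | succ t' htt ih =>
    exact below_reg3 ha ht (R.reg3_mono hv htt) hl (hx t' htt (Nat.le_succ _))
      (hx _ (by omega) le_rfl) (ih (by omega) fun s h1 h2 => hx s h1 (by omega))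

lemma above_reg1_le {a : ι ⊕ ι} {x : Tk m ι} {l : Fin m} {t' : ℕ} (ha : .inr a ∉ R.badSet)
    (hv : R.reg1 a t') (hl : R.home a = some l) (htt : t ≤ t') (ht : t' ≤ R.N)
    (hx : ∀ s, t ≤ s → s ≤ t' → rg (R.P s x) = some (some l))
    (hd : dp R.k (R.P t (.inr a)) < dp R.k (R.P t x)) :
    dp R.k (R.P t' (.inr a)) < dp R.k (R.P t' x) := by
  induction t', htt using Nat.le_induction with
  | base => exact hd
  | succ t' htt ih =>
    exact above_reg1 ha ht hv hl (hx t' htt (Nat.le_succ _))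
      (hx _ (by omega) le_rfl) (ih (R.reg1_mono hv (Nat.le_succ _)) (by omega)
        fun s h1 h2 => hx s h1 (by omega))

end Run

lemma exists_switch (p : ℕ → Prop) {t t' : ℕ} (htt : t ≤ t') (h : ¬p t) (h' : p t') :
    ∃ s, t ≤ s ∧ s < t' ∧ ¬p s ∧ p (s + 1) := by
  induction t', htt using Nat.le_induction with
  | base => exact absurd h' h
  | succ t' htt ih =>
    by_cases hp : p t'
    · obtain ⟨s, h1, h2, h3⟩ := ih hp
      exact ⟨s, h1, by omega, h3⟩
    · exact ⟨t', htt, by omega, hp, h'⟩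

namespace Run

variable {m : ℕ} {ι : Type} [Fintype ι] {R : Run m ι} {t c : ℕ} {p q : Tk m ι}

lemma rg_change {x : Tk m ι} (ht : t < R.N) (h : rg (R.P (t + 1) x) ≠ rg (R.P t x)) :
    (R.P t x = .root ∧ ∃ r, R.P (t + 1) x = pv r 0) ∨
      (R.P (t + 1) x = .root ∧ ∃ r, R.P t x = pv r 0) := by
  obtain ⟨p, q, hs⟩ := R.exists_swaps ht
  rcases hs.cases with ⟨r, hp, hq⟩ | ⟨r, d, hp, hq⟩ | ⟨l, hp, hq⟩
  · rcases hs.moved (x := x) (fun he => h (by rw [he])) with rfl | rfl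
    · exact Or.inl ⟨hp, r, hs.down.trans hq⟩
    · exact Or.inr ⟨hs.up.trans hp, r, hq⟩
  · exact absurd (hs.rg_eq (by rw [hp, hq]; simp) x) h
  · exact absurd (hs.rg_eq (by rw [hp, hq]; simp) x) h

lemma exists_leave_step {a : ι ⊕ ι} (ht : t ≤ R.N) (h : ¬R.reg1 a t) :
    ∃ s < t, R.reg1 a s ∧ ¬R.reg1 a (s + 1) ∧ R.P s (.inr a) = pv (R.home a) 0 := by
  obtain ⟨s, -, h2, h3, h4⟩ := exists_switch (fun s => ¬R.reg1 a s) (Nat.zero_le t)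
    (fun h => h (R.reg1_zero a)) h
  rw [not_not] at h3
  refine ⟨s, h2, h3, h4, ?_⟩
  rcases rg_change (R := R) (t := s) (x := .inr a) (by omega) (fun he => h4 ((reg1_iff_of_rg he).2 h3))
    with ⟨h5, -⟩ | ⟨-, r, h5⟩
  · have := h3.rg
    rw [h5] at this
    simp at this
  · have := h3.rg
    rw [h5, rg_pv] at this
    cases this
    exact h5

lemma exists_arrive_step {a : ι ⊕ ι} (ht : t ≤ R.N) (h : ¬R.reg3 a t) :
    ∃ s, t ≤ s ∧ s < R.N ∧ R.reg3 a (s + 1) ∧ R.P (s + 1) (.inr a) = pv (R.goal a) 0 := by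
  obtain ⟨s, h1, h2, h3, h4⟩ := exists_switch (fun s => R.reg3 a s) ht h (R.reg3_N a)
  refine ⟨s, h1, h2, h4, ?_⟩
  have h6 := h4.rg h2
  rcases rg_change (R := R) (t := s) (x := .inr a) (by omega)
    (fun he => h3 ((reg3_iff_of_rg h2 he).1 h4)) with ⟨-, r, h5⟩ | ⟨h5, -⟩
  · rw [h5, rg_pv] at h6
    cases h6
    exact h5
  · rw [h5] at h6
    simp at h6

lemma order_of_no_swap {b b' : ι} (hb : R.reg1 (.inl b) t) (hb' : R.reg1 (.inl b') t) (ht : t ≤ R.N)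
    (hpos : R.pos b < R.pos b') (hn : ∀ s < t, ¬R.XSwap s b b' ∧ ¬R.XSwap s b' b) :
    dp R.k (R.P t (.inr (.inl b))) < dp R.k (R.P t (.inr (.inl b'))) := by
  induction t with
  | zero =>
    rw [R.init_X, R.init_X]
    simpa [dp] using hpos
  | succ t ih =>
    rw [order_succ (by omega) hb hb' (hn t (by omega)).1 (hn t (by omega)).2]
    exact ih (R.reg1_mono hb (Nat.le_succ t)) (R.reg1_mono hb' (Nat.le_succ t)) (by omega)
      fun s hs => hn s (by omega)

lemma card_overtaken {h : ι} (ht : t ≤ R.N) (hh : ¬R.reg1 (.inl h) t) :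
    (Finset.univ.filter fun b => R.sl b = R.sl h ∧ R.pos b < R.pos h ∧ R.reg1 (.inl b) t).card ≤
      R.sameX.card := by
  obtain ⟨s, hst, h1, h2, h3⟩ := exists_leave_step ht hh
  have hex : ∀ b, ∃ s', (R.sl b = R.sl h ∧ R.pos b < R.pos h ∧ R.reg1 (.inl b) t) →
      R.XSwap s' b h ∨ R.XSwap s' h b := by
    intro b
    by_cases hb : R.sl b = R.sl h ∧ R.pos b < R.pos h ∧ R.reg1 (.inl b) t
    · by_contra hno
      push Not at hno
      have hbs := R.reg1_mono hb.2.2 hst.le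
      have := order_of_no_swap hbs h1 (by omega) hb.2.1 fun s' _ => (hno s').2
      rw [h3, dp_pv] at this
      have := R.dp_pos hbs.rg
      omega
    · exact ⟨0, fun h => absurd h hb⟩
  choose f hf using hex
  refine Finset.card_le_card_of_injOn f ?_ ?_
  · intro b hb
    have hb := (Finset.mem_filter.1 (Finset.mem_coe.1 hb)).2
    rcases hf b hb with hx | hx
    · exact Finset.mem_filter.2 ⟨Finset.mem_range.2 hx.1.lt, b, h, hx, hb.1⟩
    · exact Finset.mem_filter.2 ⟨Finset.mem_range.2 hx.1.lt, h, b, hx, hb.1.symm⟩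
  · intro b hb b' hb' he
    have hb := (Finset.mem_filter.1 (Finset.mem_coe.1 hb)).2
    have hb' := (Finset.mem_filter.1 (Finset.mem_coe.1 hb')).2
    have h4 := hf b hb
    have h5 := hf b' hb'
    rw [he] at h4
    rcases h4 with h4 | h4 <;> rcases h5 with h5 | h5
    · exact (h4.unique h5).1
    · have := (h4.unique h5).1
      subst this
      omega
    · have := (h4.unique h5).2
      subst this
      omega
    · exact (h4.unique h5).2

lemma card_early {h : ι} (ht : t ≤ R.N) (hh : ¬R.reg3 (.inl h) t) :
    (Finset.univ.filter fun b => R.sl b = R.sl h ∧ R.pos h < R.pos b ∧ R.reg3 (.inl b) t).card ≤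
      R.badSet.card := by
  obtain ⟨s, hts, hsN, h1, h2⟩ := exists_arrive_step ht hh
  refine Finset.card_le_card_of_injOn (fun b => .inr (.inl b)) ?_ ?_
  · intro b hb
    have hb := (Finset.mem_filter.1 (Finset.mem_coe.1 hb)).2
    obtain ⟨hb1, hb2, hb3⟩ := hb
    by_contra hbad
    have hbad : (.inr (.inl b) : Tk m ι) ∉ R.badSet := hbad
    have hb4 := R.reg3_mono hb3 (show t ≤ s + 1 by omega)
    have hgoal : R.goal (.inl b) = some (R.sl h) := by rw [goal, hb1]
    have hrb : rg (R.P (s + 1) (.inr (.inl b))) = some (some (R.sl h)) := by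
      rw [hb4.rg hsN, hgoal]
    obtain ⟨d, hd⟩ := pv_of_not_bad hbad hsN hrb
    have hd0 : d ≠ 0 := by
      rintro rfl
      have := R.inj hsN (hd.trans h2.symm)
      simp only [Sum.inr.injEq, Sum.inl.injEq] at this
      subst this
      omega
    have h3 := below_reg3_le (x := .inr (.inl h)) hbad hb4 hgoal (show s + 1 ≤ R.N by omega) le_rfl
      (fun s' h3 h4 => (R.reg3_mono h1 h3).rg h4) (by rw [h2, hd, dp_pv, dp_pv]; omega)
    rw [R.final_X, R.final_X] at h3
    have h4 := R.spos_mono h b hb1.symm hb2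
    have h5 := R.spos_lt b
    simp only [dp, hb1] at h3 h5
    omega
  · intro b _ b' _ he
    simpa using he

/-- While a token of slot `l` is on its way, few tokens of slot `l` leave the ordering gadget. -/
lemma Budget.life_X (hB : R.Budget c) (hk : 2 * c + 1 < R.k) {h : ι} {t₁ t₂ : ℕ} (h2 : t₂ ≤ R.N)
    (h12 : t₁ ≤ t₂) (hv1 : R.vl (.inr (.inl h)) t₁ = 0) (hv2 : R.vl (.inr (.inl h)) t₂ = 0) :
    R.cc (R.sl h) (R.out none t₂) ≤ R.cc (R.sl h) (R.out none t₁) + 11 * c + 4 := by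
  have r1 := (vl_inr_zero.1 hv1).1
  have r2 := (vl_inr_zero.1 hv2).2
  have b1 := (card_overtaken (by omega) r1).trans hB.key.2.1
  have b2 := (card_early h2 r2).trans hB.badSet_card
  have s1 := hB.sync hk (R.sl h) (show t₁ ≤ R.N by omega)
  have s2 := hB.sync hk (R.sl h) h2
  have e1 : R.cc (R.sl h) (R.pos h) ≤ R.lamX (R.sl h) t₁ + c := by
    refine le_trans ?_ (Nat.add_le_add_left b1 _)
    refine (Finset.card_le_card ?_).trans (Finset.card_union_le _ _)
    intro b hb
    simp only [Finset.mem_union, Finset.mem_filter, Finset.mem_univ, true_and] at hb ⊢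
    tauto
  have e2 : R.inn (some (R.sl h)) t₂ ≤ R.cc (R.sl h) (R.pos h) + 4 * c := by
    refine le_trans ?_ (Nat.add_le_add_left b2 _)
    rw [inn_some]
    refine (Finset.card_le_card ?_).trans (Finset.card_union_le _ _)
    intro b hb
    simp only [Finset.mem_union, Finset.mem_filter, Finset.mem_univ, true_and] at hb ⊢
    rcases lt_trichotomy (R.pos b) (R.pos h) with hlt | heq | hlt
    · exact Or.inl ⟨hb.1, hlt⟩
    · rw [R.pos_inj heq] at hb
      exact absurd hb.2 r2
    · exact Or.inr ⟨hb.1, hlt, hb.2⟩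
  omega

lemma Budget.life_Y (hB : R.Budget c) (hk : 2 * c + 1 < R.k) {h : ι} {t₁ t₂ : ℕ} (h2 : t₂ ≤ R.N)
    (h12 : t₁ ≤ t₂) (hv1 : R.vl (.inr (.inr h)) t₁ = 0) (hv2 : R.vl (.inr (.inr h)) t₂ = 0) :
    R.cc (R.sl h) (R.out none t₂) ≤ R.cc (R.sl h) (R.out none t₁) + 13 * c + 5 := by
  have e : ∀ {t}, t ≤ R.N → R.N - (R.N - t) = t := fun h => by omega
  have hv : ∀ {t}, t ≤ R.N → R.vl (.inr (.inr h)) t = 0 → R.rev.vl (.inr (.inl h)) (R.N - t) = 0 := by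
    intro t ht hv
    rw [rev_vl_inr _ (Nat.sub_le _ _), e ht, Sum.swap_inl, hv, neg_zero]
  have h3 := hB.rev.life_X hk (h := h) (t₁ := R.N - t₂) (t₂ := R.N - t₁) (Nat.sub_le _ _) (by omega)
    (hv h2 hv2) (hv (by omega) hv1)
  have conv : ∀ {t}, t ≤ R.N → R.rev.cc (R.sl h) (R.rev.out none (R.N - t)) +
      R.cc (R.sl h) (R.inn none t) = R.len (R.sl h) := by
    intro t ht
    have h4 := rev_out_none (R := R) (t := R.N - t) (Nat.sub_le _ _)
    rw [e ht] at h4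
    have h5 := rev_cc (R := R) (R.sl h) (a := R.inn none t) (by omega)
    have h6 : R.rev.out none (R.N - t) = R.L - R.inn none t := by omega
    rwa [h6]
  have c1 := conv (show t₁ ≤ R.N by omega)
  have c2 := conv h2
  have s1 := hB.sync hk (R.sl h) (show t₁ ≤ R.N by omega)
  have s2 := hB.sync hk (R.sl h) h2
  rw [rev_sl] at h3
  omega

end Run

lemma exists_first_exit (p : ℕ → Prop) {t t' : ℕ} (htt : t ≤ t') (h : p t) (h' : ¬p t') :
    ∃ s, t ≤ s ∧ s < t' ∧ (∀ r, t ≤ r → r ≤ s → p r) ∧ ¬p (s + 1) := by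
  have hex : ∃ s, t ≤ s ∧ ¬p s := ⟨t', htt, h'⟩
  have hs := Nat.find_spec hex
  have hle : Nat.find hex ≤ t' := Nat.find_min' hex ⟨htt, h'⟩
  have hne : Nat.find hex ≠ t := fun he => hs.2 (by rw [he]; exact h)
  refine ⟨Nat.find hex - 1, by omega, by omega, fun r hr hr' => ?_, ?_⟩
  · by_contra hp
    have := Nat.find_min' hex ⟨hr, hp⟩
    omega
  · rw [Nat.sub_add_cancel (by omega)]; exact hs.2

lemma exists_last_entry (p : ℕ → Prop) {t : ℕ} (h : p t) :
    ∃ s ≤ t, (∀ r, s ≤ r → r ≤ t → p r) ∧ (s = 0 ∨ ¬p (s - 1)) := by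
  have hex : ∃ s, s ≤ t ∧ ∀ r, s ≤ r → r ≤ t → p r :=
    ⟨t, le_rfl, fun r h1 h2 => (le_antisymm h1 h2) ▸ h⟩
  have hs := Nat.find_spec hex
  refine ⟨Nat.find hex, hs.1, hs.2, ?_⟩
  by_contra! hc
  have := Nat.find_min' hex (m := Nat.find hex - 1) ⟨by omega, fun r h1 h2 => by
    rcases eq_or_lt_of_le h1 with rfl | h1
    · exact hc.2
    · exact hs.2 r (by omega) h2⟩
  omega

namespace Run

variable {m : ℕ} {ι : Type} [Fintype ι] {R : Run m ι} {t c : ℕ}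

lemma vl_const {x : Tk m ι} {l : Fin m} {t' : ℕ} (htt : t ≤ t') (ht : t' ≤ R.N)
    (hx : ∀ s, t ≤ s → s ≤ t' → rg (R.P s x) = some (some l)) : R.vl x t' = R.vl x t := by
  induction t', htt using Nat.le_induction with
  | base => rfl
  | succ s hs ih =>
    rw [vl_eq_of_rg (by omega) ((hx _ (by omega) le_rfl).trans (hx s hs (by omega)).symm)]
    exact ih (by omega) fun r h1 h2 => hx r h1 (by omega)

lemma dp_le_succ (ht : t < R.N) (x : Tk m ι) :
    dp R.k (R.P t x) ≤ dp R.k (R.P (t + 1) x) + 1 := by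
  obtain ⟨u, v, hadj, hsw⟩ := R.step t ht
  have hk := R.two_le_k
  have hE : ∀ u v : Vtx m, Edge R.k u v → dp R.k u ≤ dp R.k v + 1 ∧ dp R.k v ≤ dp R.k u + 1 := by
    rintro _ _ (r | ⟨r, d⟩ | l) <;> simp
    omega
  have h := (edge_of_adj hadj).1
  rw [hsw]
  unfold swapV
  split_ifs with h1 h2
  · rw [h1]; rcases h with h | h <;> have := hE _ _ h <;> simp <;> omega
  · rw [h2]; rcases h with h | h <;> have := hE _ _ h <;> simp <;> omega
  · omega

/-- A slot gadget is traversed by a special token only while many tokens pass through it. -/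
lemma Budget.passage (hB : R.Budget c) (hk : 2 * c + 1 < R.k) {l : Fin m} (hlen : R.k ≤ R.len l)
    {te ta s : ℕ} {u u' : Tk m ι} (hea : te ≤ ta) (has : ta ≤ s) (hst : s < t) (ht : t ≤ R.N)
    (hu0 : R.P te u = pv (some l) 0) (hv : R.vl u te = 0)
    (hu : ∀ r, te ≤ r → r ≤ ta → rg (R.P r u) = some (some l))
    (hua : R.k ≤ dp R.k (R.P ta u) + 2 * c)
    (hu' : ∀ r, ta ≤ r → r ≤ s → rg (R.P r u') = some (some l))
    (hua' : R.k ≤ dp R.k (R.P ta u') + 1 + 2 * c) (hus : R.P s u' = pv (some l) 0) :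
    R.out (some l) te + R.k ≤ R.out (some l) t + 10 * c + 5 := by
  set D := R.k - 2 * c - 2 with hD
  have hta : ta ≤ R.N := by omega
  have hex : ∀ d < D, ∃ x, R.P ta x = pv (some l) d := fun d hd =>
    R.exists_at hta ((R.valid_pv _ _).2 (by simp only [lenR]; omega))
  set A := Finset.univ.filter fun a => R.goal a = some l ∧ R.reg3 a ta ∧ ¬R.reg3 a te with hA
  set B := Finset.univ.filter fun a => R.home a = some l ∧ ¬R.reg1 a t ∧ R.reg1 a ta with hBB
  have hAc : A.card + R.inn (some l) te = R.inn (some l) ta := by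
    rw [inn, inn, hA, ← Finset.card_union_of_disjoint]
    · congr 1
      ext a
      simp only [Finset.mem_union, Finset.mem_filter, Finset.mem_univ, true_and]
      constructor
      · rintro (h | h)
        · exact ⟨h.1, h.2.1⟩
        · exact ⟨h.1, reg3_mono h.2 hea⟩
      · intro h
        by_cases h3 : R.reg3 a te
        · exact Or.inr ⟨h.1, h3⟩
        · exact Or.inl ⟨h.1, h.2, h3⟩
    · rw [Finset.disjoint_filter]
      rintro a - h h'
      exact h.2.2 h'.2
  have hBc : B.card + R.out (some l) ta = R.out (some l) t := by
    rw [out, out, hBB, ← Finset.card_union_of_disjoint]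
    · congr 1
      ext a
      simp only [Finset.mem_union, Finset.mem_filter, Finset.mem_univ, true_and]
      constructor
      · rintro (h | h)
        · exact ⟨h.1, h.2.1⟩
        · exact ⟨h.1, fun h1 => h.2 (reg1_mono h1 (by omega))⟩
      · intro h
        by_cases h3 : R.reg1 a ta
        · exact Or.inl ⟨h.1, h.2, h3⟩
        · exact Or.inr ⟨h.1, h3⟩
    · rw [Finset.disjoint_filter]
      rintro a - h h'
      exact h'.2 h.2.2
  have hcard : D ≤ (R.specs (some l) ta ∪ R.badSet ∪ (A.image .inr ∪ B.image .inr)).card := by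
    choose f hf using hex
    have : (Finset.univ.image fun d : Fin D => f d.1 d.2) ⊆
        R.specs (some l) ta ∪ R.badSet ∪ (A.image .inr ∪ B.image .inr) := by
      intro x hx
      obtain ⟨d, -, rfl⟩ := Finset.mem_image.1 hx
      have hP := hf d.1 d.2
      have hdD := d.2
      generalize f d.1 d.2 = x at hP
      have hrg : rg (R.P ta x) = some (some l) := by rw [hP, rg_pv]
      simp only [Finset.mem_union, Finset.mem_image]
      by_cases hbad : x ∈ R.badSet
      · exact Or.inl (Or.inr hbad)
      rcases R.vl_cases x ta with h | h | h
      · obtain ⟨a, rfl, h1⟩ := vl_eq_neg_one.1 h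
        have hh : R.home a = some l := home_of_vl h hrg
        refine Or.inr (Or.inr ⟨a, ?_, rfl⟩)
        simp only [hBB, Finset.mem_filter, Finset.mem_univ, true_and]
        refine ⟨hh, fun h1t => ?_, h1⟩
        have h1s := reg1_mono h1t hst.le
        have := above_reg1_le hbad h1s hh has (by omega) hu' (by rw [hP, dp_pv]; omega)
        rw [hus, dp_pv] at this
        obtain ⟨d', hd'⟩ := pv_of_not_bad hbad (by omega) h1s.rg
        rw [hd', dp_pv] at this
        omega
      · exact Or.inl (Or.inl (mem_specs.2 ⟨h, hrg⟩))
      · obtain ⟨a, rfl, h3⟩ := (vl_eq_one hta).1 h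
        have hg : R.goal a = some l := goal_of_vl hta h hrg
        refine Or.inr (Or.inl ⟨a, ?_, rfl⟩)
        simp only [hA, Finset.mem_filter, Finset.mem_univ, true_and]
        refine ⟨hg, h3, fun h3e => ?_⟩
        have hte : te ≤ R.N := by omega
        obtain ⟨d', hd'⟩ := pv_of_not_bad hbad hte (h3e.rg hte)
        rw [hg] at hd'
        have hd0 : d' ≠ 0 := by
          rintro rfl
          have := R.inj hte (hd'.trans hu0.symm)
          rw [← this, (vl_inr_one hte).2 h3e] at hv
          omega
        have := below_reg3_le hbad h3e hg hea hta hu (by rw [hd', hu0, dp_pv, dp_pv]; omega)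
        rw [hP, dp_pv] at this
        omega
    refine le_trans (le_of_eq ?_) (Finset.card_le_card this)
    rw [Finset.card_image_of_injective, Finset.card_univ, Fintype.card_fin]
    intro d d' hdd
    have h1 := hf d.1 d.2
    have h2 := hf d'.1 d'.2
    simp only at hdd
    rw [hdd, h2] at h1
    exact Fin.ext (pv_inj h1).2.symm
  have h1 := Finset.card_union_le (R.specs (some l) ta ∪ R.badSet) (A.image .inr ∪ B.image .inr)
  have h2 := Finset.card_union_le (R.specs (some l) ta) R.badSet
  have h3 := Finset.card_union_le (A.image (Sum.inr : _ → Tk m ι)) (B.image .inr)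
  have h4 : (A.image (Sum.inr : _ → Tk m ι)).card ≤ A.card := Finset.card_image_le
  have h5 : (B.image (Sum.inr : _ → Tk m ι)).card ≤ B.card := Finset.card_image_le
  have h6 := hB.badSet_card
  have h7 := R.card_specs (some l) hta
  have h8 := hB.inn_le_out hk l hta
  have h9 := hB.out_le_inn (some l) hta
  have h10 := hB.out_le_inn (some l) (show te ≤ R.N by omega)
  simp only [reduceCtorEq, if_false] at h7
  omega

/-- Every slot gadget is occupied by a token which either never left it before or entered it long
ago, and which is an item unless its passage is short in terms of some slot. -/
lemma Budget.exists_occupant (hB : R.Budget c) (hk : 2 * c + 1 < R.k) (l : Fin m)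
    (hlen : R.k ≤ R.len l) (ht : t ≤ R.N) :
    ∃ (u : Tk m ι) (te : ℕ), te ≤ t ∧ (∀ s, te ≤ s → s ≤ t → rg (R.P s u) = some (some l)) ∧
      (te = 0 ∨ R.cc l (R.out none te) + R.k ≤ R.cc l (R.out none t) + 16 * c + 9) ∧
      ((∃ e, u = .inl e) ∨ ∃ l', te ≠ 0 ∧
        R.cc l' (R.out none t) ≤ R.cc l' (R.out none te) + 13 * c + 5) := by
  have hex : ∃ s, s ≤ t ∧ ∃ u, R.vl u t = 0 ∧
      (∀ r, s ≤ r → r ≤ t → rg (R.P r u) = some (some l)) ∧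
      R.k ≤ dp R.k (R.P s u) + 2 * c := by
    obtain ⟨x, hx, hd⟩ := hB.exists_deep hk l ht
    rw [mem_specs] at hx
    exact ⟨t, le_rfl, x, hx.1, fun r h1 h2 => (le_antisymm h1 h2) ▸ hx.2, hd⟩
  obtain ⟨hta, u, hv, hu, hd⟩ := Nat.find_spec hex
  have hmin : ∀ s < Nat.find hex, _ := fun s hs => Nat.find_min hex hs
  generalize Nat.find hex = ta at *
  obtain ⟨te, hte, hue, he⟩ := exists_last_entry (fun r => rg (R.P r u) = some (some l))
    (hu t hta le_rfl)
  have hve : R.vl u te = 0 := (vl_const hte ht hue).symm.trans hv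
  have hea : te ≤ ta := by
    by_contra! hlt
    rcases he with he | he
    · omega
    · exact he (hu _ (by omega) (by omega))
  refine ⟨u, te, hte, hue, ?_, ?_⟩
  · rcases Nat.eq_zero_or_pos te with h0 | hpos
    · exact Or.inl h0
    right
    have he : ¬rg (R.P (te - 1) u) = some (some l) := by
      rcases he with he | he
      · omega
      · exact he
    have hr := hue te le_rfl hte
    have hu0 : R.P te u = pv (some l) 0 := by
      have hc := rg_change (R := R) (t := te - 1) (x := u) (by omega) (by
        rw [Nat.sub_add_cancel hpos, hr]; exact fun h => he h.symm)
      rw [Nat.sub_add_cancel hpos] at hc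
      rcases hc with ⟨-, r, h⟩ | ⟨h, -⟩
      · rw [h, rg_pv] at hr
        rw [h, Option.some.inj hr]
      · rw [h] at hr; simp at hr
    have hne : te ≠ ta := by
      rintro rfl
      rw [hu0, dp_pv] at hd; omega
    obtain ⟨u', hu', hd'⟩ := hB.exists_deep hk l (show ta - 1 ≤ R.N by omega)
    rw [mem_specs] at hu'
    have hout : ¬ ∀ r, ta - 1 ≤ r → r ≤ t → rg (R.P r u') = some (some l) := fun hall =>
      hmin (ta - 1) (by omega) ⟨by omega, u',
        (vl_const (by omega) ht hall).trans hu'.1, hall, hd'⟩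
    push Not at hout
    obtain ⟨r, hr1, hr2, hr3⟩ := hout
    obtain ⟨s, hs1, hs2, hs3, hs4⟩ := exists_first_exit
      (fun r => rg (R.P r u') = some (some l)) hr1 hu'.2 hr3
    have hs0 : R.P s u' = pv (some l) 0 := by
      have hss := hs3 s hs1 le_rfl
      rcases rg_change (R := R) (t := s) (x := u') (by omega) (by rw [hss]; exact hs4) with
        ⟨h, -⟩ | ⟨-, r, h⟩
      · rw [h] at hss; simp at hss
      · rw [h, rg_pv] at hss
        rw [h, Option.some.inj hss]
    have hsa : ta ≤ s := by
      by_contra! hlt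
      have : s = ta - 1 := by omega
      rw [← this, hs0, dp_pv] at hd'
      omega
    have hstep := R.dp_le_succ (t := ta - 1) (by omega) u'
    rw [Nat.sub_add_cancel (by omega)] at hstep
    have := hB.passage hk hlen hea hsa (show s < t by omega) ht hu0 hve
      (fun r h1 h2 => hue r h1 (by omega)) hd (fun r h1 h2 => hs3 r (by omega) h2) (by omega) hs0
    have h1 := hB.sync hk l ht
    have h2 := hB.sync hk l (show te ≤ R.N by omega)
    omega
  · rcases u with e | a
    · exact Or.inl ⟨e, rfl⟩
    · right
      have h0 : te ≠ 0 := by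
        rintro rfl
        exact (vl_inr_zero.1 hve).1 (R.reg1_zero a)
      rcases a with b | b
      · exact ⟨R.sl b, h0, (hB.life_X hk ht hte hve hv).trans (by omega)⟩
      · exact ⟨R.sl b, h0, hB.life_Y hk ht hte hve hv⟩

end Run

lemma exists_level {f : ℕ → ℕ} {N v : ℕ} (h0 : f 0 ≤ v) (hN : v ≤ f N)
    (hstep : ∀ t < N, f (t + 1) ≤ f t + 1) : ∃ t ≤ N, f t = v := by
  induction N with
  | zero => exact ⟨0, le_rfl, le_antisymm h0 hN⟩
  | succ N ih =>
    by_cases h : v ≤ f N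
    · obtain ⟨t, ht, hv⟩ := ih h fun t ht => hstep t (by omega)
      exact ⟨t, by omega, hv⟩
    · have := hstep N (by omega)
      exact ⟨N + 1, le_rfl, by omega⟩

/-- The index of the first phase of slot `l` from `p` on. -/
noncomputable def nextPhase {m n : ℕ} (s : Fin n → Fin m) (l : Fin m) (p : ℕ) : ℕ :=
  sInf {q | p ≤ q ∧ (n ≤ q ∨ ∃ h : q < n, s ⟨q, h⟩ = l)}

lemma nextPhase_spec {m n : ℕ} (s : Fin n → Fin m) (l : Fin m) {p : ℕ} (hp : p ≤ n) :
    p ≤ nextPhase s l p ∧ nextPhase s l p ≤ n ∧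
      ∀ j : Fin n, p ≤ j.1 → j.1 < nextPhase s l p → s j ≠ l := by
  have hn : n ∈ {q | p ≤ q ∧ (n ≤ q ∨ ∃ h : q < n, s ⟨q, h⟩ = l)} := ⟨hp, Or.inl le_rfl⟩
  exact ⟨(Nat.sInf_mem ⟨n, hn⟩).1, Nat.sInf_le hn, fun j hj hlt hs =>
    Nat.notMem_of_lt_sInf hlt ⟨hj, Or.inr ⟨j.2, hs⟩⟩⟩

lemma nextPhase_succ {m n : ℕ} (s : Fin n → Fin m) {l : Fin m} (p : Fin n) (h : l ≠ s p) :
    nextPhase s l (p.1 + 1) = nextPhase s l p.1 := by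
  unfold nextPhase
  congr 1
  ext q
  simp only [Set.mem_ofPred_eq]
  refine ⟨fun hq => ⟨by omega, hq.2⟩, fun hq => ⟨?_, hq.2⟩⟩
  rcases eq_or_lt_of_le hq.1 with rfl | hlt
  · rcases hq.2 with h' | ⟨hlt, h'⟩
    · have := p.2; omega
    · exact absurd h'.symm h
  · exact hlt

/-- If the items standing at the leaves of a star change only at the swapped leaf of each phase,
then a subsequence of the swaps realizes the final placement. -/
lemma starSTSYes_of_occupants {m n : ℕ} {s : Fin n → Fin m} {π : Equiv.Perm (Option (Fin m))}
    (occ : ℕ → Fin m → Option (Fin m))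
    (hinj : ∀ p ≤ n, Function.Injective (occ p))
    (hstep : ∀ (p : Fin n) l, l ≠ s p → occ (p.1 + 1) l = occ p.1 l)
    (h0 : ∀ l, occ 0 l = some l) (hn : ∀ l, π (occ n l) = some l) :
    StarSTSYes π (List.ofFn s) := by
  have hsw : ∀ σ : List (Fin m), Function.Injective (starApply σ (id : Option (Fin m) → _)) := by
    intro σ
    induction σ using List.reverseRecOn with
    | nil => exact Function.injective_id
    | append_singleton σ l ih =>
      have : starApply (σ ++ [l]) (id : Option (Fin m) → _) =
          fun x => swapV (none, some l) (starApply σ id x) := by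
        simp [starApply]
      rw [this]
      exact (Run.swapV_invol _ _).injective.comp ih
  have key : ∀ p ≤ n, ∃ σ, σ.Sublist ((List.ofFn s).take p) ∧
      ∀ l, starApply σ id (occ p l) = some l := by
    intro p
    induction p with
    | zero => exact fun _ => ⟨[], by simp, fun l => by simp [starApply, h0]⟩
    | succ p ih =>
      intro hp
      obtain ⟨σ, hσ, hf⟩ := ih (by omega)
      have htake : (List.ofFn s).take (p + 1) = (List.ofFn s).take p ++ [s ⟨p, hp⟩] := by
        rw [List.take_add_one]
        simp [show p < n from hp]
      by_cases heq : occ (p + 1) (s ⟨p, hp⟩) = occ p (s ⟨p, hp⟩)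
      · refine ⟨σ, ?_, fun l => ?_⟩
        · rw [htake]; exact hσ.trans (List.sublist_append_left _ _)
        · by_cases hl : l = s ⟨p, hp⟩
          · rw [hl, heq, hf]
          · rw [hstep ⟨p, hp⟩ l hl, hf]
      · refine ⟨σ ++ [s ⟨p, hp⟩], ?_, fun l => ?_⟩
        · rw [htake]; exact hσ.append (List.Sublist.refl _)
        · have happ : ∀ x, starApply (σ ++ [s ⟨p, hp⟩]) id x =
              swapV (none, some (s ⟨p, hp⟩)) (starApply σ id x) := by
            intro x; simp [starApply]
          rw [happ]
          by_cases hl : l = s ⟨p, hp⟩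
          · subst hl
            have hnone : starApply σ id (occ (p + 1) (s ⟨p, hp⟩)) = none := by
              by_contra hne
              obtain ⟨l, hl⟩ := Option.ne_none_iff_exists'.1 hne
              have he := hsw σ (hl.trans (hf l).symm)
              by_cases hls : l = s ⟨p, hp⟩
              · rw [hls] at he; exact heq he
              · rw [← hstep ⟨p, hp⟩ l hls] at he
                exact hls (hinj _ hp he).symm
            rw [hnone]; simp [swapV]
          · rw [hstep ⟨p, hp⟩ l hl, hf]
            simp [swapV, hl]
  obtain ⟨σ, hσ, hf⟩ := key n le_rfl
  refine ⟨σ, hσ.trans (List.take_sublist _ _), funext fun e => ?_⟩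
  cases hpe : π e with
  | some l =>
    rw [← hn l] at hpe
    rw [π.injective hpe, hf]
  | none =>
    by_contra hne
    obtain ⟨l, hl⟩ := Option.ne_none_iff_exists'.1 hne
    have he := hsw σ (hl.trans (hf l).symm)
    rw [he, hn] at hpe
    simp at hpe

namespace Run

variable {m : ℕ} {ι : Type} [Fintype ι] {R : Run m ι} {c n B k' : ℕ} {s : Fin n → Fin m}

/-- The ordering gadget consists of `n` blocks of length `B`, the `j`-th one starting with `k`
letters `s j` and containing `k'` further letters of every slot. -/
structure Phased (R : Run m ι) (s : Fin n → Fin m) (B k' : ℕ) : Prop where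
  L_eq : R.L = n * B
  B_pos : 0 < B
  big : ∀ (j : Fin n) l, s j ≠ l → R.cc l (j * B + R.k) = R.cc l (j * B)
  pad : ∀ (j : Fin n) l, R.cc l ((j + 1) * B) = R.cc l (j * B + R.k) + k'

lemma Phased.gap (h : R.Phased s B k') (l : Fin m) {p q : ℕ} (hpq : p ≤ q) (hq : q ≤ n)
    (hs : ∀ j : Fin n, p ≤ j.1 → j.1 < q → s j ≠ l) :
    R.cc l (q * B) ≤ R.cc l (p * B) + (q - p) * k' := by
  induction q, hpq using Nat.le_induction with
  | base => simp
  | succ q hpq ih =>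
    have h1 := ih (by omega) fun j h1 h2 => hs j h1 (by omega)
    have h2 := h.big ⟨q, hq⟩ l (hs ⟨q, hq⟩ hpq (by simp))
    have h3 := h.pad ⟨q, hq⟩ l
    simp only at h2 h3
    have h4 : (q + 1 - p) * k' = (q - p) * k' + k' := by
      rw [show q + 1 - p = q - p + 1 by omega, Nat.succ_mul]
    omega

lemma Phased.exists_item (h : R.Phased s B k') (hB : R.Budget c) (hlen : ∀ l, R.k ≤ R.len l)
    (hk' : 13 * c + 5 < k') (hk : n * k' + 16 * c + 9 < R.k) (l : Fin m) {q t : ℕ} (hq : q ≤ n)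
    (ht : t ≤ R.N) (hout : R.out none t = q * B) :
    ∃ (e : Option (Fin m)) (te : ℕ), te ≤ t ∧
      (∀ r, te ≤ r → r ≤ t → rg (R.P r (.inl e)) = some (some l)) ∧
      (te = 0 ∨ R.cc l (R.out none te) + R.k ≤ R.cc l (q * B) + 16 * c + 9) := by
  obtain ⟨u, te, hte, hu, hw, hcase⟩ := hB.exists_occupant (by omega) l (hlen l) ht
  rw [hout] at hw hcase
  rcases hcase with ⟨e, rfl⟩ | ⟨l', hte0, hl'⟩
  · exact ⟨e, te, hte, hu, hw⟩
  exfalso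
  have hw := hw.resolve_left hte0
  by_cases hex : ∃ j, ∃ hj : j < n, j < q ∧ s ⟨j, hj⟩ = l
  · obtain ⟨j, ⟨hj, hjq, hsj⟩, hmax⟩ : ∃ j, (∃ hj : j < n, j < q ∧ s ⟨j, hj⟩ = l) ∧
        ∀ j', (∃ hj : j' < n, j' < q ∧ s ⟨j', hj⟩ = l) → j' ≤ j := by
      obtain ⟨j0, hj0⟩ := hex
      have hb : ∀ j', (∃ hj : j' < n, j' < q ∧ s ⟨j', hj⟩ = l) → j' ≤ n := fun j' h' => h'.1.le
      exact ⟨_, Nat.findGreatest_spec (P := fun j => ∃ hj : j < n, j < q ∧ s ⟨j, hj⟩ = l)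
        (hb _ hj0) hj0, fun j' h' =>
        Nat.le_findGreatest (hb _ h') h'⟩
    have h1 := h.gap l (p := j + 1) hjq hq fun j' h1 h2 h3 => by
      have := hmax j'.1 ⟨j'.2, h2, h3⟩
      omega
    have h2 := h.pad ⟨j, hj⟩ l
    have h3 := h.pad ⟨j, hj⟩ l'
    simp only at h2 h3
    have h4 : (q - (j + 1)) * k' + k' ≤ n * k' := by
      rw [← Nat.succ_mul]; exact Nat.mul_le_mul_right _ (by omega)
    have h5 : R.out none te ≤ j * B + R.k := by
      by_contra! hlt
      have := R.cc_mono l hlt.le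
      omega
    have h6 := R.cc_mono l' h5
    have h7 := R.cc_mono l' (Nat.mul_le_mul_right B (show j + 1 ≤ q from hjq))
    omega
  · have h1 := h.gap l (p := 0) (Nat.zero_le q) hq fun j _ hjq hs => hex ⟨j.1, j.2, hjq, hs⟩
    have h2 : (q - 0) * k' ≤ n * k' := Nat.mul_le_mul_right _ (by omega)
    have h3 := R.cc_mono l (Nat.zero_le (R.out none te))
    rw [Nat.zero_mul] at h1
    omega

lemma Phased.exists_occupants (h : R.Phased s B k') (hB : R.Budget c) (hlen : ∀ l, R.k ≤ R.len l)
    (hk' : 13 * c + 5 < k') (hk : n * k' + 16 * c + 9 < R.k) (hn : 0 < n) :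
    ∃ occ : ℕ → Fin m → Option (Fin m), (∀ p ≤ n, Function.Injective (occ p)) ∧
      (∀ (p : Fin n) l, l ≠ s p → occ (p.1 + 1) l = occ p.1 l) ∧
      (∀ l, rg (R.P 0 (.inl (occ 0 l))) = some (some l)) ∧
      ∀ l, rg (R.P R.N (.inl (occ n l))) = some (some l) := by
  have hθ : ∀ q, ∃ θ ≤ R.N, q ≤ n → R.out none θ = q * B ∧ (q = 0 → θ = 0) ∧
      (q = n → θ = R.N) := by
    intro q
    rcases Nat.eq_zero_or_pos q with rfl | hq
    · exact ⟨0, Nat.zero_le _, fun _ => ⟨by rw [R.out_zero, zero_mul], fun _ => rfl,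
        fun h => absurd h hn.ne⟩⟩
    rcases eq_or_ne q n with rfl | hqn
    · exact ⟨R.N, le_rfl, fun _ => ⟨by rw [R.out_N, lenR, h.L_eq], fun h => by omega, fun _ => rfl⟩⟩
    by_cases hle : q ≤ n
    · obtain ⟨θ, hθ, hv⟩ := exists_level (f := R.out none) (N := R.N) (v := q * B)
        (by rw [R.out_zero]; exact Nat.zero_le _)
        (by rw [R.out_N, lenR, h.L_eq]; exact Nat.mul_le_mul_right _ hle)
        fun t ht => R.out_succ_le none ht
      exact ⟨θ, hθ, fun _ => ⟨hv, fun h => by omega, fun h => absurd h hqn⟩⟩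
    · exact ⟨0, Nat.zero_le _, fun h => absurd h hle⟩
  choose θ hθN hθ using hθ
  have hitem : ∀ l q, ∃ e : Option (Fin m), q ≤ n → ∃ te ≤ θ q,
      (∀ r, te ≤ r → r ≤ θ q → rg (R.P r (.inl e)) = some (some l)) ∧
      (te = 0 ∨ R.cc l (R.out none te) + R.k ≤ R.cc l (q * B) + 16 * c + 9) := by
    intro l q
    by_cases hq : q ≤ n
    · obtain ⟨e, te, hte⟩ := h.exists_item hB hlen hk' hk l hq (hθN q) (hθ q hq).1
      exact ⟨e, fun _ => ⟨te, hte⟩⟩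
    · exact ⟨none, fun h => absurd h hq⟩
  choose u hu using hitem
  have hin : ∀ p ≤ n, ∀ l, rg (R.P (θ p) (.inl (u l (nextPhase s l p)))) = some (some l) := by
    intro p hp l
    obtain ⟨hpq, hqn, hs⟩ := nextPhase_spec s l hp
    obtain ⟨te, hte, hr, hw⟩ := hu l _ hqn
    generalize nextPhase s l p = q at *
    refine hr _ ?_ ?_
    · rcases hw with rfl | hw
      · exact Nat.zero_le _
      have h1 := h.gap l hpq hqn hs
      have h2 : (q - p) * k' ≤ n * k' := Nat.mul_le_mul_right _ (by omega)
      by_contra! hlt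
      have h3 := R.cc_mono l (R.out_mono none hlt.le)
      rw [(hθ p hp).1] at h3
      omega
    · rcases eq_or_lt_of_le hpq with rfl | hlt
      · exact le_rfl
      by_contra! hlt'
      have := R.out_mono none hlt'.le
      rw [(hθ p hp).1, (hθ q hqn).1] at this
      exact absurd (Nat.le_of_mul_le_mul_right this h.B_pos) (by omega)
  refine ⟨fun p l => u l (nextPhase s l p), fun p hp l l' hll => ?_, fun p l hl => ?_, fun l => ?_,
    fun l => ?_⟩
  · have h1 := hin p hp l
    have h2 := hin p hp l'
    simp only at hll
    rw [hll, h2] at h1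
    simpa using h1.symm
  · simp only [nextPhase_succ s p hl]
  · have := hin 0 (Nat.zero_le _) l
    rwa [(hθ 0 (Nat.zero_le _)).2.1 rfl] at this
  · have := hin n le_rfl l
    rwa [(hθ n le_rfl).2.2 rfl] at this

end Run

end RunTheory

section Layout

variable {m n : ℕ}

lemma rho_mid_lt {s : Fin n → Fin m} (hcons : ∀ (j : Fin n) (h : j.val + 1 < n), s j ≠ s ⟨j.val + 1, h⟩)
    {i : Fin m} {j : Fin n} (h1 : some i ≠ nxt s j) (h2 : i ≠ s j) :
    (if (nxt s j).isSome then 1 else 0) +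
    (Finset.univ.filter fun i' : Fin m =>
      i'.val < i.val ∧ i' ≠ s j ∧ some i' ≠ nxt s j).card + 1 < m := by
  have hsub : (Finset.univ.filter fun i' : Fin m =>
      i'.val < i.val ∧ i' ≠ s j ∧ some i' ≠ nxt s j) ⊆
      ((Finset.univ.erase i).erase (s j)).filter fun i' => some i' ≠ nxt s j := by
    intro x hx
    simp only [Finset.mem_filter, Finset.mem_univ, true_and] at hx
    simp only [Finset.mem_filter, Finset.mem_erase, Finset.mem_univ, and_true]
    exact ⟨⟨hx.2.1, fun h => by rw [h] at hx; omega⟩, hx.2.2⟩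
  have hc2 : ((Finset.univ.erase i).erase (s j)).card + 2 = m := by
    have e1 := Finset.card_erase_add_one (Finset.mem_univ i)
    have e2 := Finset.card_erase_add_one
      (show s j ∈ Finset.univ.erase i from Finset.mem_erase.2 ⟨h2.symm, Finset.mem_univ _⟩)
    simp only [Finset.card_univ, Fintype.card_fin] at e1
    omega
  by_cases h : j.val + 1 < n
  · have hn : nxt s j = some (s ⟨j.val + 1, h⟩) := by simp [nxt, h]
    have hmem : s ⟨j.val + 1, h⟩ ∈ (Finset.univ.erase i).erase (s j) := by
      rw [hn] at h1
      simp only [Finset.mem_erase, Finset.mem_univ, and_true]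
      exact ⟨(hcons j h).symm, fun h' => h1 (by rw [h'])⟩
    have e3 := Finset.card_erase_add_one hmem
    have hsub' : (((Finset.univ.erase i).erase (s j)).filter fun i' => some i' ≠ nxt s j) ⊆
        ((Finset.univ.erase i).erase (s j)).erase (s ⟨j.val + 1, h⟩) := by
      intro x hx
      rw [Finset.mem_filter, hn] at hx
      exact Finset.mem_erase.2 ⟨fun h' => hx.2 (by rw [h']), hx.1⟩
    have := Finset.card_le_card (hsub.trans hsub')
    have hif : (if (nxt s j).isSome then 1 else 0) = 1 := by simp [hn]
    omega
  · have hn : nxt s j = none := by simp [nxt, h]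
    have := Finset.card_le_card (hsub.trans (Finset.filter_subset _ _))
    have hif : (if (nxt s j).isSome then 1 else 0) = 0 := by simp [hn]
    omega

lemma rho_lt {s : Fin n → Fin m} (hcons : ∀ (j : Fin n) (h : j.val + 1 < n), s j ≠ s ⟨j.val + 1, h⟩)
    (i : Fin m) (j : Fin n) : rho s i j < m := by
  have := i.2
  unfold rho
  split_ifs with h1 h2
  · omega
  · omega
  all_goals
    have := rho_mid_lt hcons h1 h2
    simp_all
    try omega

lemma rho_inj {s : Fin n → Fin m} (hm : 2 ≤ m)
    (hcons : ∀ (j : Fin n) (h : j.val + 1 < n), s j ≠ s ⟨j.val + 1, h⟩)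
    (j : Fin n) {i i' : Fin m} (h : rho s i j = rho s i' j) : i = i' := by
  wlog hlt : i.val < i'.val generalizing i i'
  · rcases eq_or_ne i i' with he | he
    · exact he
    · exact (this h.symm (by have : i.val ≠ i'.val := fun h => he (Fin.ext h); omega)).symm
  exfalso
  have hne : i ≠ i' := fun h => by rw [h] at hlt; omega
  unfold rho at h
  by_cases h1 : some i = nxt s j
  · have h1' : some i' ≠ nxt s j := fun h' => hne (Option.some.inj (h1.trans h'.symm))
    have hs : (nxt s j).isSome := by rw [← h1]; rfl
    rw [if_pos h1, if_neg h1', if_pos hs] at h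
    split_ifs at h <;> omega
  · by_cases h1' : some i' = nxt s j
    · have hs : (nxt s j).isSome := by rw [← h1']; rfl
      rw [if_neg h1, if_pos h1', if_pos hs] at h
      split_ifs at h <;> omega
    · rw [if_neg h1, if_neg h1'] at h
      by_cases h2 : i = s j
      · have h2' : i' ≠ s j := fun h' => hne (h2.trans h'.symm)
        have := rho_mid_lt hcons h1' h2'
        rw [if_pos h2, if_neg h2'] at h
        omega
      · have := rho_mid_lt hcons h1 h2
        by_cases h2' : i' = s j
        · rw [if_neg h2, if_pos h2'] at h
          omega
        · rw [if_neg h2, if_neg h2', Nat.add_left_cancel_iff] at h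
          refine absurd h (Finset.card_lt_card ?_).ne
          rw [Finset.ssubset_iff_of_subset]
          · exact ⟨i, Finset.mem_filter.2 ⟨Finset.mem_univ _, hlt, h2, h1⟩, by simp⟩
          · intro x hx
            simp only [Finset.mem_filter, Finset.mem_univ, true_and] at hx ⊢
            exact ⟨by omega, hx.2⟩

/-- The part of slot gadget `i` belonging to phase `j`. -/
def width (s : Fin n → Fin m) (i : Fin m) (j : Fin n) : ℕ :=
  kk' m n + if s j = i then kk m n else 0

lemma offQ_add_width_le {s : Fin n → Fin m} (i : Fin m) {j j' : Fin n} (h : j.val < j'.val) :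
    offQ s i j + width s i j ≤ offQ s i j' := by
  unfold offQ
  have hj : j ∉ Finset.univ.filter (fun j' : Fin n => j'.val < j.val) := by simp
  rw [add_comm, show width s i j = kk' m n + (if s j = i then kk m n else 0) from rfl,
    ← Finset.sum_insert (f := fun j' => kk' m n + if s j' = i then kk m n else 0) hj]
  refine Finset.sum_le_sum_of_subset fun x hx => ?_
  simp only [Finset.mem_insert, Finset.mem_filter, Finset.mem_univ, true_and] at hx ⊢
  rcases hx with rfl | hx <;> omega

lemma sum_width (s : Fin n → Fin m) (i : Fin m) : ∑ j, width s i j = lenSlot s i := by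
  unfold width lenSlot cnt
  rw [Finset.sum_add_distrib, Finset.sum_const, ← Finset.sum_filter, Finset.sum_const]
  simp [add_comm]

lemma offQ_add_tOffP (s : Fin n → Fin m) (i : Fin m) (j : Fin n) :
    offQ s i j + width s i j + tOffP s i j = lenSlot s i := by
  rw [← sum_width]
  have h1 := Finset.sum_filter_add_sum_filter_not (Finset.univ : Finset (Fin n))
    (fun j' => j'.val < j.val) (width s i)
  have h2 : (Finset.univ.filter fun j' : Fin n => ¬j'.val < j.val) =
      insert j (Finset.univ.filter fun j' : Fin n => j.val < j'.val) := by
    ext x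
    simp only [Finset.mem_filter, Finset.mem_univ, true_and, Finset.mem_insert, Fin.ext_iff]
    omega
  rw [h2, Finset.sum_insert (by simp)] at h1
  unfold offQ tOffP
  unfold width at *
  omega

/-- The common index type of the non-item tokens of either direction. -/
abbrev Blk (m n : ℕ) := (Fin n × Fin (kk m n)) ⊕ (Fin m × Fin n × Fin (kk' m n))

/-- The slot visited by a non-item token. -/
def bsl (s : Fin n → Fin m) : Blk m n → Fin m
  | .inl x => s x.1
  | .inr x => x.1

/-- The phase of a non-item token. -/
def bph : Blk m n → Fin n
  | .inl x => x.1
  | .inr x => x.2.1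

/-- The position of a token inside its phase, in the ordering gadget. -/
def boff (s : Fin n → Fin m) : Blk m n → ℕ
  | .inl x => x.2.1
  | .inr x => kk m n + rho s x.1 x.2.1 * kk' m n + x.2.2.1

/-- The position of a token in the ordering gadget. -/
def bpos (s : Fin n → Fin m) (b : Blk m n) : ℕ :=
  (bph b).1 * (kk m n + m * kk' m n) + boff s b

/-- The position of a token inside its phase, in the slot gadget. -/
def bsoff (s : Fin n → Fin m) : Blk m n → ℕ
  | .inl x => x.2.1
  | .inr x => (if s x.2.1 = x.1 then kk m n else 0) + x.2.2.1

/-- The position of a token in the slot gadget. -/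
def bspos (s : Fin n → Fin m) (b : Blk m n) : ℕ := offQ s (bsl s b) (bph b) + bsoff s b

lemma bsoff_lt (s : Fin n → Fin m) (b : Blk m n) : bsoff s b < width s (bsl s b) (bph b) := by
  rcases b with ⟨j, a⟩ | ⟨i, j, a⟩
  · have := a.2
    simp only [bsoff, width, bsl, bph, if_true]
    omega
  · have := a.2
    by_cases h : s j = i <;> simp [bsoff, width, bsl, bph, h]
    omega

lemma boff_lt {s : Fin n → Fin m} (hcons : ∀ (j : Fin n) (h : j.val + 1 < n), s j ≠ s ⟨j.val + 1, h⟩)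
    (b : Blk m n) : boff s b < kk m n + m * kk' m n := by
  rcases b with ⟨j, a⟩ | ⟨i, j, a⟩
  · have := a.2
    simp only [boff]
    omega
  · have := a.2
    have h := Nat.mul_le_mul_right (kk' m n) (Nat.succ_le_of_lt (rho_lt hcons i j))
    rw [Nat.succ_mul] at h
    simp only [boff]
    omega

lemma boff_inr_ge (s : Fin n → Fin m) (x : Fin m × Fin n × Fin (kk' m n)) :
    kk m n ≤ boff s (.inr x) := by
  simp only [boff]; omega

lemma bpos_lt_succ {s : Fin n → Fin m}
    (hcons : ∀ (j : Fin n) (h : j.val + 1 < n), s j ≠ s ⟨j.val + 1, h⟩) (b : Blk m n) :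
    bpos s b < ((bph b).1 + 1) * (kk m n + m * kk' m n) := by
  have := boff_lt hcons b
  rw [Nat.succ_mul]
  unfold bpos
  omega

lemma bph_le {s : Fin n → Fin m}
    (hcons : ∀ (j : Fin n) (h : j.val + 1 < n), s j ≠ s ⟨j.val + 1, h⟩) {b : Blk m n} {j : ℕ}
    (h : j * (kk m n + m * kk' m n) ≤ bpos s b) : j ≤ (bph b).1 := by
  by_contra! hlt
  have h1 := bpos_lt_succ hcons b
  have h2 := Nat.mul_le_mul_right (kk m n + m * kk' m n) (Nat.succ_le_of_lt hlt)
  rw [Nat.succ_eq_add_one] at h2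
  omega

lemma bpos_inj {s : Fin n → Fin m} (hm : 2 ≤ m)
    (hcons : ∀ (j : Fin n) (h : j.val + 1 < n), s j ≠ s ⟨j.val + 1, h⟩) :
    Function.Injective (bpos s) := by
  intro b b' h
  have h1 : (bph b).1 = (bph b').1 := by
    refine le_antisymm (bph_le hcons ?_) (bph_le hcons ?_)
    · rw [← h]; exact Nat.le_add_right _ _
    · rw [h]; exact Nat.le_add_right _ _
  have h2 : boff s b = boff s b' := by
    unfold bpos at h
    rw [h1] at h
    omega
  have hph := Fin.ext h1
  rcases b with ⟨j, a⟩ | ⟨i, j, a⟩ <;> rcases b' with ⟨j', a'⟩ | ⟨i', j', a'⟩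
  · simp only [boff, bph] at h2 hph
    rw [hph, Fin.ext h2]
  · have := boff_inr_ge s (i', j', a')
    have := a.2
    simp only [boff] at h2 this
    omega
  · have := boff_inr_ge s (i, j, a)
    have := a'.2
    simp only [boff] at h2 this
    omega
  · simp only [boff, bph] at h2 hph
    subst hph
    have ha := a.2
    have ha' := a'.2
    have hr : rho s i j = rho s i' j := by
      rcases lt_trichotomy (rho s i j) (rho s i' j) with hlt | heq | hlt
      · have := Nat.mul_le_mul_right (kk' m n) (Nat.succ_le_of_lt hlt)
        rw [Nat.succ_mul] at this
        omega
      · exact heq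
      · have := Nat.mul_le_mul_right (kk' m n) (Nat.succ_le_of_lt hlt)
        rw [Nat.succ_mul] at this
        omega
    rw [hr] at h2
    rw [rho_inj hm hcons j hr, Fin.ext (show a.1 = a'.1 by omega)]

lemma bspos_lt (s : Fin n → Fin m) (b : Blk m n) : bspos s b < lenSlot s (bsl s b) := by
  have h1 := bsoff_lt s b
  have h2 := offQ_add_tOffP s (bsl s b) (bph b)
  unfold bspos
  omega

lemma bspos_mono {s : Fin n → Fin m}
    (hcons : ∀ (j : Fin n) (h : j.val + 1 < n), s j ≠ s ⟨j.val + 1, h⟩) {b b' : Blk m n}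
    (hsl : bsl s b = bsl s b') (h : bpos s b < bpos s b') : bspos s b < bspos s b' := by
  have hle : (bph b).1 ≤ (bph b').1 :=
    bph_le hcons ((Nat.le_add_right _ _).trans h.le)
  unfold bspos
  rcases lt_or_eq_of_le hle with hlt | heq
  · have h1 := bsoff_lt s b
    have h2 := offQ_add_width_le (s := s) (bsl s b) hlt
    rw [← hsl]
    omega
  · have hoff : boff s b < boff s b' := by
      unfold bpos at h
      rw [heq] at h
      omega
    have hph := Fin.ext heq
    rw [hsl, hph, Nat.add_lt_add_iff_left]
    rcases b with ⟨j, a⟩ | ⟨i, j, a⟩ <;> rcases b' with ⟨j', a'⟩ | ⟨i', j', a'⟩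
    · exact hoff
    · have := a.2
      simp only [bsl, bph] at hsl hph
      subst hph
      simp only [bsoff, hsl, if_true]
      omega
    · have := boff_inr_ge s (i, j, a)
      have := a'.2
      simp only [boff] at hoff this
      omega
    · simp only [bsl, bph] at hsl hph
      subst hph hsl
      simp only [boff, bsoff] at hoff ⊢
      omega

lemma card_blk_filter (p : Blk m n → Prop) [DecidablePred p] : (Finset.univ.filter p).card =
    (Finset.univ.filter fun x => p (.inl x)).card +
      (Finset.univ.filter fun x => p (.inr x)).card := by
  simp only [Finset.card_filter, Fintype.sum_sum_type]

lemma card_bsl (s : Fin n → Fin m) (l : Fin m) :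
    (Finset.univ.filter fun b => bsl s b = l).card = lenSlot s l := by
  rw [card_blk_filter]
  have h1 : (Finset.univ.filter fun x : Fin n × Fin (kk m n) => bsl s (.inl x) = l) =
      (Finset.univ.filter fun j => s j = l) ×ˢ Finset.univ := by
    ext x
    rw [Finset.mem_filter]
    simp [bsl]
  have h2 : (Finset.univ.filter fun x : Fin m × Fin n × Fin (kk' m n) => bsl s (.inr x) = l) =
      {l} ×ˢ Finset.univ := by
    ext x
    rw [Finset.mem_filter, Finset.mem_product]
    simp [bsl]
  rw [h1, h2, Finset.card_product, Finset.card_product]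
  simp [lenSlot, cnt]

lemma card_blk (m n : ℕ) : Fintype.card (Blk m n) = lenOrd m n := by
  simp [lenOrd]
  ring

lemma lenOrd_eq (m n : ℕ) : lenOrd m n = n * (kk m n + m * kk' m n) := by
  unfold lenOrd; ring

lemma bpos_lt {s : Fin n → Fin m}
    (hcons : ∀ (j : Fin n) (h : j.val + 1 < n), s j ≠ s ⟨j.val + 1, h⟩) (b : Blk m n) :
    bpos s b < lenOrd m n := by
  rw [lenOrd_eq]
  exact (bpos_lt_succ hcons b).trans_le (Nat.mul_le_mul_right _ (bph b).2)

end Layout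

section Reduction

variable {m n : ℕ}

/-- The token of the construction corresponding to an abstract token. -/
def tokOf : Tk m (Blk m n) → Tok m n
  | .inl e => .inl e
  | .inr (.inl (.inl x)) => .inr (.inl x)
  | .inr (.inr (.inl x)) => .inr (.inr (.inl x))
  | .inr (.inl (.inr x)) => .inr (.inr (.inr (.inl x)))
  | .inr (.inr (.inr x)) => .inr (.inr (.inr (.inr x)))

lemma initTok_item (s : Fin n → Fin m) (e : Option (Fin m)) :
    initTok s (tokOf (.inl e)) = itemVtx e := by
  cases e <;> rfl

lemma tgtTok_item (s : Fin n → Fin m) (π : Equiv.Perm (Option (Fin m))) (e : Option (Fin m)) :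
    tgtTok s π (tokOf (.inl e)) = itemVtx (π e) := by
  simp only [tokOf, tgtTok]
  cases π e <;> rfl

lemma initTok_X (s : Fin n → Fin m) (b : Blk m n) :
    initTok s (tokOf (.inr (.inl b))) = .ord (bpos s b) := by
  rcases b with ⟨j, a⟩ | ⟨i, j, a⟩
  · rfl
  · simp only [tokOf, initTok, bpos, bph, boff, add_assoc]

lemma initTok_Y (s : Fin n → Fin m) (b : Blk m n) :
    initTok s (tokOf (.inr (.inr b))) = .slot (bsl s b) (bspos s b) := by
  rcases b with ⟨j, a⟩ | ⟨i, j, a⟩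
  · rfl
  · simp only [tokOf, initTok, bspos, bph, bsl, bsoff, add_assoc]

lemma tgtTok_Y (s : Fin n → Fin m) (π : Equiv.Perm (Option (Fin m))) (b : Blk m n) :
    tgtTok s π (tokOf (.inr (.inr b))) = .ord (lenOrd m n - 1 - bpos s b) := by
  rcases b with ⟨j, a⟩ | ⟨i, j, a⟩
  · rfl
  · simp only [tokOf, tgtTok, bpos, bph, boff, add_assoc]

lemma tgtTok_X (s : Fin n → Fin m) (π : Equiv.Perm (Option (Fin m))) (b : Blk m n) :
    tgtTok s π (tokOf (.inr (.inl b))) =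
      .slot (bsl s b) (lenSlot s (bsl s b) - 1 - bspos s b) := by
  rcases b with ⟨j, a⟩ | ⟨i, j, a⟩
  · have h := offQ_add_tOffP s (s j) j
    have := a.2
    simp only [width, if_true] at h
    simp only [tokOf, tgtTok, bspos, bph, bsl, bsoff, Vtx.slot.injEq, true_and]
    omega
  · have h := offQ_add_tOffP s i j
    have := a.2
    simp only [tokOf, tgtTok, bspos, bph, bsl, bsoff, Vtx.slot.injEq, true_and]
    by_cases hs : s j = i
    · simp only [width, hs, if_true] at h ⊢
      omega
    · simp only [width, hs, if_false] at h ⊢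
      omega

/-- The run of a swap sequence solving the constructed instance. -/
def runOf (s : Fin n → Fin m) (π : Equiv.Perm (Option (Fin m))) (hm : 2 ≤ m) (hk : 2 ≤ kk m n)
    (hcons : ∀ (j : Fin n) (h : j.val + 1 < n), s j ≠ s ⟨j.val + 1, h⟩)
    (σ : List (Vtx m × Vtx m)) (hedges : ∀ e ∈ σ, (TheGraph s).Adj e.1 e.2)
    (hsol : applySwaps σ (initTok s) = tgtTok s π) : Run m (Blk m n) where
  k := kk m n
  L := lenOrd m n
  N := σ.length
  len := lenSlot s
  sl := bsl s
  pos := bpos s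
  spos := bspos s
  P t x := applySwaps (σ.take t) (initTok s) (tokOf x)
  two_le_k := hk
  L_eq := (card_blk m n).symm
  len_eq l := (card_bsl s l).symm
  pos_inj := bpos_inj hm hcons
  pos_lt := bpos_lt hcons
  spos_lt := bspos_lt s
  spos_mono _ _ := bspos_mono hcons
  init_X := initTok_X s
  init_Y := initTok_Y s
  final_X b := by rw [List.take_length, hsol, tgtTok_X]
  final_Y b := by rw [List.take_length, hsol, tgtTok_Y]
  init_item := ⟨Equiv.refl _, initTok_item s⟩
  final_item := ⟨π, fun e => by rw [List.take_length, hsol, tgtTok_item]⟩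
  step t ht := ⟨σ[t].1, σ[t].2, hedges _ (List.getElem_mem ht), fun x => by
    rw [List.take_succ_eq_append_getElem ht, applySwaps, List.foldl_append]
    rfl⟩

lemma exists_walk_root {len : Fin m → ℕ} {L k : ℕ} (r : Option (Fin m)) (d : ℕ)
    (h : valid len L (pv r d)) : ∃ w : (Tree len L k).Walk .root (pv r d), w.length = d + 1 := by
  induction d with
  | zero =>
    have hadj : (Tree len L k).Adj .root (pv r 0) := by
      rw [Tree, SimpleGraph.fromRel_adj]
      refine ⟨(pv_ne_root r 0).symm, Or.inl ?_⟩
      cases r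
      · exact ⟨rfl, h⟩
      · exact ⟨rfl, h⟩
    exact ⟨hadj.toWalk, rfl⟩
  | succ d ih =>
    obtain ⟨w, hw⟩ := ih (by cases r <;> exact Nat.lt_of_succ_lt h)
    have hadj : (Tree len L k).Adj (pv r d) (pv r (d + 1)) := by
      rw [Tree, SimpleGraph.fromRel_adj]
      refine ⟨fun h => by have := (pv_inj h).2; omega, Or.inl ?_⟩
      cases r
      · exact ⟨rfl, h⟩
      · exact ⟨rfl, rfl, h⟩
    exact ⟨w.concat hadj, by rw [SimpleGraph.Walk.length_concat, hw]⟩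

lemma dist_le_dp {len : Fin m → ℕ} {L k : ℕ} {r r' : Option (Fin m)} {d d' : ℕ}
    (h : valid len L (pv r d)) (h' : valid len L (pv r' d')) :
    (Tree len L k).dist (pv r d) (pv r' d') ≤ dp k (pv r d) + dp k (pv r' d') := by
  obtain ⟨w, hw⟩ := exists_walk_root (k := k) r d h
  obtain ⟨w', hw'⟩ := exists_walk_root (k := k) r' d' h'
  refine (SimpleGraph.dist_le (w.reverse.append w')).trans ?_
  rw [SimpleGraph.Walk.length_append, SimpleGraph.Walk.length_reverse, hw, hw', dp_pv, dp_pv]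

lemma sum_nonItem (f : NonItem m n → ℕ) (g : Blk m n ⊕ Blk m n → ℕ)
    (h : ∀ a, ∀ t, tokOf (.inr a) = .inr t → f t ≤ g a) : ∑ t, f t ≤ ∑ a, g a := by
  simp only [Fintype.sum_sum_type]
  have h1 := Finset.sum_le_sum fun x (_ : x ∈ Finset.univ) => h (.inl (.inl x)) _ rfl
  have h2 := Finset.sum_le_sum fun x (_ : x ∈ Finset.univ) => h (.inr (.inl x)) _ rfl
  have h3 := Finset.sum_le_sum fun x (_ : x ∈ Finset.univ) => h (.inl (.inr x)) _ rfl
  have h4 := Finset.sum_le_sum fun x (_ : x ∈ Finset.univ) => h (.inr (.inr x)) _ rfl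
  omega

section

variable {s : Fin n → Fin m} {π : Equiv.Perm (Option (Fin m))} {hm : 2 ≤ m} {hk : 2 ≤ kk m n}
  {hcons : ∀ (j : Fin n) (h : j.val + 1 < n), s j ≠ s ⟨j.val + 1, h⟩}
  {σ : List (Vtx m × Vtx m)} {hedges : ∀ e ∈ σ, (TheGraph s).Adj e.1 e.2}
  {hsol : applySwaps σ (initTok s) = tgtTok s π}

lemma runOf_budget
    (hlen : 2 * σ.length ≤ (∑ t : NonItem m n, (dd s π (Sum.inr t) + 1)) + 2 * n) :
    (runOf s π hm hk hcons σ hedges hsol).Budget n := by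
  refine hlen.trans (Nat.add_le_add_right ?_ _)
  refine sum_nonItem _ _ fun a t hat => Nat.add_le_add_right ?_ 1
  have h0 := (runOf s π hm hk hcons σ hedges hsol).valid_P (Nat.zero_le _) (.inr a)
  have hN := (runOf s π hm hk hcons σ hedges hsol).valid_P le_rfl (.inr a)
  have e0 : (runOf s π hm hk hcons σ hedges hsol).P 0 (.inr a) = initTok s (.inr t) := by
    rw [← hat]; rfl
  have eN : (runOf s π hm hk hcons σ hedges hsol).P
      (runOf s π hm hk hcons σ hedges hsol).N (.inr a) = tgtTok s π (.inr t) := by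
    rw [← hat, ← hsol]
    simp only [runOf, List.take_length]
  have p0 : ∃ r d, initTok s (.inr t) = pv r d := by
    rw [← hat]
    rcases a with b | b
    · exact ⟨none, _, initTok_X s b⟩
    · exact ⟨some _, _, initTok_Y s b⟩
  have pN : ∃ r d, tgtTok s π (.inr t) = pv r d := by
    rw [← hat]
    rcases a with b | b
    · exact ⟨some _, _, tgtTok_X s π b⟩
    · exact ⟨none, _, tgtTok_Y s π b⟩
  rw [e0] at h0 ⊢
  rw [eN] at hN ⊢
  obtain ⟨r, d, h⟩ := p0
  obtain ⟨r', d', h'⟩ := pN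
  rw [h] at h0
  rw [h'] at hN
  rw [dd, TheGraph, h, h']
  exact dist_le_dp h0 hN

lemma runOf_phased : (runOf s π hm hk hcons σ hedges hsol).Phased s
    (kk m n + m * kk' m n) (kk' m n) where
  L_eq := lenOrd_eq m n
  B_pos := by omega
  big j l hj := by
    unfold Run.cc
    congr 1
    refine Finset.filter_congr fun b _ => ?_
    change bsl s b = l ∧ bpos s b < _ + kk m n ↔ bsl s b = l ∧ bpos s b < _
    refine and_congr_right fun hb => ⟨fun h => ?_, fun h => by omega⟩
    by_contra! hge
    have h1 := bph_le hcons hge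
    have h2 : (bph b).1 ≤ j.1 := by
      by_contra! hlt
      have := Nat.mul_le_mul_right (kk m n + m * kk' m n) (Nat.succ_le_of_lt hlt)
      rw [Nat.succ_mul] at this
      unfold bpos at h
      omega
    have hph : bph b = j := Fin.ext (le_antisymm h2 h1)
    rcases b with x | x
    · exact hj (hph ▸ hb)
    · have := boff_inr_ge s x
      unfold bpos at h
      rw [hph] at h
      omega
  pad j l := by
    have himg : (Finset.univ.image fun a : Fin (kk' m n) => (.inr (l, j, a) : Blk m n)).card =
        kk' m n := by
      rw [Finset.card_image_of_injective _ fun a b h => by simpa using h]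
      simp
    refine Eq.trans ?_ (congrArg _ himg)
    unfold Run.cc
    rw [← Finset.card_union_of_disjoint]
    · congr 1
      ext b
      simp only [Finset.mem_union, Finset.mem_filter, Finset.mem_univ, true_and, Finset.mem_image]
      change bsl s b = l ∧ bpos s b < _ ↔ (bsl s b = l ∧ bpos s b < _ + kk m n) ∨ _
      have hlt := bpos_lt_succ hcons b
      constructor
      · rintro ⟨hb, hpos⟩
        by_cases h : bpos s b < j.1 * (kk m n + m * kk' m n) + kk m n
        · exact Or.inl ⟨hb, h⟩
        · right
          have h1 : j.1 ≤ (bph b).1 := bph_le hcons (by omega)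
          have h2 : (bph b).1 < j.1 + 1 := by
            refine Nat.lt_of_mul_lt_mul_right (a := kk m n + m * kk' m n) ?_
            exact (Nat.le_add_right _ _).trans_lt hpos
          have hph : bph b = j := Fin.ext (by omega)
          rcases b with ⟨j', a⟩ | ⟨i, j', a⟩
          · have ha := a.2
            unfold bpos at h
            rw [hph] at h
            simp only [boff] at h
            omega
          · simp only [bsl, bph] at hb hph
            exact ⟨a, by rw [hb, hph]⟩
      · rintro (⟨hb, hpos⟩ | ⟨a, rfl⟩)
        · refine ⟨hb, hpos.trans_le ?_⟩
          rw [Nat.succ_mul]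
          omega
        · exact ⟨rfl, hlt⟩
    · rw [Finset.disjoint_left]
      rintro b hb hb'
      obtain ⟨a, -, rfl⟩ := Finset.mem_image.1 hb'
      have hpos : bpos s (.inr (l, j, a)) < j.1 * (kk m n + m * kk' m n) + kk m n :=
        (Finset.mem_filter.1 hb).2.2
      have := boff_inr_ge s (l, j, a)
      simp only [bpos, bph] at hpos
      omega

end

lemma kk_bounds (hm : 2 ≤ m) (hn : 2 ≤ n) : 13 * n + 5 < kk' m n ∧
    n * kk' m n + 16 * n + 9 < kk m n := by
  have hk' : kk' m n = m ^ 25 * n ^ 17 := by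
    unfold kk' kk
    rw [mul_pow, show n ^ 25 = n ^ 17 * n ^ 8 by ring, ← mul_assoc,
      Nat.mul_div_cancel _ (by positivity)]
  have hk : kk m n = kk' m n * n ^ 8 := by
    rw [hk', kk]; ring
  have h1 : 2 ^ 25 ≤ m ^ 25 := Nat.pow_le_pow_left hm 25
  have h2 : n ≤ n ^ 17 := Nat.le_self_pow (by omega) n
  have h3 : 2 ^ 25 * n ≤ kk' m n := by rw [hk']; exact Nat.mul_le_mul h1 h2
  have h4 : 2 * n ≤ n ^ 8 := by
    calc 2 * n ≤ n * n := Nat.mul_le_mul_right _ hn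
      _ = n ^ 2 := by ring
      _ ≤ n ^ 8 := Nat.pow_le_pow_right (by omega) (by omega)
  have h5 : kk' m n * (2 * n) ≤ kk m n := by rw [hk]; exact Nat.mul_le_mul_left _ h4
  have h6 : 2 * kk' m n ≤ n * kk' m n := Nat.mul_le_mul_right _ hn
  have h7 : kk' m n * (2 * n) = n * kk' m n + n * kk' m n := by ring
  norm_num at h3
  omega

end Reduction

/-!
STATEMENT 4: If the constructed (unweighted, sequential) token swapping instance has a
swap sequence of length at most `K = H + n` transforming the initial placement into
the target placement, then the Star STS instance is a YES instance.  The length bound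
`σ.length ≤ H + n` is stated in the equivalent doubled form
`2·σ.length ≤ Σ_{t∈A}(d_t+1) + 2n`.
-/
theorem tokenSwapping_yes_implies_starSTS_yes {m n : ℕ}
    (s : Fin n → Fin m) (π : Equiv.Perm (Option (Fin m)))
    (hπ0 : π none = none)
    (hocc : ∀ i : Fin m, ∃ j, s j = i)
    (hcons : ∀ (j : Fin n) (h : j.val + 1 < n), s j ≠ s ⟨j.val + 1, h⟩)
    (σ : List (Vtx m × Vtx m))
    (hedges : ∀ e ∈ σ, (TheGraph s).Adj e.1 e.2)
    (hsol : applySwaps σ (initTok s) = tgtTok s π)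
    (hlen : 2 * σ.length ≤ (∑ t : NonItem m n, (dd s π (Sum.inr t) + 1)) + 2 * n) :
    StarSTSYes π (List.ofFn s) := by
  by_cases hm : 2 ≤ m
  · have hn : m ≤ n := by
      simpa using Fintype.card_le_of_surjective s hocc
    obtain ⟨hk', hk⟩ := kk_bounds hm (hm.trans hn)
    have hk2 : 2 ≤ kk m n := by omega
    obtain ⟨occ, hinj, hstep, h0, hN⟩ :=
      (runOf_phased (π := π) (hm := hm) (hk := hk2) (hcons := hcons) (hedges := hedges)
        (hsol := hsol)).exists_occupants (runOf_budget hlen) (fun l => by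
          obtain ⟨j, hj⟩ := hocc l
          have : 0 < cnt s l := Finset.card_pos.2 ⟨j, by simp [hj]⟩
          exact (Nat.le_mul_of_pos_left _ this).trans (Nat.le_add_right _ _)) hk' hk (by omega)
    have hitem : ∀ (e : Option (Fin m)) l, rg (itemVtx e) = some (some l) → e = some l := by
      rintro (_ | i) l h
      · simp [itemVtx] at h
      · simpa [itemVtx] using h
    refine starSTSYes_of_occupants occ hinj hstep (fun l => hitem _ l ?_) fun l => hitem _ l ?_
    · rw [← initTok_item s]
      exact h0 l
    · rw [← tgtTok_item s, ← hsol]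
      have := hN l
      simpa only [runOf, List.take_length] using this
  · refine ⟨[], List.nil_sublist _, ?_⟩
    have hsub : Subsingleton (Fin m) := by
      rw [Fin.subsingleton_iff_le_one]; omega
    funext e
    cases e with
    | none => exact hπ0.symm
    | some i =>
      cases hi : π (some i) with
      | none => exact absurd (π.injective (hi.trans hπ0.symm)) (by simp)
      | some j => rw [Subsingleton.elim j i]; rfl

end UnweightedTS
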